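/- Let h < h_star. Then there exists a constant c_h > 0 such that lim_{n→∞} P^{G_n}[ #{x ∈ G_n : |C_x^{G_n,h}| ≥ N_n^{c_h}} ≥ (η^+(h)/2)·N_n ] = 1, where C_x^{G_n,h} denotes the connected component of the level set {y ∈ G_n : Ψ_{G_n}(y) ≥ h} containing x. -/

import Mathlib

open MeasureTheory ProbabilityTheory Filter Set
open scoped ENNReal NNReal ENat Classical

namespace GFF

variable {V : Type*} {T : Type*}

/-- Number of ordered adjacent pairs inside `U` (twice the number of edges of the induced
subgraph). -/
noncomputable def adjPairs (G : SimpleGraph V) (U : Set V) : ℕ :=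
  Set.ncard {p : V × V | p.1 ∈ U ∧ p.2 ∈ U ∧ G.Adj p.1 p.2}

/-- `U` (assumed connected) induces a tree, i.e. has tree excess zero. -/
def TxZero (G : SimpleGraph V) (U : Set V) : Prop :=
  adjPairs G U = 2 * (Set.ncard U - 1)

/-- Closed ball of radius `R` for the graph distance. -/
def gball (G : SimpleGraph V) (x : V) (R : ℕ) : Set V := {y | G.dist x y ≤ R}

/-- Set of vertices within distance `R` of the set `A`. -/
def sball (G : SimpleGraph V) (A : Set V) (R : ℕ) : Set V := {y | ∃ a ∈ A, G.dist a y ≤ R}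

/-- Connected component containing `x` of the level set `{ω ≥ h}`. -/
def levelComp (G : SimpleGraph V) (h : ℝ) (ω : V → ℝ) (x : V) : Set V :=
  {y | ∃ p : G.Walk x y, ∀ v ∈ p.support, h ≤ ω v}

/-- `G` is `d`-regular. -/
def IsReg (G : SimpleGraph V) (d : ℕ) : Prop := ∀ v, Nat.card (G.neighborSet v) = d

/-- `G` is an infinite `d`-regular tree. -/
def IsRegTree (G : SimpleGraph V) (d : ℕ) : Prop :=
  G.Connected ∧ G.IsAcyclic ∧ IsReg G d

/-- Transition matrix of SRW on a `d`-regular graph. -/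
noncomputable def transP [Fintype V] (G : SimpleGraph V) (d : ℕ) : Matrix V V ℝ :=
  Matrix.of fun u v => if G.Adj u v then ((d : ℝ))⁻¹ else 0

/-- All non-zero eigenvalues of `I - P` are at least `β`. -/
def SpectralGapLB [Fintype V] (G : SimpleGraph V) (d : ℕ) (β : ℝ) : Prop :=
  ∀ (f : V → ℝ) (lam : ℝ),
    Matrix.mulVec ((1 : Matrix V V ℝ) - transP G d) f = lam • f → f ≠ 0 → lam = 0 ∨ β ≤ lam

/-- `P_x[X̄_t = y]` for the continuous-time SRW with i.i.d. mean-one exponential holding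
times (Poissonized jump chain). -/
noncomputable def heatK [Fintype V] (G : SimpleGraph V) (d : ℕ) (t : ℝ) (x y : V) : ℝ :=
  ∑' k : ℕ, Real.exp (-t) * t ^ k / (Nat.factorial k) * ((transP G d) ^ k) x y

/-- The zero-average Green function. -/
noncomputable def zGreen [Fintype V] (G : SimpleGraph V) (d Nn : ℕ) (x y : V) : ℝ :=
  ∫ t in Set.Ioi (0 : ℝ), (heatK G d t x y - 1 / (Nn : ℝ))

/-- Green function of SRW on the `d`-regular tree. -/
noncomputable def treeGreen (G : SimpleGraph V) (d : ℕ) (x y : V) : ℝ :=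
  (((d : ℝ) - 1) / ((d : ℝ) - 2)) * (((d : ℝ) - 1)⁻¹) ^ (G.dist x y)

/-- `μ` is the law of the centred Gaussian field with covariance `K`. -/
def IsGaussianField {I : Type*} (μ : Measure (I → ℝ)) (K : I → I → ℝ) : Prop :=
  IsProbabilityMeasure μ ∧
    ∀ c : I →₀ ℝ,
      μ.map (fun ω => ∑ i ∈ c.support, c i * ω i) =
        gaussianReal 0 (Real.toNNReal (∑ i ∈ c.support, ∑ j ∈ c.support, c i * c j * K i j))

/-- One-step transition probability of SRW. -/
noncomputable def srwStep (G : SimpleGraph V) (d : ℕ) (u v : V) : ℝ≥0∞ :=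
  if G.Adj u v then (d : ℝ≥0∞)⁻¹ else 0

/-- `W x` is the law of discrete-time SRW on `G` started at `x`. -/
def IsSRW [MeasurableSpace V] (G : SimpleGraph V) (d : ℕ) (W : V → Measure (ℕ → V)) : Prop :=
  (∀ x, IsProbabilityMeasure (W x)) ∧
    ∀ (x : V) (k : ℕ) (p : ℕ → V),
      W x {ω | ∀ i ≤ k, ω i = p i} =
        (if p 0 = x then 1 else 0) * ∏ i ∈ Finset.range k, srwStep G d (p i) (p (i + 1))

/-- Entrance time of the set `A` (`⊤` if never entered). -/
noncomputable def hitTime (A : Set V) (ω : ℕ → V) : ℕ∞ :=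
  sInf ((Nat.cast : ℕ → ℕ∞) '' {k | ω k ∈ A})

/-- Exit time of the set `U`. -/
noncomputable def exitTime (U : Set V) (ω : ℕ → V) : ℕ∞ := hitTime Uᶜ ω

/-- Position of the walk at the entrance time of `A`. -/
noncomputable def stopAt (A : Set V) (ω : ℕ → V) : V := ω (hitTime A ω).toNat

/-- `π` is a cover tree of `G` at `x`. -/
def IsCoverMap (Gt : SimpleGraph T) (G : SimpleGraph V) (o : T) (x : V) (π : T → V) : Prop :=
  π o = x ∧ Function.Surjective π ∧ ∀ y : T, π '' (Gt.neighborSet y) = G.neighborSet (π y)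

/-- `T_d^+`: the vertices of the tree whose geodesic to `o` avoids the fixed neighbour
`obar` of `o`. -/
def treePlus (Gt : SimpleGraph T) (o obar : T) : Set T :=
  {z | Gt.dist z obar = Gt.dist z o + 1}

/-- `S^+_{T_d}(o,R)`. -/
def spherePlus (Gt : SimpleGraph T) (o obar : T) (R : ℕ) : Set T :=
  {z | z ∈ treePlus Gt o obar ∧ Gt.dist o z = R}

/-- The critical value for level-set percolation on the tree (w.r.t. the law `μT`). -/
noncomputable def hstar (Gt : SimpleGraph T) (o : T) (μT : Measure (T → ℝ)) : ℝ :=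
  sInf {h : ℝ | μT {ω | (levelComp Gt h ω o).Infinite} = 0}

/-- The forward percolation probability `η⁺(h)`. -/
noncomputable def etaPlus (Gt : SimpleGraph T) (o obar : T) (μT : Measure (T → ℝ)) (h : ℝ) :
    ℝ :=
  (μT {ω | (levelComp Gt h ω o ∩ treePlus Gt o obar).Infinite}).toReal

/-- `s_n`. -/
noncomputable def sn (d Nn : ℕ) : ℕ :=
  max 1 ⌊(8 : ℝ) * Real.logb ((d : ℝ) - 1) (Real.logb ((d : ℝ) - 1) (Nn : ℝ))⌋₊

/-- `c₀ = αβ/(d-1)`. -/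
noncomputable def c0 (d : ℕ) (α β : ℝ) : ℝ := α * β / ((d : ℝ) - 1)

/-- `r_n`. -/
noncomputable def rn (d : ℕ) (α β : ℝ) (Nn : ℕ) : ℕ :=
  max 1 ⌊(c0 d α β / 18) * Real.logb ((d : ℝ) - 1) (Nn : ℝ)⌋₊

/-- `R_n`. -/
noncomputable def Rn (d : ℕ) (α β : ℝ) (Nn : ℕ) : ℕ :=
  max 1 ⌊(c0 d α β / 6) * Real.logb ((d : ℝ) - 1) (Nn : ℝ)⌋₊

/-- `F_A(x,s)`: the vertices of `B(A,s) ∖ A` connected to `x` within `B(A,s) ∖ A`. -/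
def Fset (G : SimpleGraph V) (A : Set V) (s : ℕ) (x : V) : Set V :=
  {z | ∃ p : G.Walk x z, ∀ v ∈ p.support, v ∈ sball G A s ∧ v ∉ A}

/-- Good vertex at the boundary of `A`. -/
def GoodVertex (G : SimpleGraph V) (A : Set V) (s : ℕ) (x : V) : Prop :=
  x ∉ A ∧ (∃! y, y ∈ A ∧ G.Adj x y) ∧
    TxZero G (Fset G A s x) ∧
    ∀ y : V, y ∉ A → (∃ a ∈ A, G.Adj y a) → y ≠ x →
      ∀ p : G.Walk y x, (∀ v ∈ p.support, v ∉ A) → ∃ v ∈ p.support, v ∉ sball G A s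

end GFF

/-!
Write `d = D + 1`. On the tree, the field at a child of a vertex with value `a` is `a / D` plus an
independent Gaussian variable, so the component of the root is a branching process with types in
`ℝ`, killed below `h`. Strict concavity of the generating function `x ↦ 1 - (1 - x) ^ D` has two
consequences when this process survives: the mean size of the generations grows exponentially, and
survival keeps almost the same probability at a level `h₁` slightly above `h`. Hence at level `h₁`
generation `r` has size exponential in `r` with probability almost `η⁺(h)`.

In the graph, all but a small proportion of the vertices have a tree-like neighbourhood of radius a
small multiple of `log N`: by the assumption on cycles, the exceptional vertices inside a large ball
are all close to the same cycle. Around a vertex with a tree-like neighbourhood the truncated Green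
function of the tree almost inverts `I - P`, and by the spectral gap it is uniformly close to the
zero-average Green function. Since `h < h₁` leaves room for a Lipschitz test function, Gaussian
comparison transfers the statement on generation `r` from the tree to the graph. Applied around two
distant vertices at once, it also shows that the corresponding events are almost uncorrelated, and
Chebyshev's inequality concludes.
-/

namespace GFF

/-! ### The branching recursion -/

section UnionProb

variable {D : ℕ} {x y t : ℝ}

/-- The probability that at least one of `D` independent events of probability `x` occurs. -/
def unionProb (D : ℕ) (x : ℝ) : ℝ := 1 - (1 - x) ^ D

lemma unionProb_succ (D : ℕ) (x : ℝ) : unionProb (D + 1) x = x + (1 - x) * unionProb D x := by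
  unfold unionProb; ring

lemma unionProb_eq_mul_geom_sum (D : ℕ) (x : ℝ) :
    unionProb D x = x * ∑ i ∈ Finset.range D, (1 - x) ^ i := by
  rw [unionProb, ← mul_neg_geom_sum, sub_sub_cancel]

@[fun_prop]
lemma continuous_unionProb (D : ℕ) : Continuous (unionProb D) := by
  unfold unionProb; fun_prop

lemma monotoneOn_unionProb (D : ℕ) : MonotoneOn (unionProb D) (Icc 0 1) := fun _ _ _ hy hxy =>
  sub_le_sub_left (pow_le_pow_left₀ (sub_nonneg.2 hy.2) (sub_le_sub_left hxy 1) D) 1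

lemma mapsTo_unionProb (D : ℕ) : MapsTo (unionProb D) (Icc 0 1) (Icc 0 1) := fun _ hx =>
  ⟨sub_nonneg.2 (pow_le_one₀ (sub_nonneg.2 hx.2) (sub_le_self 1 hx.1)),
    sub_le_self 1 (pow_nonneg (sub_nonneg.2 hx.2) D)⟩

lemma self_le_unionProb (hD : D ≠ 0) (hx : x ∈ Icc (0 : ℝ) 1) : x ≤ unionProb D x := by
  obtain ⟨k, rfl⟩ := Nat.exists_eq_succ_of_ne_zero hD
  rw [unionProb_succ]
  exact le_add_of_nonneg_right (mul_nonneg (sub_nonneg.2 hx.2) (mapsTo_unionProb k hx).1)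

lemma unionProb_le_mul (D : ℕ) (hx : x ≤ 1) : unionProb D x ≤ D * x := by
  have bernoulli := one_add_mul_le_pow (a := -x) (by linarith) D
  rw [unionProb, sub_eq_add_neg 1 x]
  linarith

lemma unionProb_le_mul_sub_sq (hD : 2 ≤ D) (hx : x ∈ Icc (0 : ℝ) 1) :
    unionProb D x ≤ D * x - x ^ 2 := by
  obtain ⟨_, h1⟩ := hx
  induction D, hD using Nat.le_induction with
  | base => unfold unionProb; push_cast; nlinarith
  | succ k hk ih =>
    have hk' : (2 : ℝ) ≤ k := by exact_mod_cast hk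
    have step := mul_le_mul_of_nonneg_left ih (sub_nonneg.2 h1)
    have cubic : x ^ 3 ≤ k * x ^ 2 := by nlinarith [sq_nonneg x]
    rw [unionProb_succ]
    push_cast
    nlinarith

lemma mul_one_sub_mul_le_unionProb (D : ℕ) (hx : x ∈ Icc (0 : ℝ) 1) :
    D * x * (1 - D * x) ≤ unionProb D x := by
  obtain ⟨h0, h1⟩ := hx
  induction D with
  | zero => simp [unionProb]
  | succ k ih =>
    have step := mul_le_mul_of_nonneg_left ih (sub_nonneg.2 h1)
    have quadratic : 0 ≤ (k : ℝ) * x ^ 2 := by positivity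
    have cubic : 0 ≤ (k : ℝ) ^ 2 * x ^ 3 := by positivity
    rw [unionProb_succ]
    push_cast
    nlinarith [sq_nonneg x]

lemma geom_sum_one_sub_add_le (hD : 2 ≤ D) (hyx : y ≤ x) (hx : x ≤ 1) :
    ∑ i ∈ Finset.range D, (1 - x) ^ i + (x - y) ≤ ∑ i ∈ Finset.range D, (1 - y) ^ i := by
  induction D, hD using Nat.le_induction with
  | base => simp [Finset.sum_range_succ]; linarith
  | succ k _ ih =>
    have := pow_le_pow_left₀ (sub_nonneg.2 hx) (sub_le_sub_left hyx 1) k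
    rw [Finset.sum_range_succ, Finset.sum_range_succ]
    linarith

/-- A quantitative form of strict concavity. -/
lemma mul_unionProb_le_unionProb_mul (hD : 2 ≤ D) (hx : x ∈ Icc (0 : ℝ) 1)
    (ht : t ∈ Icc (0 : ℝ) 1) :
    t * (1 + (1 - t) * (x / D)) * unionProb D x ≤ unionProb D (t * x) := by
  set S := ∑ i ∈ Finset.range D, (1 - x) ^ i with hS
  have hD0 : (0 : ℝ) < D := by positivity
  have htx : 0 ≤ (1 - t) * x := mul_nonneg (sub_nonneg.2 ht.2) hx.1
  have hSD : S / D ≤ 1 := by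
    refine (div_le_one hD0).2 ((Finset.sum_le_card_nsmul _ _ 1 fun i _ => ?_).trans (by simp))
    exact pow_le_one₀ (sub_nonneg.2 hx.2) (sub_le_self 1 hx.1)
  have hsum : (1 + (1 - t) * (x / D)) * S ≤ ∑ i ∈ Finset.range D, (1 - t * x) ^ i :=
    calc (1 + (1 - t) * (x / D)) * S = S + (1 - t) * x * (S / D) := by ring
      _ ≤ S + (1 - t) * x := by nlinarith
      _ = S + (x - t * x) := by ring
      _ ≤ _ := geom_sum_one_sub_add_le hD (mul_le_of_le_one_left hx.1 ht.2) hx.2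
  rw [unionProb_eq_mul_geom_sum, unionProb_eq_mul_geom_sum, ← hS]
  calc t * (1 + (1 - t) * (x / D)) * (x * S) = t * x * ((1 + (1 - t) * (x / D)) * S) := by ring
    _ ≤ _ := mul_le_mul_of_nonneg_left hsum (mul_nonneg ht.1 hx.1)

end UnionProb

/-- A nondecreasing function with values in `[0, B]`. -/
structure IsProfile (B : ℝ) (ψ : ℝ → ℝ) : Prop where
  mono : Monotone ψ
  mem_Icc : ∀ a, ψ a ∈ Icc 0 B

section Operators

variable {γ : Measure ℝ} {D : ℕ} {Φ ψ ψ' : ℝ → ℝ} {B B' h θ a : ℝ}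

/-- The average of `ψ` over the value at a child whose parent has value `a`: in the Gaussian free
field on the tree this value is `a / D` plus an independent variable, here of law `γ`. -/
noncomputable def childAvg (γ : Measure ℝ) (D : ℕ) (ψ : ℝ → ℝ) (a : ℝ) : ℝ :=
  ∫ x, ψ (a / D + x) ∂γ

/-- One step of the branching recursion for particles killed below the level `h`, where `Φ`
combines the contributions of the children. -/
noncomputable def branchOp (γ : Measure ℝ) (D : ℕ) (Φ : ℝ → ℝ) (h : ℝ) (ψ : ℝ → ℝ) : ℝ → ℝ :=
  (Ici h).indicator fun a => Φ (childAvg γ D ψ a)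

/-- The function which is `θ` on `[h, ∞)` and `0` below. -/
noncomputable def levelStep (h θ : ℝ) : ℝ → ℝ := (Ici h).indicator fun _ => θ

/-- The `n`-th iterate of `branchOp`, started from `levelStep h θ`. -/
noncomputable def branchIter (γ : Measure ℝ) (D : ℕ) (Φ : ℝ → ℝ) (h θ : ℝ) (n : ℕ) : ℝ → ℝ :=
  (branchOp γ D Φ h)^[n] (levelStep h θ)

/-- `survIter γ D h θ n a` is the probability that, starting from a particle at `a`, some particle
of generation `n` is selected when each one alive is selected independently with probability
`θ`. -/
noncomputable abbrev survIter (γ : Measure ℝ) (D : ℕ) (h θ : ℝ) : ℕ → ℝ → ℝ :=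
  branchIter γ D (unionProb D) h θ

/-- `meanIter γ D h n a` is the mean number of particles alive in generation `n`, starting from a
particle at `a`. -/
noncomputable abbrev meanIter (γ : Measure ℝ) (D : ℕ) (h : ℝ) : ℕ → ℝ → ℝ :=
  branchIter γ D (fun x => D * x) h 1

lemma branchOp_of_le (ha : h ≤ a) : branchOp γ D Φ h ψ a = Φ (childAvg γ D ψ a) :=
  indicator_of_mem (mem_Ici.2 ha) _

lemma branchOp_of_lt (ha : a < h) : branchOp γ D Φ h ψ a = 0 :=
  indicator_of_notMem (notMem_Ici.2 ha) _

@[simp]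
lemma branchIter_zero : branchIter γ D Φ h θ 0 = levelStep h θ := rfl

lemma branchIter_succ (n : ℕ) :
    branchIter γ D Φ h θ (n + 1) = branchOp γ D Φ h (branchIter γ D Φ h θ n) :=
  Function.iterate_succ_apply' ..

lemma branchIter_succ_of_le (n : ℕ) (ha : h ≤ a) :
    branchIter γ D Φ h θ (n + 1) a = Φ (childAvg γ D (branchIter γ D Φ h θ n) a) := by
  rw [branchIter_succ, branchOp_of_le ha]

lemma branchIter_succ_of_lt (n : ℕ) (ha : a < h) : branchIter γ D Φ h θ (n + 1) a = 0 := by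
  rw [branchIter_succ, branchOp_of_lt ha]

lemma branchIter_add (m n : ℕ) :
    branchIter γ D Φ h θ (m + n) = (branchOp γ D Φ h)^[m] (branchIter γ D Φ h θ n) :=
  Function.iterate_add_apply ..

lemma levelStep_eq_mul (h θ a : ℝ) : levelStep h θ a = θ * levelStep h 1 a := by
  rw [levelStep, levelStep, ← smul_eq_mul, ← indicator_const_smul_apply, smul_eq_mul, mul_one]

lemma isProfile_levelStep (hθ : 0 ≤ θ) : IsProfile θ (levelStep h θ) where
  mono a b hab := by
    by_cases ha : a ∈ Ici h
    · simp [levelStep, indicator_of_mem ha, indicator_of_mem (mem_Ici.2 (ha.trans hab))]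
    · simpa [levelStep, indicator_of_notMem ha] using indicator_nonneg (fun _ _ => hθ) b
  mem_Icc a := ⟨indicator_nonneg (fun _ _ => hθ) a, indicator_le_self' (fun _ _ => hθ) a⟩

lemma childAvg_const_mul (c a : ℝ) : childAvg γ D (fun b => c * ψ b) a = c * childAvg γ D ψ a :=
  integral_const_mul ..

namespace IsProfile

lemma weaken (hψ : IsProfile B ψ) (hB : B ≤ B') : IsProfile B' ψ :=
  ⟨hψ.mono, fun a => ⟨(hψ.mem_Icc a).1, (hψ.mem_Icc a).2.trans hB⟩⟩

lemma norm_le (hψ : IsProfile B ψ) (a : ℝ) : ‖ψ a‖ ≤ B := by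
  rw [Real.norm_of_nonneg (hψ.mem_Icc a).1]
  exact (hψ.mem_Icc a).2

lemma const_mul (hψ : IsProfile B ψ) {c : ℝ} (hc : 0 ≤ c) :
    IsProfile (c * B) fun a => c * ψ a where
  mono _ _ hab := mul_le_mul_of_nonneg_left (hψ.mono hab) hc
  mem_Icc a := ⟨mul_nonneg hc (hψ.mem_Icc a).1, mul_le_mul_of_nonneg_left (hψ.mem_Icc a).2 hc⟩

lemma comp_add_left (hψ : IsProfile B ψ) (c : ℝ) : IsProfile B fun x => ψ (c + x) :=
  ⟨fun _ _ hab => hψ.mono (add_le_add_right hab c), fun _ => hψ.mem_Icc _⟩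

lemma integrable [IsFiniteMeasure γ] (hψ : IsProfile B ψ) : Integrable ψ γ :=
  .of_bound hψ.mono.measurable.aestronglyMeasurable B (.of_forall hψ.norm_le)

lemma integral_le_integral [IsFiniteMeasure γ] (hψ : IsProfile B ψ) (hψ' : IsProfile B' ψ')
    (hle : ψ ≤ ψ') : ∫ a, ψ a ∂γ ≤ ∫ a, ψ' a ∂γ :=
  integral_mono hψ.integrable hψ'.integrable hle

lemma childAvg_mono [IsFiniteMeasure γ] (hψ : IsProfile B ψ) (hψ' : IsProfile B' ψ')
    (hle : ψ ≤ ψ') : childAvg γ D ψ ≤ childAvg γ D ψ' := fun _ =>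
  (hψ.comp_add_left _).integral_le_integral (hψ'.comp_add_left _) fun _ => hle _

lemma childAvg [IsProbabilityMeasure γ] (hψ : IsProfile B ψ) :
    IsProfile B (GFF.childAvg γ D ψ) where
  mono a b hab := by
    refine (hψ.comp_add_left _).integral_le_integral (hψ.comp_add_left _) fun x => hψ.mono ?_
    gcongr
  mem_Icc a := by
    refine ⟨integral_nonneg fun _ => (hψ.mem_Icc _).1, ?_⟩
    calc ∫ x, ψ (a / D + x) ∂γ ≤ ∫ _, B ∂γ :=
          integral_mono (hψ.comp_add_left _).integrable (integrable_const B)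
            fun _ => (hψ.mem_Icc _).2
      _ = B := by simp

lemma branchOp [IsProbabilityMeasure γ] (hψ : IsProfile B ψ) (hΦ : MonotoneOn Φ (Icc 0 B))
    (hmaps : MapsTo Φ (Icc 0 B) (Icc 0 B')) (h : ℝ) : IsProfile B' (branchOp γ D Φ h ψ) := by
  have hmem (a : ℝ) : Φ (GFF.childAvg γ D ψ a) ∈ Icc 0 B' := hmaps (hψ.childAvg.mem_Icc a)
  constructor
  · intro a b hab
    rcases le_or_gt h a with ha | ha
    · rw [branchOp_of_le ha, branchOp_of_le (ha.trans hab)]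
      exact hΦ (hψ.childAvg.mem_Icc a) (hψ.childAvg.mem_Icc b) (hψ.childAvg.mono hab)
    · rw [branchOp_of_lt ha]
      exact indicator_nonneg (fun b _ => (hmem b).1) b
  · exact fun a => ⟨indicator_nonneg (fun b _ => (hmem b).1) a,
      indicator_apply_le' (fun _ => (hmem a).2) fun _ => (hmem a).1.trans (hmem a).2⟩

lemma iterate_survOp [IsProbabilityMeasure γ] (hψ : IsProfile 1 ψ) (h : ℝ) (n : ℕ) :
    IsProfile 1 ((GFF.branchOp γ D (unionProb D) h)^[n] ψ) := by
  induction n with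
  | zero => exact hψ
  | succ n ih =>
    rw [Function.iterate_succ_apply']
    exact ih.branchOp (monotoneOn_unionProb D) (mapsTo_unionProb D) h

lemma iterate_survOp_mono [IsProbabilityMeasure γ] (hψ : IsProfile 1 ψ) (hψ' : IsProfile 1 ψ')
    (hle : ψ ≤ ψ') (h : ℝ) (n : ℕ) :
    (GFF.branchOp γ D (unionProb D) h)^[n] ψ ≤ (GFF.branchOp γ D (unionProb D) h)^[n] ψ' := by
  induction n with
  | zero => exact hle
  | succ n ih =>
    rw [Function.iterate_succ_apply', Function.iterate_succ_apply']
    refine fun a => indicator_le_indicator ?_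
    have hn := hψ.iterate_survOp (γ := γ) (D := D) h n
    have hn' := hψ'.iterate_survOp (γ := γ) (D := D) h n
    exact monotoneOn_unionProb D (hn.childAvg.mem_Icc a) (hn'.childAvg.mem_Icc a)
      (hn.childAvg_mono hn' ih a)

end IsProfile

variable [IsProbabilityMeasure γ]

lemma isProfile_survIter (hθ : θ ∈ Icc (0 : ℝ) 1) (h : ℝ) (n : ℕ) :
    IsProfile 1 (survIter γ D h θ n) :=
  ((isProfile_levelStep hθ.1).weaken hθ.2).iterate_survOp h n

lemma isProfile_meanIter (h : ℝ) (n : ℕ) : IsProfile ((D : ℝ) ^ n) (meanIter γ D h n) := by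
  induction n with
  | zero => simpa using isProfile_levelStep zero_le_one
  | succ n ih =>
    rw [meanIter, branchIter_succ, pow_succ']
    refine ih.branchOp (fun x _ y _ hxy => ?_) (fun x hx => ?_) h
    · exact mul_le_mul_of_nonneg_left hxy D.cast_nonneg
    · exact ⟨mul_nonneg D.cast_nonneg hx.1, mul_le_mul_of_nonneg_left hx.2 D.cast_nonneg⟩

lemma tendsto_integral_isProfile [NullSingletonClass γ] {ι : Type*} {l : Filter ι}
    [l.IsCountablyGenerated] {f : ι → ℝ → ℝ} (hf : ∀ i, IsProfile B (f i))
    (hlim : ∀ x ≠ h, Tendsto (fun i => f i x) l (nhds (ψ x))) :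
    Tendsto (fun i => ∫ x, f i x ∂γ) l (nhds (∫ x, ψ x ∂γ)) :=
  tendsto_integral_filter_of_dominated_convergence (fun _ => B)
    (.of_forall fun i => (hf i).mono.measurable.aestronglyMeasurable)
    (.of_forall fun i => .of_forall (hf i).norm_le) (integrable_const B)
    ((Measure.ae_ne γ h).mono hlim)

lemma tendsto_childAvg [NullSingletonClass γ] {ι : Type*} {l : Filter ι}
    [l.IsCountablyGenerated] {f : ι → ℝ → ℝ} (hf : ∀ i, IsProfile B (f i))
    (hlim : ∀ x ≠ h, Tendsto (fun i => f i x) l (nhds (ψ x))) (a : ℝ) :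
    Tendsto (fun i => childAvg γ D (f i) a) l (nhds (childAvg γ D ψ a)) :=
  tendsto_integral_isProfile (h := h - a / D) (fun i => (hf i).comp_add_left _) fun _ hx =>
    hlim _ fun heq => hx (eq_sub_of_add_eq' heq)

lemma tendsto_branchIter [NullSingletonClass γ] (hΦ : Continuous Φ) (θ h : ℝ) (B : ℕ → ℝ)
    (hprof : ∀ n u, IsProfile (B n) (branchIter γ D Φ u θ n)) (n : ℕ) {a : ℝ} (ha : a ≠ h) :
    Tendsto (fun u => branchIter γ D Φ u θ n a) (nhdsWithin h (Ioi h))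
      (nhds (branchIter γ D Φ h θ n a)) := by
  induction n generalizing a with
  | zero =>
    refine tendsto_const_nhds.congr' ?_
    rcases ha.lt_or_gt with ha | ha
    · filter_upwards [self_mem_nhdsWithin] with u hu
      simp [levelStep, ha, ha.trans hu]
    · filter_upwards [nhdsWithin_le_nhds (eventually_lt_nhds ha)] with u hu
      simp [levelStep, ha.le, hu.le]
  | succ n ih =>
    rcases ha.lt_or_gt with ha | ha
    · refine tendsto_const_nhds.congr' ?_
      filter_upwards [self_mem_nhdsWithin] with u hu
      rw [branchIter_succ_of_lt n ha, branchIter_succ_of_lt n (ha.trans hu)]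
    · rw [branchIter_succ_of_le n ha.le]
      refine ((hΦ.tendsto _).comp (tendsto_childAvg (hprof n) (fun _ => ih) a)).congr' ?_
      filter_upwards [nhdsWithin_le_nhds (eventually_lt_nhds ha)] with u hu
      rw [branchIter_succ_of_le n hu.le, Function.comp_apply]

end Operators

/-! ### Stability of survival under a small increase of the level -/

section Survival

variable {γ : Measure ℝ} {D : ℕ} {ψ : ℝ → ℝ} {B h θ η η' x₀ : ℝ}

lemma exists_forall_half_le_of_le_integral (γ₀ : Measure ℝ) [IsProbabilityMeasure γ₀]
    (hη : 0 < η) : ∃ K, ∀ ψ, IsProfile 1 ψ → η ≤ ∫ a, ψ a ∂γ₀ → η / 2 ≤ ψ K := by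
  obtain ⟨K, hK⟩ := ((tendsto_cdf_atTop γ₀).eventually_const_lt
    (show 1 - η / 2 < 1 by linarith)).exists
  rw [cdf_eq_real] at hK
  have htail : γ₀.real (Ioi K) < η / 2 := by
    rw [← compl_Iic, probReal_compl_eq_one_sub measurableSet_Iic]
    linarith
  refine ⟨K, fun ψ hψ hint => ?_⟩
  have hind : Integrable ((Ioi K).indicator fun _ => (1 : ℝ)) γ₀ :=
    (integrable_const _).indicator measurableSet_Ioi
  have hsplit : ∫ a, ψ a ∂γ₀ ≤ ∫ a, ψ K + (Ioi K).indicator (fun _ => (1 : ℝ)) a ∂γ₀ := by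
    refine integral_mono hψ.integrable ((integrable_const _).add hind) fun a => ?_
    rcases le_or_gt a K with ha | ha
    · simpa [ha] using hψ.mono ha
    · simpa [ha] using (hψ.mem_Icc a).2.trans (le_add_of_nonneg_left (hψ.mem_Icc K).1)
  rw [integral_add (integrable_const _) hind, integral_indicator_const _ measurableSet_Ioi]
    at hsplit
  simp only [integral_const, probReal_univ, smul_eq_mul, one_mul, mul_one] at hsplit
  linarith

variable [IsProbabilityMeasure γ]

lemma IsProfile.mul_measureReal_Ici_le_childAvg (hψ : IsProfile B ψ) (K a : ℝ) :
    ψ K * γ.real (Ici (K - a / D)) ≤ GFF.childAvg γ D ψ a := by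
  refine le_trans ?_ (mul_meas_ge_le_integral_of_nonneg
    (.of_forall fun x => (hψ.mem_Icc (a / D + x)).1) (hψ.comp_add_left _).integrable (ψ K))
  refine mul_le_mul_of_nonneg_left (measureReal_mono fun x hx => hψ.mono ?_) (hψ.mem_Icc K).1
  linarith [mem_Ici.1 hx]

lemma isProfile_survIter_one (h : ℝ) (n : ℕ) : IsProfile 1 (survIter γ D h 1 n) :=
  isProfile_survIter (right_mem_Icc.2 zero_le_one) h n

lemma exists_forall_le_childAvg_survIter (hγ : ∀ K, 0 < γ (Ici K)) {γ₀ : Measure ℝ}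
    [IsProbabilityMeasure γ₀] (hη : 0 < η) (hsurv : ∀ n, η ≤ ∫ a, survIter γ D h 1 n a ∂γ₀) :
    ∃ x₀ > 0, ∀ n, ∀ a ≥ h, x₀ ≤ childAvg γ D (survIter γ D h 1 n) a := by
  obtain ⟨K, hK⟩ := exists_forall_half_le_of_le_integral γ₀ hη
  have hpos : 0 < γ.real (Ici (K - h / D)) := ENNReal.toReal_pos (hγ _).ne' (measure_ne_top _ _)
  refine ⟨η / 2 * γ.real (Ici (K - h / D)), by positivity, fun n a ha => ?_⟩
  have hprof := isProfile_survIter_one (γ := γ) (D := D) h n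
  calc η / 2 * γ.real (Ici (K - h / D)) ≤ survIter γ D h 1 n K * γ.real (Ici (K - h / D)) := by
        gcongr
        exact hK _ hprof (hsurv n)
    _ ≤ childAvg γ D (survIter γ D h 1 n) h := hprof.mul_measureReal_Ici_le_childAvg K h
    _ ≤ childAvg γ D (survIter γ D h 1 n) a := hprof.childAvg.mono ha

lemma le_one_of_forall_le_childAvg_survIter
    (hx₀ : ∀ n, ∀ a ≥ h, x₀ ≤ childAvg γ D (survIter γ D h 1 n) a) : x₀ ≤ 1 :=
  (hx₀ 0 h le_rfl).trans ((isProfile_survIter_one h 0).childAvg.mem_Icc h).2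

lemma div_mem_Ioc_of_forall_le_childAvg_survIter (hD : 1 ≤ D) (hpos : 0 < x₀)
    (hx₀ : ∀ n, ∀ a ≥ h, x₀ ≤ childAvg γ D (survIter γ D h 1 n) a) : x₀ / D ∈ Ioc (0 : ℝ) 1 :=
  have hD' : (1 : ℝ) ≤ D := by exact_mod_cast hD
  ⟨by positivity, div_le_one_of_le₀ ((le_one_of_forall_le_childAvg_survIter hx₀).trans hD')
    (by positivity)⟩

/-- If survival has positive probability then the second-order term of `unionProb` makes it decay
relative to the mean by a fixed factor in each generation. -/
lemma survIter_one_le_pow_mul_meanIter (hD : 2 ≤ D) (hpos : 0 < x₀)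
    (hx₀ : ∀ n, ∀ a ≥ h, x₀ ≤ childAvg γ D (survIter γ D h 1 n) a) (n : ℕ) (a : ℝ) :
    survIter γ D h 1 n a ≤ (1 - x₀ / D) ^ n * meanIter γ D h n a := by
  have hρ : 0 ≤ 1 - x₀ / D :=
    sub_nonneg.2 (div_mem_Ioc_of_forall_le_childAvg_survIter (by omega) hpos hx₀).2
  induction n generalizing a with
  | zero => simp
  | succ n ih =>
    rcases lt_or_ge a h with ha | ha
    · simp [survIter, meanIter, branchIter_succ_of_lt n ha]
    rw [survIter, meanIter, branchIter_succ_of_le n ha, branchIter_succ_of_le n ha]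
    have hprof := isProfile_survIter_one (γ := γ) (D := D) h n
    have hmean := isProfile_meanIter (γ := γ) (D := D) h n
    set x := childAvg γ D (survIter γ D h 1 n) a
    have hx0 : x₀ ≤ x := hx₀ n a ha
    have hxle : x ≤ (1 - x₀ / D) ^ n * childAvg γ D (meanIter γ D h n) a := by
      rw [← childAvg_const_mul]
      exact hprof.childAvg_mono (hmean.const_mul (pow_nonneg hρ n)) ih a
    have hD0 : (D : ℝ) ≠ 0 := by positivity
    calc unionProb D x ≤ D * x - x ^ 2 := unionProb_le_mul_sub_sq hD (hprof.childAvg.mem_Icc a)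
      _ ≤ D * x - x₀ * x := by nlinarith
      _ = (1 - x₀ / D) * (D * x) := by field_simp
      _ ≤ (1 - x₀ / D) * (D * ((1 - x₀ / D) ^ n * childAvg γ D (meanIter γ D h n) a)) := by gcongr
      _ = _ := by ring

lemma exists_two_lt_meanIter (hD : 2 ≤ D) (hpos : 0 < x₀)
    (hx₀ : ∀ n, ∀ a ≥ h, x₀ ≤ childAvg γ D (survIter γ D h 1 n) a) :
    ∃ k, 2 < meanIter γ D h (k + 1) h := by
  obtain ⟨hρ0, hρ1⟩ := div_mem_Ioc_of_forall_le_childAvg_survIter (by omega) hpos hx₀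
  obtain ⟨k, hk⟩ := exists_pow_lt_of_lt_one (show 0 < x₀ / 3 by positivity)
    (show 1 - x₀ / D < 1 by linarith)
  refine ⟨k, lt_of_not_ge fun hle => ?_⟩
  have hsurv : x₀ ≤ survIter γ D h 1 (k + 1) h := by
    rw [survIter, branchIter_succ_of_le k le_rfl]
    exact (hx₀ k h le_rfl).trans
      (self_le_unionProb (by omega) ((isProfile_survIter_one h k).childAvg.mem_Icc h))
  have hρ : (1 - x₀ / D) ^ (k + 1) ≤ x₀ / 3 :=
    (pow_le_pow_of_le_one (by linarith) (by linarith) k.le_succ).trans hk.le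
  have : x₀ ≤ x₀ / 3 * 2 := calc
    x₀ ≤ (1 - x₀ / D) ^ (k + 1) * meanIter γ D h (k + 1) h :=
      hsurv.trans (survIter_one_le_pow_mul_meanIter hD hpos hx₀ _ _)
    _ ≤ x₀ / 3 * 2 := mul_le_mul hρ hle ((isProfile_meanIter h _).mem_Icc h).1 (by positivity)
  linarith

lemma eventually_lt_meanIter [NullSingletonClass γ] {k : ℕ} {c : ℝ}
    (hk : c < meanIter γ D h (k + 1) h) :
    ∀ᶠ u in nhdsWithin h (Ioi h), c < meanIter γ D u (k + 1) u := by
  have hlim : Tendsto (fun u => D * childAvg γ D (meanIter γ D u k) h) (nhdsWithin h (Ioi h))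
      (nhds (D * childAvg γ D (meanIter γ D h k) h)) :=
    (tendsto_childAvg (isProfile_meanIter · k) (fun _ hx => tendsto_branchIter (by fun_prop) 1 h
      _ (fun n u => isProfile_meanIter u n) k hx) h).const_mul _
  rw [meanIter, branchIter_succ_of_le k le_rfl] at hk
  filter_upwards [hlim.eventually_const_lt hk, self_mem_nhdsWithin] with u hu hhu
  rw [meanIter, branchIter_succ_of_le k le_rfl]
  refine hu.trans_le (mul_le_mul_of_nonneg_left ?_ D.cast_nonneg)
  exact (isProfile_meanIter u k).childAvg.mono (mem_Ioi.1 hhu).le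

/-- Concavity of `unionProb` pushes the ratio of the survival probabilities started from `θ` and
from `1` towards `1`. -/
lemma mul_survIter_one_le_survIter (hD : 2 ≤ D) (hpos : 0 < x₀)
    (hx₀ : ∀ n, ∀ a ≥ h, x₀ ≤ childAvg γ D (survIter γ D h 1 n) a) (hθ : θ ∈ Icc (0 : ℝ) 1)
    (n : ℕ) (a : ℝ) :
    (1 - (1 - θ) * (1 - θ * (x₀ / D)) ^ n) * survIter γ D h 1 n a ≤ survIter γ D h θ n a := by
  obtain ⟨hθ0, hθ1⟩ := hθ
  obtain ⟨hd0, hd1⟩ := div_mem_Ioc_of_forall_le_childAvg_survIter (by omega) hpos hx₀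
  set κ := 1 - θ * (x₀ / D) with hκ
  have hκ0 : 0 ≤ κ := sub_nonneg.2 (mul_le_one₀ hθ1 hd0.le hd1)
  have hκ1 : κ ≤ 1 := sub_le_self 1 (mul_nonneg hθ0 hd0.le)
  induction n generalizing a with
  | zero => simp [levelStep_eq_mul h θ a]
  | succ n ih =>
    rcases lt_or_ge a h with ha | ha
    · simp [survIter, branchIter_succ_of_lt n ha]
    rw [survIter, survIter, branchIter_succ_of_le n ha, branchIter_succ_of_le n ha]
    have hprof := isProfile_survIter_one (γ := γ) (D := D) h n
    have hprofθ := isProfile_survIter (γ := γ) (D := D) ⟨hθ0, hθ1⟩ h n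
    set t := 1 - (1 - θ) * κ ^ n with ht
    set x := childAvg γ D (survIter γ D h 1 n) a with hx
    have hκn : κ ^ n ∈ Icc (0 : ℝ) 1 := ⟨pow_nonneg hκ0 n, pow_le_one₀ hκ0 hκ1⟩
    have hθt : θ ≤ t := by nlinarith [hκn.2]
    have ht1 : t ∈ Icc (0 : ℝ) 1 :=
      ⟨hθ0.trans hθt, sub_le_self 1 (mul_nonneg (sub_nonneg.2 hθ1) hκn.1)⟩
    have hxmem : x ∈ Icc (0 : ℝ) 1 := hprof.childAvg.mem_Icc a
    have htx : t * x ≤ childAvg γ D (survIter γ D h θ n) a := by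
      rw [hx, ← childAvg_const_mul]
      exact (hprof.const_mul ht1.1).childAvg_mono hprofθ ih a
    have hgain : θ * (x₀ / D) ≤ t * (x / D) := by
      have := hx₀ n a ha
      have := ht1.1
      gcongr
    have hfactor : 1 - (1 - θ) * κ ^ (n + 1) ≤ t * (1 + (1 - t) * (x / D)) := calc
      1 - (1 - θ) * κ ^ (n + 1) = t + (1 - t) * (θ * (x₀ / D)) := by rw [ht, pow_succ, hκ]; ring
      _ ≤ t + (1 - t) * (t * (x / D)) := by
        gcongr
        exact sub_nonneg.2 ht1.2
      _ = t * (1 + (1 - t) * (x / D)) := by ring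
    calc (1 - (1 - θ) * κ ^ (n + 1)) * unionProb D x
        ≤ t * (1 + (1 - t) * (x / D)) * unionProb D x :=
          mul_le_mul_of_nonneg_right hfactor (mapsTo_unionProb D hxmem).1
      _ ≤ unionProb D (t * x) := mul_unionProb_le_unionProb_mul hD hxmem ht1
      _ ≤ _ := monotoneOn_unionProb D (unitInterval.mul_mem ht1 hxmem)
        (hprofθ.childAvg.mem_Icc a) htx

lemma exists_lt_integral_survIter (hD : 2 ≤ D) (hpos : 0 < x₀)
    (hx₀ : ∀ n, ∀ a ≥ h, x₀ ≤ childAvg γ D (survIter γ D h 1 n) a) (hθ : θ ∈ Ioc (0 : ℝ) 1)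
    {γ₀ : Measure ℝ} [IsProbabilityMeasure γ₀] (hη' : η' < η)
    (hsurv : ∀ n, η ≤ ∫ a, survIter γ D h 1 n a ∂γ₀) :
    ∃ n, η' < ∫ a, survIter γ D h θ n a ∂γ₀ := by
  have hθ' := Ioc_subset_Icc_self hθ
  obtain ⟨hd0, hd1⟩ := div_mem_Ioc_of_forall_le_childAvg_survIter (by omega) hpos hx₀
  set κ := 1 - θ * (x₀ / D)
  have hκ0 : 0 ≤ κ := sub_nonneg.2 (mul_le_one₀ hθ.2 hd0.le hd1)
  have hκ1 : κ < 1 := sub_lt_self 1 (mul_pos hθ.1 hd0)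
  have hlim : Tendsto (fun n => (1 - (1 - θ) * κ ^ n) * η) atTop
      (nhds ((1 - (1 - θ) * 0) * η)) :=
    (((tendsto_pow_atTop_nhds_zero_of_lt_one hκ0 hκ1).const_mul _).const_sub 1).mul_const η
  obtain ⟨n, hn⟩ := (hlim.eventually_const_lt (by linarith : η' < _)).exists
  have hκn : (1 - θ) * κ ^ n ≤ 1 :=
    mul_le_one₀ (sub_le_self 1 hθ.1.le) (pow_nonneg hκ0 n) (pow_le_one₀ hκ0 hκ1.le)
  refine ⟨n, hn.trans_le ?_⟩
  calc (1 - (1 - θ) * κ ^ n) * η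
      ≤ (1 - (1 - θ) * κ ^ n) * ∫ a, survIter γ D h 1 n a ∂γ₀ :=
        mul_le_mul_of_nonneg_left (hsurv n) (sub_nonneg.2 hκn)
    _ = ∫ a, (1 - (1 - θ) * κ ^ n) * survIter γ D h 1 n a ∂γ₀ := (integral_const_mul ..).symm
    _ ≤ _ := ((isProfile_survIter_one h n).const_mul (sub_nonneg.2 hκn)).integral_le_integral
        (isProfile_survIter hθ' h n) (mul_survIter_one_le_survIter hD hpos hx₀ hθ' n)

lemma isProfile_survIter_pow_mul (hθ : θ ∈ Icc (0 : ℝ) 1) (h : ℝ) (n : ℕ) :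
    IsProfile ((D : ℝ) ^ n * θ) (survIter γ D h θ n) := by
  refine ⟨(isProfile_survIter hθ h n).mono,
    fun a => ⟨((isProfile_survIter hθ h n).mem_Icc a).1, ?_⟩⟩
  induction n generalizing a with
  | zero => simpa using ((isProfile_levelStep hθ.1).mem_Icc a).2
  | succ n ih =>
    have hprof : IsProfile ((D : ℝ) ^ n * θ) (survIter γ D h θ n) :=
      ⟨(isProfile_survIter hθ h n).mono,
        fun a => ⟨((isProfile_survIter hθ h n).mem_Icc a).1, ih a⟩⟩
    rcases lt_or_ge a h with ha | ha
    · rw [survIter, branchIter_succ_of_lt n ha]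
      exact mul_nonneg (by positivity) hθ.1
    rw [survIter, branchIter_succ_of_le n ha, pow_succ', mul_assoc]
    refine (unionProb_le_mul D ((isProfile_survIter hθ h n).childAvg.mem_Icc a).2).trans ?_
    exact mul_le_mul_of_nonneg_left (hprof.childAvg.mem_Icc a).2 D.cast_nonneg

/-- As long as `survIter` stays below `ε / D`, the recursion is linear up to a factor `1 - ε` in
each generation. -/
lemma pow_mul_meanIter_le_survIter {ε : ℝ} (hD : 1 ≤ D) (hθ : θ ∈ Icc (0 : ℝ) 1) (hε : ε ≤ 1)
    {n : ℕ} (hn : D ^ n * θ ≤ ε) (a : ℝ) :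
    (1 - ε) ^ n * (θ * meanIter γ D h n a) ≤ survIter γ D h θ n a := by
  have hε' := sub_nonneg.2 hε
  have hD' : (1 : ℝ) ≤ D := by exact_mod_cast hD
  induction n generalizing a with
  | zero => simp [levelStep_eq_mul h θ a]
  | succ n ih =>
    have hpow : (D : ℝ) ^ n * θ ≤ D ^ (n + 1) * θ :=
      mul_le_mul_of_nonneg_right (pow_le_pow_right₀ hD' n.le_succ) hθ.1
    specialize ih (hpow.trans hn)
    rcases lt_or_ge a h with ha | ha
    · simp [survIter, meanIter, branchIter_succ_of_lt n ha]
    rw [survIter, meanIter, branchIter_succ_of_le n ha, branchIter_succ_of_le n ha]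
    have hprof := isProfile_survIter (γ := γ) (D := D) hθ h n
    have hprof' := isProfile_survIter_pow_mul (γ := γ) (D := D) hθ h n
    have hmean := isProfile_meanIter (γ := γ) (D := D) h n
    set y := childAvg γ D (survIter γ D h θ n) a
    have hlow : (1 - ε) ^ n * (θ * childAvg γ D (meanIter γ D h n) a) ≤ y := by
      rw [← childAvg_const_mul, ← childAvg_const_mul]
      exact ((hmean.const_mul hθ.1).const_mul (pow_nonneg hε' n)).childAvg_mono hprof ih a
    have hy0 : 0 ≤ y := (hprof.childAvg.mem_Icc a).1
    have hyε : D * y ≤ ε := calc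
      D * y ≤ D * (D ^ n * θ) := mul_le_mul_of_nonneg_left (hprof'.childAvg.mem_Icc a).2 (by simp)
      _ = D ^ (n + 1) * θ := by ring
      _ ≤ ε := hn
    calc (1 - ε) ^ (n + 1) * (θ * (D * childAvg γ D (meanIter γ D h n) a))
        = (1 - ε) * (D * ((1 - ε) ^ n * (θ * childAvg γ D (meanIter γ D h n) a))) := by ring
      _ ≤ (1 - ε) * (D * y) := by gcongr
      _ ≤ D * y * (1 - D * y) := by
        rw [mul_comm]
        gcongr
      _ ≤ unionProb D y := mul_one_sub_mul_le_unionProb D (hprof.childAvg.mem_Icc a)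

lemma levelStep_le_survIter (hD : 1 ≤ D) (hθ : 0 ≤ θ) {j : ℕ} (hj : 1 ≤ j)
    (hθj : D ^ j * θ ≤ 1 / (4 * j)) (hmean : 2 ≤ meanIter γ D h j h) :
    levelStep h (3 / 2 * θ) ≤ survIter γ D h θ j := by
  have hj' : (1 : ℝ) ≤ j := by exact_mod_cast hj
  have hε : 1 / (4 * (j : ℝ)) ≤ 1 := div_le_one_of_le₀ (by linarith) (by positivity)
  have hθ1 : θ ≤ 1 :=
    (le_mul_of_one_le_left hθ (one_le_pow₀ (by exact_mod_cast hD))).trans (hθj.trans hε)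
  have hprof := isProfile_survIter (γ := γ) (D := D) ⟨hθ, hθ1⟩ h j
  have hbern : 3 / 4 ≤ (1 - 1 / (4 * (j : ℝ))) ^ j := calc
    (3 / 4 : ℝ) = 1 + j * -(1 / (4 * j)) := by field_simp; norm_num
    _ ≤ (1 + -(1 / (4 * (j : ℝ)))) ^ j := one_add_mul_le_pow (by linarith) j
    _ = _ := by rw [← sub_eq_add_neg]
  have hlevel : 3 / 2 * θ ≤ survIter γ D h θ j h := calc
    3 / 2 * θ = 3 / 4 * (θ * 2) := by ring
    _ ≤ (1 - 1 / (4 * (j : ℝ))) ^ j * (θ * meanIter γ D h j h) := by gcongr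
    _ ≤ _ := pow_mul_meanIter_le_survIter hD ⟨hθ, hθ1⟩ hε hθj h
  exact fun a => indicator_apply_le' (fun ha => hlevel.trans (hprof.mono ha))
    fun _ => (hprof.mem_Icc a).1

lemma levelStep_le_survIter_mul (hD : 1 ≤ D) (hθ : 0 ≤ θ) {j : ℕ} (hj : 1 ≤ j)
    (hθj : D ^ j * θ ≤ 1 / (4 * j)) (hmean : 2 ≤ meanIter γ D h j h) (m : ℕ) :
    levelStep h θ ≤ survIter γ D h (θ * (2 / 3) ^ m) (j * m) := by
  have hpow (m : ℕ) : θ * (2 / 3) ^ m ≤ θ :=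
    mul_le_of_le_one_right hθ (pow_le_one₀ (by norm_num) (by norm_num))
  have hθ1 : θ ≤ 1 := (le_mul_of_one_le_left hθ (one_le_pow₀ (by exact_mod_cast hD))).trans
    (hθj.trans (div_le_one_of_le₀ (by norm_cast; omega) (by positivity)))
  have hmem (m : ℕ) : θ * (2 / 3) ^ m ∈ Icc (0 : ℝ) 1 := ⟨by positivity, (hpow m).trans hθ1⟩
  induction m with
  | zero => simp
  | succ m ih =>
    rw [mul_add_one, survIter, branchIter_add]
    refine ih.trans (((isProfile_levelStep (hmem m).1).weaken (hmem m).2).iterate_survOp_mono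
      (isProfile_survIter (hmem (m + 1)) h j) ?_ h (j * m))
    have hstep := levelStep_le_survIter hD (hmem (m + 1)).1 hj
      ((mul_le_mul_of_nonneg_left (hpow _) (by positivity)).trans hθj) hmean
    rwa [show 3 / 2 * (θ * (2 / 3) ^ (m + 1)) = θ * (2 / 3) ^ m by ring] at hstep

/-- A selection of particles with probability `θ * (2 / 3) ^ i` can only succeed if their number
is exponentially large in `i`. -/
theorem exists_level_forall_lt_integral_survIter [NullSingletonClass γ] (hD : 2 ≤ D)
    (hγ : ∀ K, 0 < γ (Ici K)) {γ₀ : Measure ℝ} [IsProbabilityMeasure γ₀] [NullSingletonClass γ₀]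
    (hη : 0 < η) (hη' : η' < η) (hsurv : ∀ n, η ≤ ∫ a, survIter γ D h 1 n a ∂γ₀) :
    ∃ h₁ > h, ∃ j ≥ 1, ∃ n₀ : ℕ, ∃ θ ∈ Ioc (0 : ℝ) 1,
      ∀ i : ℕ, η' < ∫ a, survIter γ D h₁ (θ * (2 / 3) ^ i) (n₀ + j * i) a ∂γ₀ := by
  obtain ⟨x₀, hpos, hx₀⟩ := exists_forall_le_childAvg_survIter hγ hη hsurv
  obtain ⟨k, hk⟩ := exists_two_lt_meanIter hD hpos hx₀
  set j := k + 1
  have hj : 1 ≤ (j : ℝ) := by exact_mod_cast k.succ_pos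
  have hDj : 1 ≤ (D : ℝ) ^ j := one_le_pow₀ (by exact_mod_cast (by omega : 1 ≤ D))
  set θ : ℝ := 1 / (4 * j) / D ^ j
  have hθ : θ ∈ Ioc (0 : ℝ) 1 := by
    refine ⟨by positivity, div_le_one_of_le₀ (le_trans ?_ hDj) (by positivity)⟩
    exact div_le_one_of_le₀ (by linarith) (by positivity)
  have hθ' := Ioc_subset_Icc_self hθ
  have hθj : D ^ j * θ ≤ 1 / (4 * j) := (mul_div_cancel₀ _ (by positivity)).le
  obtain ⟨n₀, hn₀⟩ := exists_lt_integral_survIter hD hpos hx₀ hθ hη' hsurv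
  have hlim : Tendsto (fun u => ∫ a, survIter γ D u θ n₀ a ∂γ₀) (nhdsWithin h (Ioi h))
      (nhds (∫ a, survIter γ D h θ n₀ a ∂γ₀)) :=
    tendsto_integral_isProfile (isProfile_survIter hθ' · n₀) fun _ => tendsto_branchIter
      (continuous_unionProb D) θ h _ (fun n u => isProfile_survIter hθ' u n) n₀
  obtain ⟨h₁, ⟨hmean, hint⟩, hh₁⟩ := ((eventually_lt_meanIter hk).and
    (hlim.eventually_const_lt hn₀) |>.and self_mem_nhdsWithin).exists
  refine ⟨h₁, hh₁, j, by omega, n₀, θ, hθ, fun i => hint.trans_le ?_⟩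
  have hi : θ * (2 / 3) ^ i ∈ Icc (0 : ℝ) 1 :=
    unitInterval.mul_mem hθ' ⟨by positivity, pow_le_one₀ (by norm_num) (by norm_num)⟩
  refine (isProfile_survIter hθ' h₁ n₀).integral_le_integral (isProfile_survIter hi h₁ _) ?_
  rw [survIter, survIter, branchIter_add]
  exact ((isProfile_levelStep hθ'.1).weaken hθ'.2).iterate_survOp_mono
    (isProfile_survIter hi h₁ (j * i))
    (levelStep_le_survIter_mul (by omega) hθ'.1 (by omega) hθj hmean.le i) h₁ n₀

end Survival

/-! ### Gaussian vectors -/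

section GaussianVector

variable {Ω Ω' ι κ : Type*} [MeasurableSpace Ω] [MeasurableSpace Ω'] {P : Measure Ω}
  {Q : Measure Ω'} {X : ι → Ω → ℝ} {K : ι → ι → ℝ}

/-- The random variables `X i` form a centred Gaussian vector with covariance matrix `K`. -/
structure IsGaussianVector (P : Measure Ω) (X : ι → Ω → ℝ) (K : ι → ι → ℝ) : Prop where
  hasGaussianLaw : HasGaussianLaw (fun ω i => X i ω) P
  integral_eq_zero : ∀ i, ∫ ω, X i ω ∂P = 0
  covariance_eq : ∀ i j, covariance (X i) (X j) P = K i j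

namespace IsGaussianVector

lemma isProbabilityMeasure (hX : IsGaussianVector P X K) : IsProbabilityMeasure P :=
  hX.hasGaussianLaw.isProbabilityMeasure

lemma memLp_two (hX : IsGaussianVector P X K) (i : ι) : MemLp (X i) 2 P :=
  (hX.hasGaussianLaw.eval i).memLp_two

lemma integrable (hX : IsGaussianVector P X K) (i : ι) : Integrable (X i) P :=
  (hX.hasGaussianLaw.eval i).integrable

lemma aemeasurable (hX : IsGaussianVector P X K) (i : ι) : AEMeasurable (X i) P :=
  (hX.hasGaussianLaw.eval i).aemeasurable

lemma covariance_comm (hX : IsGaussianVector P X K) (i j : ι) : K i j = K j i := by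
  rw [← hX.covariance_eq, ProbabilityTheory.covariance_comm, hX.covariance_eq]

lemma congr_cov {K' : ι → ι → ℝ} (hX : IsGaussianVector P X K) (hK : ∀ i j, K i j = K' i j) :
    IsGaussianVector P X K' :=
  ⟨hX.hasGaussianLaw, hX.integral_eq_zero, fun i j => (hX.covariance_eq i j).trans (hK i j)⟩

lemma comp_measurePreserving (hX : IsGaussianVector P X K) {f : Ω' → Ω}
    (hf : MeasurePreserving f Q P) : IsGaussianVector Q (fun i ω => X i (f ω)) K := by
  obtain rfl := hf.map_eq
  refine ⟨⟨?_⟩, fun i => ?_, fun i j => ?_⟩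
  · have := hX.hasGaussianLaw.isGaussian_map
    rwa [AEMeasurable.map_map_of_aemeasurable hX.hasGaussianLaw.aemeasurable
      hf.measurable.aemeasurable] at this
  · rw [← hX.integral_eq_zero i]
    exact (integral_map hf.measurable.aemeasurable (hX.aemeasurable i).aestronglyMeasurable).symm
  · rw [← hX.covariance_eq i j]
    exact (covariance_map_fun (hX.aemeasurable i).aestronglyMeasurable
      (hX.aemeasurable j).aestronglyMeasurable hf.measurable.aemeasurable).symm

lemma integral_abs_le_sqrt (hX : IsGaussianVector P X K) (i : ι) : ∫ ω, |X i ω| ∂P ≤ √(K i i) := by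
  have := hX.isProbabilityMeasure
  have hvar : 0 ≤ ∫ ω, (|X i| ^ 2) ω ∂P - (∫ ω, |X i| ω ∂P) ^ 2 := by
    rw [← variance_eq_sub (hX.memLp_two i).abs]
    exact variance_nonneg _ _
  have hcov : K i i = ∫ ω, (|X i| ^ 2) ω ∂P := by
    rw [← hX.covariance_eq, covariance_eq_sub (hX.memLp_two i) (hX.memLp_two i),
      hX.integral_eq_zero]
    simp [sq]
  exact Real.le_sqrt_of_sq_le (by simpa [hcov] using hvar)

section Fintype

variable [Fintype ι]

lemma integral_sum_mul (hX : IsGaussianVector P X K) (c : ι → ℝ) :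
    ∫ ω, ∑ i, c i * X i ω ∂P = 0 := by
  rw [integral_finsetSum _ fun i _ => (hX.integrable i).const_mul _]
  simp [integral_const_mul, hX.integral_eq_zero]

lemma covariance_sum_mul (hX : IsGaussianVector P X K) (c c' : ι → ℝ) :
    covariance (fun ω => ∑ i, c i * X i ω) (fun ω => ∑ i, c' i * X i ω) P =
      ∑ i, ∑ j, c i * c' j * K i j := by
  have := hX.isProbabilityMeasure
  rw [covariance_fun_sum_fun_sum (fun i => (hX.memLp_two i).const_mul _)
    fun i => (hX.memLp_two i).const_mul _]
  simp only [covariance_const_mul_left, covariance_const_mul_right, hX.covariance_eq, mul_assoc,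
    mul_left_comm]

lemma variance_sum_mul (hX : IsGaussianVector P X K) (c : ι → ℝ) :
    variance (fun ω => ∑ i, c i * X i ω) P = ∑ i, ∑ j, c i * c j * K i j := by
  rw [← hX.covariance_sum_mul, covariance_self]
  exact Finset.aemeasurable_fun_sum _ fun i _ => (hX.aemeasurable i).const_mul _

lemma linear_map [Finite κ] (hX : IsGaussianVector P X K) (A : κ → ι → ℝ) :
    IsGaussianVector P (fun k ω => ∑ i, A k i * X i ω)
      fun k l => ∑ i, ∑ j, A k i * A l j * K i j where
  hasGaussianLaw := by
    cases nonempty_fintype κ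
    simpa using hX.hasGaussianLaw.map_fun (ContinuousLinearMap.pi fun k =>
      ∑ i, A k i • ContinuousLinearMap.proj (R := ℝ) (φ := fun _ : ι => ℝ) i)
  integral_eq_zero k := hX.integral_sum_mul (A k)
  covariance_eq k l := hX.covariance_sum_mul (A k) (A l)

lemma strongDual_pi_apply (L : StrongDual ℝ (ι → ℝ)) (x : ι → ℝ) :
    L x = ∑ i, L (Pi.single i 1) * x i := by
  have hsingle (i : ι) : (Pi.single i 1 : ι → ℝ) = fun j => if i = j then 1 else 0 :=
    funext fun j => by simp [Pi.single_apply, eq_comm]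
  simpa [hsingle, mul_comm] using LinearMap.pi_apply_eq_sum_univ L.toLinearMap x

end Fintype

lemma map_eq_map [Finite ι] {Y : ι → Ω' → ℝ} (hX : IsGaussianVector P X K)
    (hY : IsGaussianVector Q Y K) :
    P.map (fun ω i => X i ω) = Q.map fun ω i => Y i ω := by
  cases nonempty_fintype ι
  have := hX.isProbabilityMeasure
  have := hY.isProbabilityMeasure
  have := hX.hasGaussianLaw.isGaussian_map
  have := hY.hasGaussianLaw.isGaussian_map
  refine Measure.ext_of_charFunDual (funext fun L => ?_)
  rw [hX.hasGaussianLaw.charFunDual_map_eq_fun, hY.hasGaussianLaw.charFunDual_map_eq_fun]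
  rw [funext fun ω => strongDual_pi_apply L fun i => X i ω,
    funext fun ω => strongDual_pi_apply L fun i => Y i ω, hX.integral_sum_mul, hY.integral_sum_mul,
    hX.variance_sum_mul, hY.variance_sum_mul]

section Prod

variable [Finite ι] [Finite κ] [IsProbabilityMeasure P] [IsProbabilityMeasure Q]

lemma prod {Y : κ → Ω' → ℝ} {K' : κ → κ → ℝ}
    (hX : IsGaussianVector P X K) (hY : IsGaussianVector Q Y K') :
    IsGaussianVector (P.prod Q)
      (fun s ω => Sum.elim (fun i => X i ω.1) (fun j => Y j ω.2) s)
      (Sum.elim (fun i => Sum.elim (K i) 0) fun i => Sum.elim 0 (K' i)) := by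
  have hX' := hX.comp_measurePreserving (measurePreserving_fst (μ := P) (ν := Q))
  have hY' := hY.comp_measurePreserving (measurePreserving_snd (μ := P) (ν := Q))
  have hcov (i : ι) (j : κ) :
      covariance (fun ω : Ω × Ω' => X i ω.1) (fun ω => Y j ω.2) (P.prod Q) = 0 :=
    covariance_fst_snd_prod (hX.memLp_two i) (hY.memLp_two j)
  cases nonempty_fintype ι
  cases nonempty_fintype κ
  refine ⟨?_, ?_, ?_⟩
  · have hXY := IndepFun.hasGaussianLaw hX'.hasGaussianLaw hY'.hasGaussianLaw
      (indepFun_prod₀ hX.hasGaussianLaw.aemeasurable hY.hasGaussianLaw.aemeasurable)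
    refine (hXY.map_fun (ContinuousLinearMap.pi fun s : ι ⊕ κ => Sum.elim
      (fun i => (ContinuousLinearMap.proj (R := ℝ) (φ := fun _ : ι => ℝ) i).comp
        (ContinuousLinearMap.fst ℝ (ι → ℝ) (κ → ℝ)))
      (fun j => (ContinuousLinearMap.proj (R := ℝ) (φ := fun _ : κ => ℝ) j).comp
        (ContinuousLinearMap.snd ℝ (ι → ℝ) (κ → ℝ))) s)).congr (.of_forall fun ω => funext ?_)
    rintro (i | j) <;> simp
  · rintro (i | j)
    · exact hX'.integral_eq_zero i
    · exact hY'.integral_eq_zero j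
  · rintro (i | i) (j | j)
    · exact hX'.covariance_eq i j
    · exact hcov i j
    · exact (ProbabilityTheory.covariance_comm _ _).trans (hcov j i)
    · exact hY'.covariance_eq i j

lemma prod_add {Y : ι → Ω' → ℝ}
    {K' : ι → ι → ℝ} (hX : IsGaussianVector P X K) (hY : IsGaussianVector Q Y K') :
    IsGaussianVector (P.prod Q) (fun i ω => X i ω.1 + Y i ω.2) fun i j => K i j + K' i j := by
  cases nonempty_fintype ι
  simpa using (hX.prod hY).linear_map (κ := ι) fun k =>
    Sum.elim (fun i => if i = k then 1 else 0) fun i => if i = k then 1 else 0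

end Prod

end IsGaussianVector

variable [Fintype ι]

lemma isGaussianVector_multivariateGaussian {S : Matrix ι ι ℝ} (hS : S.PosSemidef) :
    IsGaussianVector (multivariateGaussian 0 S) (fun i x => x i) S where
  hasGaussianLaw := IsGaussian.hasGaussianLaw_id.map_equiv_fun
    (PiLp.continuousLinearEquiv 2 ℝ fun _ : ι => ℝ)
  integral_eq_zero i := by
    simpa using ContinuousLinearMap.integral_comp_comm (μ := multivariateGaussian 0 S)
      (EuclideanSpace.proj i : EuclideanSpace ℝ ι →L[ℝ] ℝ) (φ := id) IsGaussian.integrable_id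
  covariance_eq := covariance_eval_multivariateGaussian hS

/-- Test functions bounded by one and `L`-Lipschitz for the `ℓ¹` distance. -/
structure IsLipschitzTest (L : ℝ) (Φ : (ι → ℝ) → ℝ) : Prop where
  nonneg : 0 ≤ L
  measurable : Measurable Φ
  abs_le_one : ∀ a, |Φ a| ≤ 1
  abs_sub_le : ∀ a b, |Φ a - Φ b| ≤ L * ∑ i, |a i - b i|

variable {L ε : ℝ} {Φ : (ι → ℝ) → ℝ}

lemma IsLipschitzTest.integrable_comp [IsFiniteMeasure P] (hΦ : IsLipschitzTest L Φ)
    (hX : ∀ i, AEMeasurable (X i) P) : Integrable (fun ω => Φ fun i => X i ω) P :=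
  .of_bound (hΦ.measurable.comp_aemeasurable (aemeasurable_pi_iff.2 hX)).aestronglyMeasurable 1
    (.of_forall fun _ => hΦ.abs_le_one _)

lemma IsGaussianVector.abs_integral_sub_integral_prod_add_le [IsProbabilityMeasure P]
    [IsProbabilityMeasure Q] {Y : ι → Ω' → ℝ} {K' : ι → ι → ℝ} (hX : IsGaussianVector P X K)
    (hY : IsGaussianVector Q Y K') (hΦ : IsLipschitzTest L Φ) :
    |∫ ω, Φ (fun i => X i ω) ∂P - ∫ ω, Φ (fun i => X i ω.1 + Y i ω.2) ∂P.prod Q| ≤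
      L * ∑ i, √(K' i i) := by
  have hX' := hX.comp_measurePreserving (measurePreserving_fst (μ := P) (ν := Q))
  have hY' := hY.comp_measurePreserving (measurePreserving_snd (μ := P) (ν := Q))
  have hΦX := hΦ.integrable_comp hX'.aemeasurable
  have hΦXY := hΦ.integrable_comp (hX.prod_add hY).aemeasurable
  have hint (i : ι) : Integrable (fun ω : Ω × Ω' => |Y i ω.2|) (P.prod Q) := (hY'.integrable i).abs
  have hfst : ∫ ω, Φ (fun i => X i ω) ∂P = ∫ ω, Φ (fun i => X i ω.1) ∂P.prod Q := by
    simpa using (integral_fun_fst (μ := P) (ν := Q) fun ω => Φ fun i => X i ω).symm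
  rw [hfst, ← integral_sub hΦX hΦXY]
  calc |∫ ω, (Φ (fun i => X i ω.1) - Φ (fun i => X i ω.1 + Y i ω.2)) ∂P.prod Q|
      ≤ ∫ ω, |Φ (fun i => X i ω.1) - Φ (fun i => X i ω.1 + Y i ω.2)| ∂P.prod Q :=
        abs_integral_le_integral_abs
    _ ≤ ∫ ω, L * ∑ i, |Y i ω.2| ∂P.prod Q :=
        integral_mono (hΦX.sub hΦXY).abs ((integrable_finsetSum _ fun i _ => hint i).const_mul L)
          fun ω => by simpa using hΦ.abs_sub_le (fun i => X i ω.1) fun i => X i ω.1 + Y i ω.2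
    _ = L * ∑ i, ∫ ω, |Y i ω.2| ∂P.prod Q := by
        rw [integral_const_mul, integral_finsetSum _ fun i _ => hint i]
    _ ≤ L * ∑ i, √(K' i i) :=
        mul_le_mul_of_nonneg_left (Finset.sum_le_sum fun i _ => hY'.integral_abs_le_sqrt i)
          hΦ.nonneg

lemma posSemidef_add_smul_one {M : Matrix ι ι ℝ} (hM : M.IsHermitian) (hε : 0 ≤ ε)
    (hMε : ∀ i j, |M i j| ≤ ε) :
    (M + (Fintype.card ι * ε) • (1 : Matrix ι ι ℝ)).PosSemidef := by
  refine .of_dotProduct_mulVec_nonneg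
    (hM.add (Matrix.isHermitian_one.smul (IsSelfAdjoint.all _))) fun x => ?_
  have hquad : star x ⬝ᵥ (M + (Fintype.card ι * ε) • (1 : Matrix ι ι ℝ)).mulVec x =
      ∑ i, ∑ j, x i * x j * M i j + ε * (Fintype.card ι * ∑ i, x i ^ 2) := by
    rw [Matrix.add_mulVec, dotProduct_add, Matrix.smul_mulVec, Matrix.one_mulVec, dotProduct_smul]
    simp only [dotProduct, Matrix.mulVec, smul_eq_mul, star_trivial, Finset.mul_sum]
    congr 1
    · exact Finset.sum_congr rfl fun i _ => Finset.sum_congr rfl fun j _ => by ring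
    · exact Finset.sum_congr rfl fun i _ => by ring
  have hterm (i j : ι) : -(ε * (|x i| * |x j|)) ≤ x i * x j * M i j := by
    refine neg_le_of_abs_le ?_
    rw [abs_mul, abs_mul, mul_comm]
    exact mul_le_mul_of_nonneg_right (hMε i j) (by positivity)
  have hlower : -(ε * (∑ i, |x i|) ^ 2) ≤ ∑ i, ∑ j, x i * x j * M i j := by
    refine le_trans (le_of_eq ?_) (Finset.sum_le_sum fun i _ => Finset.sum_le_sum fun j _ =>
      hterm i j)
    simp only [Finset.sum_neg_distrib, ← Finset.mul_sum, sq, Finset.sum_mul_sum]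
  have hcs : (∑ i, |x i|) ^ 2 ≤ Fintype.card ι * ∑ i, x i ^ 2 := by
    simpa using sq_sum_le_card_mul_sum_sq (s := Finset.univ) (f := fun i => |x i|)
  rw [hquad]
  linarith [mul_le_mul_of_nonneg_left hcs hε]

/-- The bound of `IsGaussianVector.abs_integral_sub_le` for vectors of `n` entries whose covariances
differ by at most `ε`, tested against functions of Lipschitz constant `L`. -/
noncomputable def comparisonError (L ε : ℝ) (n : ℕ) : ℝ :=
  2 * L * (n * √((n + 1) * ε))

lemma comparisonError_nonneg (hL : 0 ≤ L) (ε : ℝ) (n : ℕ) : 0 ≤ comparisonError L ε n := by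
  rw [comparisonError]
  positivity

lemma comparisonError_mono (hL : 0 ≤ L) (hε : 0 ≤ ε) : Monotone (comparisonError L ε) := by
  intro m n hmn
  rw [comparisonError, comparisonError]
  gcongr

/-- Adding independent Gaussian noise of diagonal covariance to one vector and the difference of the
covariances plus the same diagonal to the other makes the two laws equal. -/
theorem IsGaussianVector.abs_integral_sub_le [IsProbabilityMeasure P] [IsProbabilityMeasure Q]
    {Y : ι → Ω' → ℝ} {K' : ι → ι → ℝ} (hX : IsGaussianVector P X K)
    (hY : IsGaussianVector Q Y K') (hε : 0 ≤ ε) (hK : ∀ i j, |K i j - K' i j| ≤ ε)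
    (hΦ : IsLipschitzTest L Φ) :
    |∫ ω, Φ (fun i => X i ω) ∂P - ∫ ω, Φ (fun i => Y i ω) ∂Q| ≤
      comparisonError L ε (Fintype.card ι) := by
  set S : Matrix ι ι ℝ := (Fintype.card ι * ε) • 1 with hS
  set M : Matrix ι ι ℝ := Matrix.of fun i j => K i j - K' i j with hM
  have hpsd : S.PosSemidef := Matrix.PosSemidef.one.smul (by positivity)
  have hpsd' : (M + S).PosSemidef := by
    refine posSemidef_add_smul_one (.ext fun i j => ?_) hε hK
    simp [hM, hX.covariance_comm i j, hY.covariance_comm i j]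
  have hZ := isGaussianVector_multivariateGaussian hpsd
  have hZ' := isGaussianVector_multivariateGaussian hpsd'
  have hlaw := ((hX.prod_add hZ).congr_cov fun i j => show K i j + S i j = K' i j + (M + S) i j by
    simp only [hM, Matrix.add_apply, Matrix.of_apply]; ring).map_eq_map (hY.prod_add hZ')
  have hnoisy : ∫ ω, Φ (fun i => X i ω.1 + ω.2 i) ∂P.prod (multivariateGaussian 0 S) =
      ∫ ω, Φ (fun i => Y i ω.1 + ω.2 i) ∂Q.prod (multivariateGaussian 0 (M + S)) := by
    rw [← integral_map (hX.prod_add hZ).hasGaussianLaw.aemeasurable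
      hΦ.measurable.aestronglyMeasurable, hlaw, integral_map
      (hY.prod_add hZ').hasGaussianLaw.aemeasurable hΦ.measurable.aestronglyMeasurable]
  have hdiag {T : Matrix ι ι ℝ} (hT : ∀ i, T i i ≤ (Fintype.card ι + 1) * ε) :
      L * ∑ i, √(T i i) ≤ L * (Fintype.card ι * √((Fintype.card ι + 1) * ε)) := by
    refine mul_le_mul_of_nonneg_left ?_ hΦ.nonneg
    simpa using Finset.sum_le_sum fun i (_ : i ∈ Finset.univ) => Real.sqrt_le_sqrt (hT i)
  have hXZ := hX.abs_integral_sub_integral_prod_add_le hZ hΦ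
  have hYZ := hY.abs_integral_sub_integral_prod_add_le hZ' hΦ
  have hSdiag := hdiag (T := S) fun i => by simp [hS]; linarith
  have hMdiag := hdiag (T := M + S) fun i => by
    have := (le_abs_self _).trans (hK i i)
    simp [hM, hS]
    linarith
  rw [hnoisy] at hXZ
  rw [comparisonError]
  rw [abs_le] at *
  constructor <;> linarith [hXZ.1, hXZ.2, hYZ.1, hYZ.2]

end GaussianVector

section GaussianField

variable {I ι : Type*} {μ : Measure (I → ℝ)} {K : I → I → ℝ}

lemma IsGaussianField.map_sum_mul_eq [Fintype ι] (hμ : IsGaussianField μ K) (e : ι → I)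
    (c : ι → ℝ) :
    μ.map (fun ω => ∑ i, c i * ω (e i)) =
      gaussianReal 0 (Real.toNNReal (∑ i, ∑ j, c i * c j * K (e i) (e j))) := by
  let C : I →₀ ℝ := ∑ i, Finsupp.single (e i) (c i)
  have hC (f : I → ℝ) : ∑ s ∈ C.support, C s * f s = ∑ i, c i * f (e i) := by
    change C.sum (fun s a => a * f s) = _
    rw [← Finsupp.sum_finsetSum_index (h := fun s a => a * f s) (fun _ => zero_mul _)
      fun _ _ _ => add_mul _ _ _]
    simp
  have hquad : ∑ i ∈ C.support, ∑ j ∈ C.support, C i * C j * K i j =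
      ∑ i, ∑ j, c i * c j * K (e i) (e j) := by
    simp_rw [mul_assoc, ← Finset.mul_sum, hC]
  simpa only [hC, hquad] using hμ.2 C

lemma IsGaussianField.hasLaw_eval (hμ : IsGaussianField μ K) (i : I) :
    HasLaw (fun ω : I → ℝ => ω i) (gaussianReal 0 (K i i).toNNReal) μ :=
  ⟨(measurable_pi_apply i).aemeasurable, by
    simpa using hμ.map_sum_mul_eq (fun _ : Unit => i) fun _ => 1⟩

lemma IsGaussianField.covariance_eval (hμ : IsGaussianField μ K) (hsymm : ∀ i j, K i j = K j i)
    (hdiag : ∀ i, 0 ≤ K i i) (hadd : ∀ i j, 0 ≤ K i i + K j j + 2 * K i j) (i j : I) :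
    covariance (fun ω : I → ℝ => ω i) (fun ω => ω j) μ = K i j := by
  have := hμ.1
  have hmem (i : I) : MemLp (fun ω : I → ℝ => ω i) 2 μ :=
    HasGaussianLaw.memLp_two ⟨by rw [(hμ.hasLaw_eval i).map_eq]; infer_instance⟩
  have hvar (i : I) : variance (fun ω : I → ℝ => ω i) μ = K i i := by
    rw [(hμ.hasLaw_eval i).variance_eq, variance_id_gaussianReal, Real.coe_toNNReal _ (hdiag i)]
  have hvar_add : variance (fun ω : I → ℝ => ω i + ω j) μ = K i i + K j j + 2 * K i j := by
    have hmap := hμ.map_sum_mul_eq (fun b : Bool => if b then i else j) fun _ => 1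
    simp only [Fintype.sum_bool, one_mul, if_true, Bool.false_eq_true, if_false, hsymm j i] at hmap
    rw [HasLaw.variance_eq ⟨by fun_prop, hmap⟩, variance_id_gaussianReal, Real.coe_toNNReal]
    · ring
    · linarith [hadd i j]
  have hpolar := variance_fun_add (hmem i) (hmem j)
  rw [hvar_add, hvar, hvar] at hpolar
  linarith

lemma IsGaussianField.isGaussianVector [Finite ι] (hμ : IsGaussianField μ K)
    (hsymm : ∀ i j, K i j = K j i) (hdiag : ∀ i, 0 ≤ K i i)
    (hadd : ∀ i j, 0 ≤ K i i + K j j + 2 * K i j) (e : ι → I) :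
    IsGaussianVector μ (fun i ω => ω (e i)) fun i j => K (e i) (e j) where
  hasGaussianLaw := by
    cases nonempty_fintype ι
    refine ⟨isGaussian_of_map_eq_gaussianReal fun L => ⟨0, Real.toNNReal (∑ i, ∑ j,
      L (Pi.single i 1) * L (Pi.single j 1) * K (e i) (e j)), ?_⟩⟩
    rw [Measure.map_map (by fun_prop) (by fun_prop),
      ← hμ.map_sum_mul_eq e fun i => L (Pi.single i 1)]
    exact congrArg μ.map (funext fun ω => IsGaussianVector.strongDual_pi_apply L _)
  integral_eq_zero i := by rw [(hμ.hasLaw_eval (e i)).integral_eq, integral_id_gaussianReal]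
  covariance_eq i j := hμ.covariance_eval hsymm hdiag hadd (e i) (e j)

end GaussianField

/-! ### Coding tree-like neighbourhoods by words -/

section UniquePaths

variable {V : Type*} {G : SimpleGraph V}

/-- Any two paths of `G` with the same endpoints that stay inside `B` coincide, i.e. `G` looks
like a forest on `B`. -/
def UniquePaths (G : SimpleGraph V) (B : Set V) : Prop :=
  ∀ (u v : V) (p q : G.Walk u v), p.IsPath → q.IsPath → (∀ w ∈ p.support, w ∈ B) →
    (∀ w ∈ q.support, w ∈ B) → p = q

lemma uniquePaths_of_isAcyclic_induce {B : Set V} (h : (G.induce B).IsAcyclic) :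
    UniquePaths G B := by
  intro u v p q hp hq hpB hqB
  have map_induce (p : G.Walk u v) (hpB : ∀ w ∈ p.support, w ∈ B) :
      (p.induce B hpB).map (SimpleGraph.Embedding.induce B).toHom = p :=
    SimpleGraph.Walk.map_induce p hpB
  have isPath_induce (p : G.Walk u v) (hpB : ∀ w ∈ p.support, w ∈ B) (hp : p.IsPath) :
      (p.induce B hpB).IsPath :=
    SimpleGraph.Walk.IsPath.of_map (f := (SimpleGraph.Embedding.induce B).toHom)
      (by rwa [map_induce p hpB])
  have e := (h.subsingleton_path _ _).elim ⟨_, isPath_induce p hpB hp⟩ ⟨_, isPath_induce q hqB hq⟩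
  rw [← map_induce p hpB, ← map_induce q hqB, Subtype.mk.inj e]

lemma uniquePaths_of_isAcyclic (h : G.IsAcyclic) (B : Set V) : UniquePaths G B :=
  fun _ _ p q hp hq _ _ => Subtype.mk.inj ((h.subsingleton_path _ _).elim ⟨p, hp⟩ ⟨q, hq⟩)

lemma dist_add_dist_le_length {u v w : V} (p : G.Walk u v) (hw : w ∈ p.support) :
    G.dist u w + G.dist w v ≤ p.length := by
  have h := congrArg SimpleGraph.Walk.length (p.take_spec hw)
  rw [SimpleGraph.Walk.length_append] at h
  have h₁ := SimpleGraph.dist_le (p.takeUntil w hw)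
  have h₂ := SimpleGraph.dist_le (p.dropUntil w hw)
  omega

lemma exists_isPath_cons_of_dist_le (hc : G.Connected) {u v a : V} (ha : G.Adj u a)
    (hav : G.dist a v ≤ G.dist u v) :
    ∃ p : G.Walk a v, (SimpleGraph.Walk.cons ha p).IsPath ∧
      ∀ w ∈ (SimpleGraph.Walk.cons ha p).support, G.dist u w ≤ G.dist u v + 1 := by
  obtain ⟨p, hp, hl⟩ := hc.exists_path_of_dist a v
  have hua : G.dist u a = 1 := SimpleGraph.dist_eq_one_iff_adj.2 ha
  refine ⟨p, hp.cons fun hu => ?_, fun w hw => ?_⟩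
  · have := dist_add_dist_le_length p hu
    rw [SimpleGraph.dist_comm] at hua
    omega
  · rw [SimpleGraph.Walk.support_cons, List.mem_cons] at hw
    rcases hw with rfl | hw
    · simp
    · have := dist_add_dist_le_length p hw
      have := hc.dist_triangle (u := u) (v := a) (w := w)
      omega

lemma UniquePaths.eq_of_dist_le {B : Set V} (hB : UniquePaths G B) (hc : G.Connected)
    {u v a b : V} (ha : G.Adj u a) (hb : G.Adj u b) (hav : G.dist a v ≤ G.dist u v)
    (hbv : G.dist b v ≤ G.dist u v) (hR : ∀ w, G.dist u w ≤ G.dist u v + 1 → w ∈ B) : a = b := by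
  obtain ⟨p, hp, hpB⟩ := exists_isPath_cons_of_dist_le hc ha hav
  obtain ⟨q, hq, hqB⟩ := exists_isPath_cons_of_dist_le hc hb hbv
  have h := hB u v _ _ hp hq (fun w hw => hR w (hpB w hw)) (fun w hw => hR w (hqB w hw))
  injection h

end UniquePaths

section WordDist

variable {D : ℕ}

/-- The tree distance between two words, where the parent of a word is its tail. It is computed by
stripping letters off the longer word until both words agree. -/
def wordDist : List (Fin D) → List (Fin D) → ℕ
  | [], m => m.length
  | i :: l, [] => (i :: l).length
  | i :: l, j :: m =>
    if i :: l = j :: m then 0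
    else if m.length ≤ l.length then wordDist l (j :: m) + 1 else wordDist (i :: l) m + 1
  termination_by l m => l.length + m.length

lemma wordDist_self (l : List (Fin D)) : wordDist l l = 0 := by
  cases l <;> simp [wordDist]

lemma wordDist_nil_right (l : List (Fin D)) : wordDist l [] = l.length := by
  cases l <;> simp [wordDist]

lemma wordDist_cons_left {l m : List (Fin D)} {i : Fin D} (h : m.length ≤ l.length + 1)
    (hne : m ≠ i :: l) : wordDist (i :: l) m = wordDist l m + 1 := by
  cases m with
  | nil => simp [wordDist_nil_right]
  | cons j m => rw [wordDist, if_neg hne.symm, if_pos (by simpa using h)]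

lemma wordDist_cons_right {l m : List (Fin D)} (j : Fin D) (h : l.length ≤ m.length) :
    wordDist l (j :: m) = wordDist l m + 1 := by
  cases l with
  | nil => simp [wordDist]
  | cons i l =>
    have hlt : l.length < m.length := h
    rw [wordDist, if_neg (by rintro ⟨⟩; omega), if_neg (by omega)]

lemma wordDist_comm (l m : List (Fin D)) : wordDist l m = wordDist m l := by
  induction hn : l.length + m.length using Nat.strong_induction_on generalizing l m with
  | _ n ih =>
    rcases eq_or_ne l m with rfl | hne
    · rfl
    wlog hlm : m.length ≤ l.length generalizing l m
    · exact (this m l (by omega) hne.symm (by omega)).symm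
    cases l with
    | nil => exact absurd (List.eq_nil_of_length_eq_zero (by simpa using hlm)).symm hne
    | cons i l =>
      simp only [List.length_cons] at hn hlm
      rw [wordDist_cons_left hlm hne.symm, ih _ (by omega) l m rfl]
      rcases hlm.eq_or_lt with hlm | hlm
      · cases m with
        | nil => simp at hlm
        | cons j m =>
          have hlm : m.length = l.length := by simpa using hlm
          rw [wordDist_cons_left (m := i :: l) (by simp [hlm]) hne,
            wordDist_cons_right i hlm.le,
            wordDist_cons_left (by omega) (fun h => by simp [h] at hlm),
            ← ih _ (by simp only [List.length_cons] at hn; omega) l m rfl]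
      · rw [wordDist_cons_right i (by omega)]

lemma eq_of_wordDist_eq_zero {l m : List (Fin D)} (h : wordDist l m = 0) : l = m := by
  match l, m with
  | [], m => exact (List.eq_nil_of_length_eq_zero (by simpa [wordDist] using h)).symm
  | i :: l, [] => simp [wordDist] at h
  | i :: l, j :: m =>
    by_contra hne
    rw [wordDist, if_neg hne] at h
    split_ifs at h

lemma eq_cons_or_wordDist_tail {l m : List (Fin D)} (hne : l ≠ m) (h : m.length ≤ l.length + 1) :
    (∃ j, m = j :: l) ∨ ∃ k l', l = k :: l' ∧ wordDist l m = wordDist l' m + 1 := by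
  by_cases hj : ∃ j, m = j :: l
  · exact .inl hj
  refine .inr ?_
  cases l with
  | nil =>
    rcases m with _ | ⟨j, m⟩
    · exact absurd rfl hne
    · exact absurd ⟨j, by simpa using h⟩ hj
  | cons k l =>
    refine ⟨k, l, rfl, ?_⟩
    rcases le_or_gt m.length (l.length + 1) with hm | hm
    · exact wordDist_cons_left hm hne.symm
    rcases m with _ | ⟨j, m⟩
    · simp at hm
    simp only [List.length_cons] at h hm
    rw [wordDist_cons_right j (by simp; omega), wordDist_cons_right j (by omega),
      wordDist_cons_left (by omega) fun e => hj ⟨j, by rw [e]⟩]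

end WordDist

section TreeCode

variable {V : Type*} {G : SimpleGraph V} {D : ℕ} {x x' : V} {c : List (Fin D) → V}

/-- The predecessor of the vertex `c l` in a coding `c` of a tree by words, with the convention
that the predecessor of the root is `x'`. -/
def parentVertex (x' : V) (c : List (Fin D) → V) : List (Fin D) → V
  | [] => x'
  | _ :: l => c l

/-- `c` codes the non-backtracking walks of `G` that start at `x` and do not step to `x'` first:
the empty word codes `x`, and prepending letters to `l` enumerates the neighbours of `c l` other
than its predecessor. -/
structure IsTreeCode (G : SimpleGraph V) (x x' : V) (c : List (Fin D) → V) : Prop where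
  nil : c [] = x
  injective : ∀ l, Function.Injective fun i => c (i :: l)
  range_eq : ∀ l, Set.range (fun i => c (i :: l)) = G.neighborSet (c l) \ {parentVertex x' c l}

lemma exists_injective_range_eq {α : Type*} {s : Set α} (hs : s.ncard = D) (hfin : s.Finite) :
    ∃ f : Fin D → α, Function.Injective f ∧ Set.range f = s := by
  have := hfin.to_subtype
  let e : Fin D ≃ s := (Finite.equivFinOfCardEq hs).symm
  refine ⟨fun i => e i, Subtype.val_injective.comp e.injective, ?_⟩
  rw [Set.range_comp' Subtype.val e, e.range_eq_univ, Set.image_univ, Subtype.range_coe]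

lemma exists_isTreeCode (hreg : IsReg G (D + 1)) (hx : G.Adj x x') :
    ∃ c : List (Fin D) → V, IsTreeCode G x x' c := by
  have hchild (e : {e : V × V // G.Adj e.2 e.1}) : ∃ f : Fin D → V, Function.Injective f ∧
      Set.range f = G.neighborSet e.1.2 \ {e.1.1} := by
    have hcard : (G.neighborSet e.1.2).ncard = D + 1 := hreg e.1.2
    refine exists_injective_range_eq ?_ ((Set.finite_of_ncard_pos (by omega)).sdiff)
    rw [Set.ncard_sdiff_singleton_of_mem (by exact e.2), hcard, Nat.add_sub_cancel]
  choose child hinj hrange using hchild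
  have adj_child (e) (i : Fin D) : G.Adj e.1.2 (child e i) :=
    ((hrange e).subset ⟨i, rfl⟩).1
  let edge : List (Fin D) → {e : V × V // G.Adj e.2 e.1} := fun l =>
    List.rec ⟨(x', x), hx⟩ (fun i _ e => ⟨(e.1.2, child e i), (adj_child e i).symm⟩) l
  refine ⟨fun l => (edge l).1.2, rfl, fun l => hinj (edge l), fun l => ?_⟩
  have hparent : (edge l).1.1 = parentVertex x' (fun l => (edge l).1.2) l := by cases l <;> rfl
  rw [← hparent]
  exact hrange (edge l)

namespace IsTreeCode

lemma adj (h : IsTreeCode G x x' c) (l : List (Fin D)) (i : Fin D) : G.Adj (c l) (c (i :: l)) :=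
  ((h.range_eq l).subset ⟨i, rfl⟩).1

lemma ne_parentVertex (h : IsTreeCode G x x' c) (l : List (Fin D)) (i : Fin D) :
    c (i :: l) ≠ parentVertex x' c l :=
  ((h.range_eq l).subset ⟨i, rfl⟩).2

lemma exists_cons_eq (h : IsTreeCode G x x' c) {l : List (Fin D)} {y : V} (hy : G.Adj (c l) y)
    (hne : y ≠ parentVertex x' c l) : ∃ i, c (i :: l) = y :=
  (h.range_eq l).superset ⟨hy, hne⟩

lemma dist_le_length (h : IsTreeCode G x x' c) (hc : G.Connected) (l : List (Fin D)) :
    G.dist x (c l) ≤ l.length := by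
  induction l with
  | nil => simp [h.nil]
  | cons i l ih =>
    have htri := hc.dist_triangle (u := x) (v := c l) (w := c (i :: l))
    have hadj := SimpleGraph.dist_eq_one_iff_adj.2 (h.adj l i)
    simp only [List.length_cons]
    omega

lemma dist_cons (h : IsTreeCode G x x' c) (hc : G.Connected) {B : Set V} (hB : UniquePaths G B)
    {l m : List (Fin D)} {i : Fin D} (hle : m.length ≤ l.length + 1) (hne : m ≠ i :: l)
    (hR : ∀ w, G.dist (c l) w ≤ G.dist (c l) (c m) + 1 → w ∈ B)
    (hparent : ∀ k l', l = k :: l' → wordDist l m = wordDist l' m + 1 →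
      G.dist (c l') (c m) ≤ G.dist (c l) (c m)) :
    G.dist (c (i :: l)) (c m) = G.dist (c l) (c m) + 1 := by
  have hadj := h.adj l i
  rcases eq_or_ne l m with rfl | hlm
  · simpa [SimpleGraph.dist_comm] using hadj
  have hone := SimpleGraph.dist_eq_one_iff_adj.2 hadj.symm
  have htri := hc.dist_triangle (u := c (i :: l)) (v := c l) (w := c m)
  by_contra hdist
  have closer_eq (a : V) (ha : G.Adj (c l) a) (ham : G.dist a (c m) ≤ G.dist (c l) (c m)) :
      a = c (i :: l) :=
    hB.eq_of_dist_le hc ha hadj ham (by omega) hR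
  rcases eq_cons_or_wordDist_tail hlm hle with ⟨j, rfl⟩ | ⟨k, l', rfl, hk⟩
  · have hji : j = i := h.injective l (closer_eq _ (h.adj l j) (by simp))
    exact hne (by rw [hji])
  · exact h.ne_parentVertex (k :: l') i
      (closer_eq _ (h.adj l' k).symm (hparent k l' rfl hk)).symm

theorem dist_eq_wordDist (h : IsTreeCode G x x' c) (hc : G.Connected) {B : Set V}
    (hB : UniquePaths G B) {r : ℕ} (hR : ∀ w, G.dist x w ≤ 3 * r + 1 → w ∈ B)
    {l m : List (Fin D)} (hl : l.length ≤ r) (hm : m.length ≤ r) :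
    G.dist (c l) (c m) = wordDist l m := by
  induction hn : l.length + m.length using Nat.strong_induction_on generalizing l m with
  | _ n ih =>
    rcases eq_or_ne l m with rfl | hne
    · simp [wordDist_self]
    wlog hlm : m.length ≤ l.length generalizing l m
    · rw [SimpleGraph.dist_comm, wordDist_comm]
      exact this hm hl (by omega) hne.symm (by omega)
    cases l with
    | nil => exact absurd (List.eq_nil_of_length_eq_zero (by simpa using hlm)).symm hne
    | cons i l =>
      simp only [List.length_cons] at hn hlm hl
      have hlm_dist := ih _ (by omega) (by omega : l.length ≤ r) hm rfl
      rw [wordDist_cons_left hlm hne.symm, ← hlm_dist]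
      refine h.dist_cons hc hB hlm hne.symm (fun w hw => hR w ?_) fun k l' hk hk' => ?_
      · have := h.dist_le_length hc l
        have := h.dist_le_length hc m
        have := hc.dist_triangle (u := x) (v := c l) (w := w)
        have := hc.dist_triangle (u := c l) (v := x) (w := c m)
        rw [SimpleGraph.dist_comm (u := c l) (v := x)] at this
        omega
      · subst hk
        simp only [List.length_cons] at hn hl
        rw [hlm_dist, hk', ih _ (by omega) (by omega : l'.length ≤ r) hm rfl]
        exact Nat.le_succ _

lemma eq_of_apply_eq (h : IsTreeCode G x x' c) (hc : G.Connected) {B : Set V}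
    (hB : UniquePaths G B) {r : ℕ} (hR : ∀ w, G.dist x w ≤ 3 * r + 1 → w ∈ B)
    {l m : List (Fin D)} (hl : l.length ≤ r) (hm : m.length ≤ r) (he : c l = c m) : l = m :=
  eq_of_wordDist_eq_zero (by rw [← h.dist_eq_wordDist hc hB hR hl hm, he, SimpleGraph.dist_self])

end IsTreeCode

end TreeCode

section Words

variable {D : ℕ}

/-- The words of length `k` over the alphabet `Fin D`, i.e. the generation `k` of the `D`-ary
tree. -/
noncomputable def words (D k : ℕ) : Finset (List (Fin D)) :=
  (List.finite_length_eq (Fin D) k).toFinset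

/-- The words of length at most `r` over the alphabet `Fin D`. -/
noncomputable def wordsLE (D r : ℕ) : Finset (List (Fin D)) :=
  (List.finite_length_le (Fin D) r).toFinset

@[simp]
lemma mem_words {k : ℕ} {l : List (Fin D)} : l ∈ words D k ↔ l.length = k := by
  simp [words]

@[simp]
lemma mem_wordsLE {r : ℕ} {l : List (Fin D)} : l ∈ wordsLE D r ↔ l.length ≤ r := by
  simp [wordsLE]

lemma words_zero : words D 0 = {[]} := by
  ext l
  simp

lemma prod_words_succ {M : Type*} [CommMonoid M] (k : ℕ) (f : List (Fin D) → M) :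
    ∏ m ∈ words D (k + 1), f m = ∏ l ∈ words D k, ∏ i, f (i :: l) := by
  rw [← Finset.prod_product']
  refine (Finset.prod_bij (fun p _ => p.2 :: p.1) (by simp) ?_ ?_ (fun _ _ => rfl)).symm
  · rintro ⟨l, i⟩ - ⟨l', i'⟩ - h
    simpa [and_comm] using h
  · rintro (_ | ⟨i, l⟩) hl
    · simp at hl
    · exact ⟨(l, i), by simpa using hl, rfl⟩

lemma card_words (k : ℕ) : (words D k).card = D ^ k := by
  rw [words, ← Set.ncard_eq_toFinset_card _ (List.finite_length_eq (Fin D) k),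
    ← Nat.card_coe_set_eq]
  exact (Nat.card_eq_fintype_card (α := List.Vector (Fin D) k)).trans (by simp)

lemma card_wordsLE_le (hD : 2 ≤ D) (r : ℕ) : (wordsLE D r).card ≤ D ^ (r + 1) := by
  have hsub : wordsLE D r ⊆ (Finset.range (r + 1)).biUnion (words D) := fun l hl => by
    simpa [Nat.lt_succ_iff] using hl
  refine (Finset.card_le_card hsub).trans (Finset.card_biUnion_le.trans ?_)
  simp_rw [card_words]
  exact (Nat.geomSum_lt hD fun k hk => by simpa using hk).le

/-- The word `l` and all its ancestors, that is all its suffixes, carry a value at least `h`. -/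
def Alive (h : ℝ) (η : List (Fin D) → ℝ) (l : List (Fin D)) : Prop :=
  ∀ m, m <:+ l → h ≤ η m

/-- The number of vertices of generation `k` connected to the root of the `D`-ary tree above
level `h`. -/
noncomputable def aliveCount (k : ℕ) (h : ℝ) (η : List (Fin D) → ℝ) : ℕ :=
  ((words D k).filter (Alive h η)).card

lemma alive_nil {h : ℝ} {η : List (Fin D) → ℝ} : Alive h η [] ↔ h ≤ η [] := by
  simp [Alive]

lemma alive_cons {h : ℝ} {η : List (Fin D) → ℝ} {i : Fin D} {l : List (Fin D)} :
    Alive h η (i :: l) ↔ h ≤ η (i :: l) ∧ Alive h η l := by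
  simp [Alive, List.suffix_cons_iff, or_imp, forall_and]

lemma Alive.mono {h h' : ℝ} {η η' : List (Fin D) → ℝ} {l : List (Fin D)} (hl : Alive h η l)
    (hη : ∀ m : List (Fin D), m.length ≤ l.length → h ≤ η m → h' ≤ η' m) : Alive h' η' l :=
  fun m hm => hη m hm.length_le (hl m hm)

lemma alive_congr {h : ℝ} {η η' : List (Fin D) → ℝ} {l : List (Fin D)}
    (hη : ∀ m : List (Fin D), m.length ≤ l.length → η m = η' m) : Alive h η l ↔ Alive h η' l :=
  ⟨fun hl => hl.mono fun m hm => (hη m hm ▸ id), fun hl => hl.mono fun m hm => (hη m hm ▸ id)⟩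

lemma aliveCount_mono {k : ℕ} {h h' : ℝ} {η η' : List (Fin D) → ℝ}
    (hη : ∀ m : List (Fin D), m.length ≤ k → h ≤ η m → h' ≤ η' m) :
    aliveCount k h η ≤ aliveCount k h' η' := by
  refine Finset.card_le_card fun l hl => ?_
  simp only [Finset.mem_filter, mem_words] at hl ⊢
  exact ⟨hl.1, hl.2.mono fun m hm => hη m (hm.trans hl.1.le)⟩

end Words

section LevelSets

variable {V : Type*} {G : SimpleGraph V} {D : ℕ} {x x' : V} {c : List (Fin D) → V} {h : ℝ}
  {ω : V → ℝ}

lemma IsTreeCode.mem_levelComp (hcode : IsTreeCode G x x' c) {l : List (Fin D)}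
    (hl : Alive h (fun m => ω (c m)) l) : c l ∈ levelComp G h ω x := by
  obtain rfl := hcode.nil
  induction l with
  | nil => exact ⟨.nil, by simpa [alive_nil] using hl⟩
  | cons i l ih =>
    rw [alive_cons] at hl
    obtain ⟨p, hp⟩ := ih hl.2
    refine ⟨p.concat (hcode.adj l i), fun v hv => ?_⟩
    rw [SimpleGraph.Walk.support_concat, List.mem_append, List.mem_singleton] at hv
    rcases hv with hv | rfl
    · exact hp v hv
    · exact hl.1

lemma IsTreeCode.aliveCount_le_ncard_levelComp [Finite V] (hcode : IsTreeCode G x x' c)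
    (hc : G.Connected) {B : Set V} (hB : UniquePaths G B) {r : ℕ}
    (hR : ∀ w, G.dist x w ≤ 3 * r + 1 → w ∈ B) (h : ℝ) (ω : V → ℝ) :
    aliveCount r h (fun m => ω (c m)) ≤ (levelComp G h ω x).ncard := by
  rw [aliveCount, ← Set.ncard_coe_finset]
  refine Set.ncard_le_ncard_of_injOn c (fun l hl => ?_) (fun l hl m hm e => ?_) (Set.toFinite _)
  · exact hcode.mem_levelComp (Finset.mem_filter.1 hl).2
  · simp only [Finset.coe_filter, mem_words, mem_ofPred_eq] at hl hm
    exact hcode.eq_of_apply_eq hc hB hR hl.1.le hm.1.le e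

lemma IsTreeCode.exists_alive_of_isPath (hcode : IsTreeCode G x x' c) {u z : V} {q : G.Walk u z}
    (hq : q.IsPath) (hqh : ∀ v ∈ q.support, h ≤ ω v) {l : List (Fin D)} (hlu : c l = u)
    (hl : Alive h (fun m => ω (c m)) l) (hparent : parentVertex x' c l ∉ q.support) :
    ∃ m, Alive h (fun m => ω (c m)) m ∧ c m = z := by
  induction q generalizing l with
  | nil => exact ⟨l, hl, hlu⟩
  | @cons u y z huy q ih =>
    rw [SimpleGraph.Walk.cons_isPath_iff] at hq
    simp only [SimpleGraph.Walk.support_cons, List.mem_cons, not_or, forall_eq_or_imp]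
      at hqh hparent
    obtain ⟨i, rfl⟩ := hcode.exists_cons_eq (hlu ▸ huy)
      fun e => hparent.2 (e ▸ q.start_mem_support)
    exact ih hq.1 hqh.2 rfl (alive_cons.2 ⟨hqh.2 _ q.start_mem_support, hl⟩)
      (by simpa only [parentVertex, hlu] using hq.2)

lemma exists_isPath_notMem_of_mem_treePlus (hG : G.Connected) (hac : G.IsAcyclic) {z : V}
    (hz : z ∈ levelComp G h ω x ∩ treePlus G x x') :
    ∃ p : G.Walk x z, p.IsPath ∧ (∀ v ∈ p.support, h ≤ ω v) ∧ x' ∉ p.support := by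
  obtain ⟨⟨p, hp⟩, hz : G.dist z x' = G.dist z x + 1⟩ := hz
  refine ⟨p.bypass, p.bypass_isPath, fun v hv => hp v (p.support_bypass_subset_support hv),
    fun hx' => ?_⟩
  obtain ⟨g, hg, hgl⟩ := hG.exists_path_of_dist x z
  obtain rfl := uniquePaths_of_isAcyclic hac univ _ _ _ _ p.bypass_isPath hg
    (fun _ _ => mem_univ _) (fun _ _ => mem_univ _)
  have := dist_add_dist_le_length p.bypass hx'
  rw [SimpleGraph.dist_comm, SimpleGraph.dist_comm (u := z)] at hz
  omega

lemma IsTreeCode.levelComp_inter_treePlus_subset (hcode : IsTreeCode G x x' c)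
    (hG : G.Connected) (hac : G.IsAcyclic) :
    levelComp G h ω x ∩ treePlus G x x' ⊆ c '' {m | Alive h (fun m => ω (c m)) m} := by
  intro z hz
  obtain ⟨p, hp, hph, hx'⟩ := exists_isPath_notMem_of_mem_treePlus hG hac hz
  have hx : h ≤ ω (c []) := hcode.nil ▸ hph x p.start_mem_support
  exact hcode.exists_alive_of_isPath hp hph hcode.nil (alive_nil.2 hx) hx'

lemma IsTreeCode.exists_alive_length_eq (hcode : IsTreeCode G x x' c) (hG : G.Connected)
    (hac : G.IsAcyclic) (hinf : (levelComp G h ω x ∩ treePlus G x x').Infinite) (n : ℕ) :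
    ∃ l : List (Fin D), l.length = n ∧ Alive h (fun m => ω (c m)) l := by
  by_contra! hno
  refine hinf (((wordsLE D n).finite_toSet.image c).subset
    ((hcode.levelComp_inter_treePlus_subset hG hac).trans (image_mono fun m hm => ?_)))
  by_contra hmn
  have hmn : n < m.length := by simpa using hmn
  exact hno (m.drop (m.length - n)) (by simp; omega)
    fun m' hm' => hm m' (hm'.trans (List.drop_suffix _ m))

end LevelSets

/-! ### The Gaussian free field along the words -/

section TreeField

variable {Ω : Type*} [MeasurableSpace Ω] {D k : ℕ} {P : Measure Ω} {X : List (Fin D) → Ω → ℝ}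
  {h θ : ℝ} {ψ : ℝ → ℝ}

/-- The Green function of the `(D + 1)`-regular tree, in terms of the words that code vertices. -/
noncomputable def treeCov (D : ℕ) (l m : List (Fin D)) : ℝ :=
  D / (D - 1) * (D : ℝ)⁻¹ ^ wordDist l m

lemma treeCov_self (l : List (Fin D)) : treeCov D l l = D / (D - 1) := by
  simp [treeCov, wordDist_self]

lemma treeCov_cons_left {l m : List (Fin D)} {i : Fin D} (hm : m.length ≤ l.length + 1)
    (hne : m ≠ i :: l) : treeCov D (i :: l) m = (D : ℝ)⁻¹ * treeCov D l m := by
  rw [treeCov, treeCov, wordDist_cons_left hm hne, pow_succ]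
  ring

lemma treeCov_cons_right {l m : List (Fin D)} {i : Fin D} (hm : m.length ≤ l.length + 1)
    (hne : m ≠ i :: l) : treeCov D m (i :: l) = (D : ℝ)⁻¹ * treeCov D m l := by
  simpa only [treeCov, wordDist_comm m] using treeCov_cons_left hm hne

/-- `X` has the law of the Gaussian free field on the part of the `(D + 1)`-regular tree coded by
words. -/
structure IsTreeField (D : ℕ) (P : Measure Ω) (X : List (Fin D) → Ω → ℝ) : Prop where
  isGaussianProcess : IsGaussianProcess X P
  measurable : ∀ l, Measurable (X l)
  integral_eq_zero : ∀ l, ∫ ω, X l ω ∂P = 0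
  covariance_eq : ∀ l m, covariance (X l) (X m) P = treeCov D l m

/-- The law of the field at the root. -/
noncomputable abbrev rootLaw (D : ℕ) : Measure ℝ := gaussianReal 0 (Real.toNNReal (D / (D - 1)))

/-- The law of the difference between the field at a vertex and its conditional expectation given
the field at the parent. -/
noncomputable abbrev incrementLaw (D : ℕ) : Measure ℝ :=
  gaussianReal 0 (Real.toNNReal ((D + 1) / D))

/-- The part of the field at `m` which is independent of the field at the parent `m.tail`. -/
noncomputable def increment (X : List (Fin D) → Ω → ℝ) (m : List (Fin D)) (ω : Ω) : ℝ :=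
  X m ω - (D : ℝ)⁻¹ * X m.tail ω

lemma exists_eq_cons_of_mem_words {m : List (Fin D)} (hm : m ∈ words D (k + 1)) :
    ∃ i p, m = i :: p ∧ p.length = k := by
  rw [mem_words] at hm
  rcases m with _ | ⟨i, p⟩
  · simp at hm
  · exact ⟨i, p, rfl, by simpa using hm⟩

namespace IsTreeField

lemma memLp_two (hX : IsTreeField D P X) (l : List (Fin D)) : MemLp (X l) 2 P :=
  (hX.isGaussianProcess.hasGaussianLaw_eval l).memLp_two

lemma map_root (hX : IsTreeField D P X) : P.map (X []) = rootLaw D := by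
  rw [(hX.isGaussianProcess.hasGaussianLaw_eval []).map_eq_gaussianReal, hX.integral_eq_zero,
    ← covariance_self (hX.measurable []).aemeasurable, hX.covariance_eq, treeCov_self]

lemma measurable_increment (hX : IsTreeField D P X) (m : List (Fin D)) :
    Measurable (increment X m) :=
  (hX.measurable m).sub ((hX.measurable m.tail).const_mul _)

lemma memLp_two_increment (hX : IsTreeField D P X) (m : List (Fin D)) :
    MemLp (increment X m) 2 P :=
  (hX.memLp_two m).sub ((hX.memLp_two m.tail).const_mul _)

lemma integral_increment (hX : IsTreeField D P X) (m : List (Fin D)) :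
    ∫ ω, increment X m ω ∂P = 0 := by
  have := hX.isGaussianProcess.isProbabilityMeasure
  have hint (l : List (Fin D)) : Integrable (X l) P := (hX.memLp_two l).integrable (by simp)
  simp only [increment]
  rw [integral_sub (hint _) ((hint _).const_mul _), integral_const_mul, hX.integral_eq_zero,
    hX.integral_eq_zero, mul_zero, sub_zero]

lemma covariance_increment_right (hX : IsTreeField D P X) {Z : Ω → ℝ} (hZ : MemLp Z 2 P)
    (m : List (Fin D)) : covariance Z (increment X m) P =
      covariance Z (X m) P - (D : ℝ)⁻¹ * covariance Z (X m.tail) P := by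
  have := hX.isGaussianProcess.isProbabilityMeasure
  have hsub := covariance_fun_sub_right hZ (hX.memLp_two m)
    ((hX.memLp_two m.tail).const_mul (D : ℝ)⁻¹)
  rwa [covariance_const_mul_right] at hsub

lemma covariance_apply_increment (hX : IsTreeField D P X) {l p : List (Fin D)} {i : Fin D}
    (hl : l.length ≤ p.length + 1) (hne : l ≠ i :: p) :
    covariance (X l) (increment X (i :: p)) P = 0 := by
  rw [hX.covariance_increment_right (hX.memLp_two l), hX.covariance_eq, hX.covariance_eq,
    treeCov_cons_right hl hne, List.tail_cons, sub_self]

lemma covariance_increment_increment (hX : IsTreeField D P X) {q p : List (Fin D)} {j i : Fin D}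
    (hq : q.length = p.length) (hne : j :: q ≠ i :: p) :
    covariance (increment X (j :: q)) (increment X (i :: p)) P = 0 := by
  rw [covariance_comm, hX.covariance_increment_right (hX.memLp_two_increment _),
    covariance_comm, hX.covariance_apply_increment (by simp [hq]) hne, List.tail_cons,
    covariance_comm, hX.covariance_apply_increment (by omega) fun e => by simp [e] at hq,
    mul_zero, sub_zero]

lemma variance_increment (hX : IsTreeField D P X) (hD : 2 ≤ D) (i : Fin D) (p : List (Fin D)) :
    variance (increment X (i :: p)) P = (D + 1) / D := by
  have hD' : (2 : ℝ) ≤ D := by exact_mod_cast hD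
  have hne : p ≠ i :: p := fun e => by simpa using congrArg List.length e
  rw [← covariance_self (hX.measurable_increment _).aemeasurable,
    hX.covariance_increment_right (hX.memLp_two_increment _), List.tail_cons,
    covariance_comm _ (X p), hX.covariance_apply_increment (by omega) hne, covariance_comm,
    hX.covariance_increment_right (hX.memLp_two _), List.tail_cons, hX.covariance_eq,
    hX.covariance_eq,
    treeCov_cons_left (by omega) hne, treeCov_self, treeCov_self]
  have : (D : ℝ) - 1 ≠ 0 := by linarith
  have : (D : ℝ) ≠ 0 := by linarith
  field_simp
  ring

lemma map_increment (hX : IsTreeField D P X) (hD : 2 ≤ D) {m : List (Fin D)}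
    (hm : m ∈ words D (k + 1)) (hlaw : HasGaussianLaw (increment X m) P) :
    P.map (increment X m) = incrementLaw D := by
  obtain ⟨i, p, rfl, -⟩ := exists_eq_cons_of_mem_words hm
  rw [hlaw.map_eq_gaussianReal, hX.integral_increment, hX.variance_increment hD]

lemma isGaussianProcess_sumElim_increment (hX : IsTreeField D P X) :
    IsGaussianProcess (Sum.elim X (increment X)) P := by
  refine hX.isGaussianProcess.of_isGaussianProcess fun s => ?_
  rcases s with l | m
  · exact ⟨{l}, ContinuousLinearMap.proj ⟨l, by simp⟩, fun ω => rfl⟩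
  · exact ⟨{m, m.tail}, ContinuousLinearMap.proj ⟨m, by simp⟩ -
      (D : ℝ)⁻¹ • ContinuousLinearMap.proj ⟨m.tail, by simp⟩, fun ω => rfl⟩

lemma map_prodMk_increment (hX : IsTreeField D P X) (hD : 2 ≤ D) (k : ℕ) :
    P.map (fun ω => (fun l : wordsLE D k => X l ω, fun m : words D (k + 1) => increment X m ω)) =
      (P.map fun ω (l : wordsLE D k) => X l ω).prod (.pi fun _ => incrementLaw D) := by
  have := hX.isGaussianProcess.isProbabilityMeasure
  have hproc : IsGaussianProcess (Sum.elim (fun l : wordsLE D k => X l)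
      fun m : words D (k + 1) => increment X m) P := by
    convert! hX.isGaussianProcess_sumElim_increment.comp_right
      (Sum.map ((↑) : wordsLE D k → _) ((↑) : words D (k + 1) → _)) using 1
    ext (l | m) <;> rfl
  have hlaw := (hX.isGaussianProcess_sumElim_increment.comp_right Sum.inr).hasGaussianLaw
    (words D (k + 1))
  have hindep := hproc.indepFun_of_covariance_eq_zero (fun l => (hX.measurable l).aemeasurable)
    (fun m => (hX.measurable_increment m).aemeasurable) fun l m => by
      obtain ⟨i, p, hm, hp⟩ := exists_eq_cons_of_mem_words m.2
      have hl := mem_wordsLE.1 l.2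
      rw [hm]
      exact hX.covariance_apply_increment (by omega) fun e => by
        rw [e, List.length_cons] at hl
        omega
  have hiIndep : iIndepFun (fun m : words D (k + 1) => increment X m) P := by
    refine HasGaussianLaw.iIndepFun_of_covariance_eq_zero hlaw fun m m' hne => ?_
    obtain ⟨i, p, hm, hp⟩ := exists_eq_cons_of_mem_words m.2
    obtain ⟨i', p', hm', hp'⟩ := exists_eq_cons_of_mem_words m'.2
    have hne' : (m : List (Fin D)) ≠ m' := fun e => hne (Subtype.ext e)
    rw [hm, hm'] at hne' ⊢
    exact hX.covariance_increment_increment (hp.trans hp'.symm) hne'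
  have hUm : Measurable fun ω (l : wordsLE D k) => X l ω :=
    measurable_pi_lambda _ fun l => hX.measurable l
  have hYm : Measurable fun ω (m : words D (k + 1)) => increment X m ω :=
    measurable_pi_lambda _ fun m => hX.measurable_increment m
  rw [(indepFun_iff_map_prod_eq_prod_map_map hUm.aemeasurable hYm.aemeasurable).1 hindep,
    (iIndepFun_iff_map_fun_eq_pi_map fun m : words D (k + 1) =>
      (hX.measurable_increment m).aemeasurable).1 hiIndep]
  congr 2
  exact funext fun m => hX.map_increment hD m.2 (hlaw.eval m)

end IsTreeField

/-- The function equal to `u` on words of length at most `k`, and to `0` on longer words. -/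
noncomputable def extendZero (u : wordsLE D k → ℝ) : List (Fin D) → ℝ :=
  Function.extend Subtype.val u 0

lemma extendZero_apply {η : List (Fin D) → ℝ} {l : List (Fin D)} (hl : l.length ≤ k) :
    extendZero (fun m : wordsLE D k => η m) l = η l :=
  Subtype.val_injective.extend_apply (fun m : wordsLE D k => η m) 0 ⟨l, mem_wordsLE.2 hl⟩

lemma alive_extendZero {η : List (Fin D) → ℝ} {l : List (Fin D)} (hl : l.length ≤ k) :
    Alive h (extendZero fun m : wordsLE D k => η m) l ↔ Alive h η l :=
  alive_congr fun _ hm => extendZero_apply (hm.trans hl)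

lemma measurable_extendZero : Measurable (extendZero : (wordsLE D k → ℝ) → List (Fin D) → ℝ) := by
  refine measurable_pi_lambda _ fun l => ?_
  by_cases hl : l ∈ wordsLE D k
  · convert measurable_pi_apply (⟨l, hl⟩ : wordsLE D k) using 2 with u
    exact Subtype.val_injective.extend_apply u 0 ⟨l, hl⟩
  · have hnotin : ¬∃ m : wordsLE D k, m = l := fun ⟨m, hm⟩ => hl (hm ▸ m.2)
    simp only [extendZero, Function.extend_apply' _ _ l hnotin]
    exact measurable_const

lemma measurableSet_alive (h : ℝ) (l : List (Fin D)) : MeasurableSet {η | Alive h η l} := by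
  induction l with
  | nil =>
    simp only [alive_nil]
    exact measurableSet_le measurable_const (measurable_pi_apply _)
  | cons i l ih =>
    simp only [alive_cons]
    exact (measurableSet_le measurable_const (measurable_pi_apply _)).inter ih

lemma measurable_aliveCount (k : ℕ) (h : ℝ) :
    Measurable (aliveCount k h : (List (Fin D) → ℝ) → ℕ) := by
  have hsum : (aliveCount k h : (List (Fin D) → ℝ) → ℕ) =
      fun η => ∑ m ∈ words D k, if Alive h η m then 1 else 0 := by
    ext η; simp [aliveCount]
  rw [hsum]
  exact Finset.measurable_fun_sum _ fun m _ =>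
    .ite (measurableSet_alive h m) measurable_const measurable_const

/-- If each particle alive in generation `k` is selected independently with probability `ψ` of its
value, then `survProd k h ψ η` is the conditional probability given `η` that none is selected. -/
noncomputable def survProd (k : ℕ) (h : ℝ) (ψ : ℝ → ℝ) (η : List (Fin D) → ℝ) : ℝ :=
  ∏ m ∈ words D k, (1 - if Alive h η m then ψ (η m) else 0)

lemma survProd_zero {η : List (Fin D) → ℝ} (hψ : ∀ a < h, ψ a = 0) :
    survProd 0 h ψ η = 1 - ψ (η []) := by
  rw [survProd, words_zero, Finset.prod_singleton, alive_nil, ite_eq_left_iff.2]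
  exact fun ha => (hψ _ (lt_of_not_ge ha)).symm

lemma survProd_levelStep (k : ℕ) (h θ : ℝ) (η : List (Fin D) → ℝ) :
    survProd k h (levelStep h θ) η = (1 - θ) ^ aliveCount k h η := by
  rw [survProd, aliveCount, ← Finset.prod_const, Finset.prod_filter]
  refine Finset.prod_congr rfl fun m _ => ?_
  split_ifs with ha
  · rw [levelStep, indicator_of_mem (mem_Ici.2 (ha m List.suffix_rfl))]
  · rw [sub_zero]

lemma survProd_congr {η η' : List (Fin D) → ℝ}
    (hη : ∀ m : List (Fin D), m.length ≤ k → η m = η' m) :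
    survProd k h ψ η = survProd k h ψ η' := by
  refine Finset.prod_congr rfl fun m hm => ?_
  have hm := (mem_words.1 hm).le
  rw [alive_congr fun l hl => hη l (hl.trans hm), hη m hm]

lemma integral_prod_eq_integral_prod_integral {ι S E : Type*} [Fintype ι] [MeasurableSpace S]
    [MeasurableSpace E] [IsProbabilityMeasure P] {U : Ω → S} {Y : ι → Ω → E} {ν : ι → Measure E}
    [∀ i, IsProbabilityMeasure (ν i)] (hU : Measurable U) (hY : ∀ i, Measurable (Y i))
    (hmap : P.map (fun ω => (U ω, fun i => Y i ω)) = (P.map U).prod (.pi ν))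
    {f : ι → S → E → ℝ} (hf : ∀ i, Measurable (f i).uncurry) (hf_le : ∀ i s y, ‖f i s y‖ ≤ 1) :
    ∫ ω, ∏ i, f i (U ω) (Y i ω) ∂P = ∫ ω, ∏ i, ∫ y, f i (U ω) y ∂ν i ∂P := by
  have := Measure.isProbabilityMeasure_map (μ := P) hU.aemeasurable
  let F : S × (ι → E) → ℝ := fun z => ∏ i, f i z.1 (z.2 i)
  have hF : Measurable F := Finset.measurable_fun_prod _ fun i _ =>
    (hf i).comp (measurable_fst.prodMk ((measurable_pi_apply i).comp measurable_snd))
  have hF_le (z : S × (ι → E)) : ‖F z‖ ≤ 1 := by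
    rw [norm_prod]
    exact Finset.prod_le_one (fun _ _ => norm_nonneg _) fun i _ => hf_le i _ _
  have hint : Measurable fun s => ∏ i, ∫ y, f i s y ∂ν i := Finset.measurable_fun_prod _ fun i _ =>
    ((hf i).stronglyMeasurable.integral_prod_right).measurable
  calc ∫ ω, F (U ω, fun i => Y i ω) ∂P
      = ∫ z, F z ∂(P.map U).prod (.pi ν) := by
        rw [← hmap, integral_map (hU.prodMk (measurable_pi_lambda _ hY)).aemeasurable
          hF.aestronglyMeasurable]
    _ = ∫ s, ∏ i, ∫ y, f i s y ∂ν i ∂P.map U := by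
        rw [integral_prod _ (.of_bound hF.aestronglyMeasurable 1 (.of_forall hF_le))]
        exact integral_congr_ae (.of_forall fun s => integral_fintype_prod_eq_prod fun i => f i s)
    _ = _ := integral_map hU.aemeasurable hint.aestronglyMeasurable

namespace IsTreeField

lemma measurable_eval (hX : IsTreeField D P X) : Measurable fun ω l => X l ω :=
  measurable_pi_lambda _ hX.measurable

lemma survProd_succ_eq {Ω : Type*} {X : List (Fin D) → Ω → ℝ} (hψ : ∀ a < h, ψ a = 0) (ω : Ω) :
    survProd (k + 1) h ψ (X · ω) = ∏ m : words D (k + 1),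
      (1 - if Alive h (extendZero fun l : wordsLE D k => X l ω) m.1.tail then
        ψ (extendZero (fun l : wordsLE D k => X l ω) m.1.tail / D + increment X m ω) else 0) := by
  rw [survProd, ← Finset.prod_coe_sort]
  refine Finset.prod_congr rfl fun m _ => ?_
  obtain ⟨i, p, hm, hp⟩ := exists_eq_cons_of_mem_words m.2
  have hval : X p ω / D + increment X (i :: p) ω = X (i :: p) ω := by
    simp only [increment, List.tail_cons]; ring
  rw [hm, List.tail_cons, alive_extendZero (η := (X · ω)) hp.le,
    extendZero_apply (η := (X · ω)) hp.le, hval, alive_cons]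
  by_cases ha : h ≤ X (i :: p) ω
  · simp [ha]
  · simp [ha, hψ _ (lt_of_not_ge ha)]

lemma prod_integral_child (hψ : IsProfile 1 ψ) (η : List (Fin D) → ℝ) :
    ∏ m : words D (k + 1), ∫ y, (1 - if Alive h η m.1.tail then ψ (η m.1.tail / D + y) else 0)
      ∂incrementLaw D = survProd k h (branchOp (incrementLaw D) D (unionProb D) h ψ) η := by
  rw [Finset.prod_coe_sort (words D (k + 1)) fun m => ∫ y, (1 - if Alive h η m.tail then
    ψ (η m.tail / D + y) else 0) ∂incrementLaw D, prod_words_succ]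
  refine Finset.prod_congr rfl fun l _ => ?_
  by_cases ha : Alive h η l
  · simp only [List.tail_cons, ha, if_true]
    rw [integral_sub (integrable_const _) (hψ.comp_add_left _).integrable,
      branchOp_of_le (ha l List.suffix_rfl)]
    simp [unionProb, childAvg]
  · simp [ha]

lemma integral_survProd_succ (hX : IsTreeField D P X) (hD : 2 ≤ D) (hψ : IsProfile 1 ψ)
    (hψh : ∀ a < h, ψ a = 0) (k : ℕ) :
    ∫ ω, survProd (k + 1) h ψ (X · ω) ∂P =
      ∫ ω, survProd k h (branchOp (incrementLaw D) D (unionProb D) h ψ) (X · ω) ∂P := by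
  have := hX.isGaussianProcess.isProbabilityMeasure
  simp only [survProd_succ_eq hψh]
  rw [integral_prod_eq_integral_prod_integral (U := fun ω (l : wordsLE D k) => X l ω)
    (Y := fun (m : words D (k + 1)) => increment X m)
    (f := fun (m : words D (k + 1)) u y => 1 - if Alive h (extendZero u) m.1.tail then
      ψ (extendZero u m.1.tail / D + y) else 0)
    (measurable_pi_lambda _ fun l => hX.measurable l) (fun m => hX.measurable_increment m)
    (hX.map_prodMk_increment hD k)]
  · refine integral_congr_ae (.of_forall fun ω => ?_)
    exact (prod_integral_child hψ _).trans (survProd_congr fun m hm =>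
      extendZero_apply (η := (X · ω)) hm)
  · have heval (l : List (Fin D)) : Measurable fun u : wordsLE D k → ℝ => extendZero u l :=
      (measurable_pi_apply l).comp measurable_extendZero
    refine fun m => measurable_const.sub (.ite ?_ (hψ.mono.measurable.comp ?_) measurable_const)
    · exact measurable_fst (measurable_extendZero (measurableSet_alive h m.1.tail))
    · exact (((heval _).comp measurable_fst).div_const _).add measurable_snd
  · intro m u y
    have hmem := hψ.mem_Icc (extendZero u m.1.tail / D + y)
    split_ifs
    · rw [Real.norm_of_nonneg (by linarith [hmem.2])]
      linarith [hmem.1]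
    · simp

lemma integral_iterate_branchOp (hX : IsTreeField D P X) (hD : 2 ≤ D) (n : ℕ)
    (hψ : IsProfile 1 ψ) (hψh : ∀ a < h, ψ a = 0) :
    ∫ a, (branchOp (incrementLaw D) D (unionProb D) h)^[n] ψ a ∂rootLaw D =
      1 - ∫ ω, survProd n h ψ (X · ω) ∂P := by
  have := hX.isGaussianProcess.isProbabilityMeasure
  induction n generalizing ψ with
  | zero =>
    have hmeas := hψ.mono.measurable
    have hint : Integrable (fun ω => ψ (X [] ω)) P :=
      .of_bound (hmeas.comp (hX.measurable [])).aestronglyMeasurable 1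
        (.of_forall fun ω => hψ.norm_le _)
    simp only [survProd_zero hψh, Function.iterate_zero, id]
    rw [integral_sub (integrable_const _) hint, ← hX.map_root,
      integral_map (hX.measurable []).aemeasurable hmeas.aestronglyMeasurable]
    simp
  | succ n ih =>
    rw [Function.iterate_succ, Function.comp_apply, hX.integral_survProd_succ hD hψ hψh]
    exact ih (hψ.iterate_survOp h 1) fun a ha => branchOp_of_lt ha

lemma integral_survIter_eq (hX : IsTreeField D P X) (hD : 2 ≤ D) (hθ : θ ∈ Icc (0 : ℝ) 1) (h : ℝ)
    (n : ℕ) : ∫ a, survIter (incrementLaw D) D h θ n a ∂rootLaw D =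
      1 - ∫ ω, (1 - θ) ^ aliveCount n h (X · ω) ∂P := by
  simp only [← survProd_levelStep]
  exact hX.integral_iterate_branchOp hD n ((isProfile_levelStep hθ.1).weaken hθ.2) fun a ha =>
    indicator_of_notMem (notMem_Ici.2 ha) _

end IsTreeField

lemma integral_zero_pow_eq [IsProbabilityMeasure P] {Z : Ω → ℕ} (hZ : Measurable Z) :
    ∫ ω, (0 : ℝ) ^ Z ω ∂P = 1 - P.real {ω | 1 ≤ Z ω} := by
  have hset : MeasurableSet {ω | 1 ≤ Z ω} := measurableSet_le measurable_const hZ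
  have hcompl : ∀ ω, (0 : ℝ) ^ Z ω = {ω | 1 ≤ Z ω}ᶜ.indicator (fun _ => 1) ω := fun ω => by
    rcases Nat.eq_zero_or_pos (Z ω) with h0 | h0
    · simp [h0]
    · rw [zero_pow h0.ne', indicator_of_notMem (not_not.2 h0)]
  simp only [hcompl]
  rw [integral_indicator_const _ hset.compl, probReal_compl_eq_one_sub hset, smul_eq_mul, mul_one]

lemma one_sub_integral_pow_le [IsProbabilityMeasure P] {Z : Ω → ℕ} (hZ : Measurable Z)
    (hθ : θ ∈ Icc (0 : ℝ) 1) {M : ℝ} (hM : 0 ≤ M) :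
    1 - ∫ ω, (1 - θ) ^ Z ω ∂P ≤ P.real {ω | M ≤ Z ω} + θ * M := by
  have hset : MeasurableSet {ω | M ≤ Z ω} :=
    measurableSet_le measurable_const (measurable_from_top.comp hZ)
  have hpow : Integrable (fun ω => (1 - θ) ^ Z ω) P := by
    refine .of_bound (measurable_from_top.comp hZ).aestronglyMeasurable 1 (.of_forall fun ω => ?_)
    rw [Real.norm_of_nonneg (pow_nonneg (sub_nonneg.2 hθ.2) _)]
    exact pow_le_one₀ (sub_nonneg.2 hθ.2) (sub_le_self 1 hθ.1)
  have hind : Integrable ({ω | M ≤ (Z ω : ℝ)}.indicator fun _ => (1 : ℝ)) P :=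
    (integrable_const 1).indicator hset
  have hle (ω : Ω) : 1 - (1 - θ) ^ Z ω ≤ {ω | M ≤ (Z ω : ℝ)}.indicator (fun _ => 1) ω + θ * M := by
    by_cases hz : M ≤ Z ω
    · rw [indicator_of_mem (by exact hz)]
      linarith [pow_nonneg (sub_nonneg.2 hθ.2) (Z ω), mul_nonneg hθ.1 hM]
    · rw [indicator_of_notMem (by exact hz)]
      have bernoulli := one_add_mul_le_pow (a := -θ) (by linarith [hθ.2]) (Z ω)
      rw [← sub_eq_add_neg] at bernoulli
      linarith [mul_le_mul_of_nonneg_left (not_le.1 hz).le hθ.1]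
  have hmono := integral_mono ((integrable_const 1).sub hpow) (hind.add (integrable_const _)) hle
  simpa [integral_sub (integrable_const 1) hpow, integral_add hind (integrable_const _),
    integral_indicator_const _ hset] using hmono

lemma gaussianReal_Ici_pos {m : ℝ} {v : ℝ≥0} (hv : v ≠ 0) (K : ℝ) :
    0 < gaussianReal m v (Ici K) := by
  refine pos_iff_ne_zero.2 fun h0 => ?_
  have := gaussianReal_absolutelyContinuous' m hv h0
  simp at this

/-- If few particles were alive, selecting each of them with probability `θ * (2 / 3) ^ i` would
most likely miss them all. -/
lemma IsTreeField.exists_level_forall_le_aliveCount (hX : IsTreeField D P X) (hD : 2 ≤ D)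
    {η η' : ℝ} (hη : 0 < η) (hη' : η' < η)
    (hsurv : ∀ n, η ≤ P.real {ω | 1 ≤ aliveCount n h (X · ω)}) :
    ∃ h₁ > h, ∃ j ≥ 1, ∃ n₀, ∃ δ > 0, ∀ i : ℕ,
      η' ≤ P.real {ω | δ * (3 / 2 : ℝ) ^ i ≤ aliveCount (n₀ + j * i) h₁ (X · ω)} := by
  have := hX.isGaussianProcess.isProbabilityMeasure
  have hD' : (2 : ℝ) ≤ D := by exact_mod_cast hD
  have hinc : Real.toNNReal (((D : ℝ) + 1) / D) ≠ 0 :=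
    (Real.toNNReal_pos.2 (by positivity)).ne'
  have hroot : Real.toNNReal ((D : ℝ) / (D - 1)) ≠ 0 :=
    (Real.toNNReal_pos.2 (div_pos (by linarith) (by linarith))).ne'
  have := nullSingletonClass_gaussianReal (μ := 0) hinc
  have := nullSingletonClass_gaussianReal (μ := 0) hroot
  have hmeas (n : ℕ) (a : ℝ) : Measurable fun ω => aliveCount n a (X · ω) :=
    (measurable_aliveCount n a).comp hX.measurable_eval
  obtain ⟨h₁, hh₁, j, hj, n₀, θ, hθ, hgrowth⟩ := exists_level_forall_lt_integral_survIter
    (γ₀ := rootLaw D) (h := h) hD (gaussianReal_Ici_pos hinc) hη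
    (show (η + η') / 2 < η by linarith) fun n => by
      rw [hX.integral_survIter_eq hD ⟨zero_le_one, le_rfl⟩, sub_self,
        integral_zero_pow_eq (hmeas n h), sub_sub_cancel]
      exact hsurv n
  refine ⟨h₁, hh₁, j, hj, n₀, (η - η') / 2 / θ,
    div_pos (half_pos (sub_pos.2 hη')) hθ.1, fun i => ?_⟩
  have hθi : θ * (2 / 3 : ℝ) ^ i ∈ Icc (0 : ℝ) 1 := ⟨mul_nonneg hθ.1.le (by positivity),
    mul_le_one₀ hθ.2 (by positivity) (pow_le_one₀ (by norm_num) (by norm_num))⟩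
  have hgrowth := hgrowth i
  rw [hX.integral_survIter_eq hD hθi] at hgrowth
  have hmarkov := one_sub_integral_pow_le (P := P) (hmeas (n₀ + j * i) h₁) hθi
    (M := (η - η') / 2 / θ * (3 / 2 : ℝ) ^ i)
    (mul_nonneg (div_nonneg (by linarith) hθ.1.le) (by positivity))
  have hprod : θ * (2 / 3 : ℝ) ^ i * ((η - η') / 2 / θ * (3 / 2 : ℝ) ^ i) = (η - η') / 2 := by
    have hpow : (2 / 3 : ℝ) ^ i * (3 / 2 : ℝ) ^ i = 1 := by rw [← mul_pow]; norm_num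
    rw [mul_mul_mul_comm, hpow, mul_one, mul_div_cancel₀ _ hθ.1.ne']
  linarith

end TreeField

section RegularTree

variable {D : ℕ} {T : Type*} {Gt : SimpleGraph T} {o obar x x' : T} {μT : Measure (T → ℝ)}
  {c : List (Fin D) → T}

lemma treeGreen_succ (G : SimpleGraph T) (D : ℕ) (x y : T) :
    treeGreen G (D + 1) x y = D / (D - 1) * (D : ℝ)⁻¹ ^ G.dist x y := by
  rw [treeGreen]
  push_cast
  ring_nf

lemma treeGreen_nonneg (hD : 1 ≤ D) (x y : T) : 0 ≤ treeGreen Gt (D + 1) x y := by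
  have hD' : (1 : ℝ) ≤ D := by exact_mod_cast hD
  rw [treeGreen_succ]
  exact mul_nonneg (div_nonneg (by linarith) (by linarith)) (by positivity)

lemma IsTreeCode.treeGreen_apply (hcode : IsTreeCode Gt x x' c) (hG : Gt.Connected)
    (hac : Gt.IsAcyclic) (l m : List (Fin D)) :
    treeGreen Gt (D + 1) (c l) (c m) = treeCov D l m := by
  rw [treeGreen_succ, treeCov, hcode.dist_eq_wordDist hG (uniquePaths_of_isAcyclic hac univ)
    (r := max l.length m.length) (fun _ _ => mem_univ _) (le_max_left _ _) (le_max_right _ _)]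

lemma IsGaussianField.isTreeField (hμT : IsGaussianField μT (treeGreen Gt (D + 1))) (hD : 1 ≤ D)
    (hcode : IsTreeCode Gt x x' c) (hG : Gt.Connected) (hac : Gt.IsAcyclic) :
    IsTreeField D μT fun l ω => ω (c l) := by
  have hpos := treeGreen_nonneg (Gt := Gt) hD
  have hvector {ι : Type _} [Finite ι] (e : ι → List (Fin D)) :=
    hμT.isGaussianVector (fun i j => by rw [treeGreen, treeGreen, SimpleGraph.dist_comm])
      (fun i => hpos i i) (fun i j => by linarith [hpos i i, hpos j j, hpos i j]) (c ∘ e)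
  refine ⟨⟨fun I => (hvector fun i : I => i).hasGaussianLaw⟩, fun l => measurable_pi_apply _,
    fun l => (hvector fun _ : Unit => l).integral_eq_zero (), fun l m => ?_⟩
  exact ((hvector fun b : Bool => if b then l else m).covariance_eq true false).trans
    (hcode.treeGreen_apply hG hac l m)

lemma IsTreeCode.etaPlus_le (hcode : IsTreeCode Gt o obar c) (hG : Gt.Connected)
    (hac : Gt.IsAcyclic) [IsFiniteMeasure μT] (h : ℝ) (n : ℕ) :
    etaPlus Gt o obar μT h ≤ μT.real {ω | 1 ≤ aliveCount n h fun l => ω (c l)} := by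
  rw [etaPlus, ← measureReal_def]
  refine measureReal_mono fun ω hω => ?_
  obtain ⟨l, hl, halive⟩ := hcode.exists_alive_length_eq hG hac hω n
  exact Finset.card_pos.2 ⟨l, Finset.mem_filter.2 ⟨mem_words.2 hl, halive⟩⟩

end RegularTree

/-! ### The zero-average Green function -/

section ZeroAverageGreen

open scoped Matrix

variable {V : Type*} [Fintype V] {G : SimpleGraph V} {d N : ℕ} {β : ℝ} {b : V → V → ℝ}
  {lam : V → ℝ}

/-- The generator `I - P` of simple random walk on a `d`-regular graph. -/
noncomputable def walkLaplacian (G : SimpleGraph V) (d : ℕ) : Matrix V V ℝ := 1 - transP G d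

lemma isHermitian_walkLaplacian (G : SimpleGraph V) (d : ℕ) : (walkLaplacian G d).IsHermitian := by
  refine Matrix.isHermitian_one.sub ?_
  ext x y
  simp [transP, G.adj_comm]

lemma sum_adj_eq (hreg : IsReg G d) (x : V) : ∑ y, (if G.Adj x y then (1 : ℝ) else 0) = d := by
  rw [Finset.sum_boole, ← hreg x, Nat.card_eq_fintype_card, Fintype.card_subtype]
  rfl

lemma walkLaplacian_mulVec_apply (f : V → ℝ) (x : V) :
    (walkLaplacian G d *ᵥ f) x = f x - (∑ y, if G.Adj x y then f y else 0) / d := by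
  rw [walkLaplacian, Matrix.sub_mulVec, Matrix.one_mulVec, Pi.sub_apply, Finset.sum_div]
  congr 1
  refine Finset.sum_congr rfl fun y _ => ?_
  change (if G.Adj x y then (d : ℝ)⁻¹ else 0) * f y = _
  split_ifs <;> simp [div_eq_inv_mul]

lemma walkLaplacian_mulVec_one (hd : d ≠ 0) (hreg : IsReg G d) :
    walkLaplacian G d *ᵥ (fun _ => 1) = 0 := by
  ext x
  rw [walkLaplacian_mulVec_apply, sum_adj_eq hreg, div_self (Nat.cast_ne_zero.2 hd), sub_self,
    Pi.zero_apply]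

lemma dotProduct_walkLaplacian_mulVec (f g : V → ℝ) :
    f ⬝ᵥ walkLaplacian G d *ᵥ g = (walkLaplacian G d *ᵥ f) ⬝ᵥ g := by
  rw [Matrix.dotProduct_mulVec, ← Matrix.mulVec_transpose,
    ← Matrix.conjTranspose_eq_transpose_of_trivial, (isHermitian_walkLaplacian G d).eq]

lemma apply_eq_of_walkLaplacian_mulVec_eq_zero (hd : d ≠ 0) (hconn : G.Connected)
    (hreg : IsReg G d) {f : V → ℝ} (hf : walkLaplacian G d *ᵥ f = 0) (x y : V) : f x = f y := by
  have hd' : (d : ℝ) ≠ 0 := Nat.cast_ne_zero.2 hd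
  refine (G.lapMatrix_mulVec_eq_zero_iff_forall_reachable.1 ?_) x y (hconn.preconnected x y)
  ext z
  have hz := congrFun hf z
  rw [walkLaplacian_mulVec_apply, Pi.zero_apply, ← Finset.sum_filter,
    ← G.neighborFinset_eq_filter] at hz
  rw [G.lapMatrix_mulVec_apply, SimpleGraph.degree_eq_sum_if_adj, sum_adj_eq hreg, Pi.zero_apply]
  field_simp at hz
  linarith

/-- An orthonormal system `b` of eigenvectors of `I - P`, whose non-zero eigenvalues are at least
`β` and whose kernel consists of the constants (`1 / N` being the kernel of the projection onto
them). -/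
structure IsEigensystem (G : SimpleGraph V) (d : ℕ) (β : ℝ) (N : ℕ) (b : V → V → ℝ)
    (lam : V → ℝ) : Prop where
  sum_mul_eq : ∀ x y, ∑ i, b i x * b i y = if x = y then 1 else 0
  mulVec_eq : ∀ i, walkLaplacian G d *ᵥ b i = lam i • b i
  le_of_ne_zero : ∀ i, lam i ≠ 0 → β ≤ lam i
  sum_ker_eq : ∀ x y, ∑ i with lam i = 0, b i x * b i y = 1 / (N : ℝ)

lemma exists_eigenvectors (G : SimpleGraph V) (d : ℕ) : ∃ (b : V → V → ℝ) (lam : V → ℝ),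
    (∀ x y, ∑ i, b i x * b i y = if x = y then 1 else 0) ∧ (∀ i, b i ≠ 0) ∧
      ∀ i, walkLaplacian G d *ᵥ b i = lam i • b i := by
  have hA := isHermitian_walkLaplacian G d
  refine ⟨fun i => hA.eigenvectorBasis i, hA.eigenvalues, fun x y => ?_, fun i h0 => ?_,
    fun i => hA.mulVec_eigenvectorBasis i⟩
  · have hentry := congrFun (congrFun (Unitary.coe_mul_star_self hA.eigenvectorUnitary) x) y
    rw [Matrix.mul_apply] at hentry
    simpa [Matrix.star_apply, Matrix.one_apply] using hentry
  · exact hA.eigenvectorBasis.toBasis.ne_zero i (by ext x; simpa using congrFun h0 x)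

lemma exists_isEigensystem (hd : d ≠ 0) (hconn : G.Connected) (hreg : IsReg G d)
    (hgap : SpectralGapLB G d β) (hN : Nat.card V = N) : ∃ b lam, IsEigensystem G d β N b lam := by
  obtain ⟨b, lam, hortho, hne, heig⟩ := exists_eigenvectors G d
  refine ⟨b, lam, hortho, heig, fun i hi => (hgap _ _ (heig i) (hne i)).resolve_left hi,
    fun x y => ?_⟩
  have hconst (z : V) : ∑ i with lam i = 0, b i x * b i z = ∑ i with lam i = 0, b i x * b i y := by
    refine Finset.sum_congr rfl fun i hi => ?_
    have hker : walkLaplacian G d *ᵥ b i = 0 := by rw [heig, (Finset.mem_filter.1 hi).2, zero_smul]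
    rw [apply_eq_of_walkLaplacian_mulVec_eq_zero hd hconn hreg hker z y]
  have hmean (i : V) (hi : lam i ≠ 0) : ∑ z, b i z = 0 := by
    have hzero := dotProduct_walkLaplacian_mulVec (G := G) (d := d) (b i) fun _ => 1
    rw [walkLaplacian_mulVec_one hd hreg, heig, dotProduct_zero, smul_dotProduct] at hzero
    simpa [dotProduct, hi, eq_comm] using hzero
  have hsum : ∑ z, ∑ i with lam i = 0, b i x * b i z = 1 := by
    calc ∑ z, ∑ i with lam i = 0, b i x * b i z = ∑ i with lam i = 0, b i x * ∑ z, b i z := by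
          rw [Finset.sum_comm]; simp only [Finset.mul_sum]
      _ = ∑ i, b i x * ∑ z, b i z := by
          refine Finset.sum_filter_of_ne fun i _ => not_imp_comm.1 fun hi => ?_
          rw [hmean i hi, mul_zero]
      _ = ∑ z, ∑ i, b i x * b i z := by rw [Finset.sum_comm]; simp only [Finset.mul_sum]
      _ = 1 := by simp [hortho]
  rw [Finset.sum_congr rfl fun z _ => hconst z, Finset.sum_const, Finset.card_univ,
    ← Nat.card_eq_fintype_card, hN, nsmul_eq_mul] at hsum
  exact eq_one_div_of_mul_eq_one_right hsum

namespace IsEigensystem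

lemma pow_mulVec_eq (hb : IsEigensystem G d β N b lam) (k : ℕ) (i : V) :
    transP G d ^ k *ᵥ b i = (1 - lam i) ^ k • b i := by
  have hP : transP G d *ᵥ b i = (1 - lam i) • b i := by
    rw [sub_smul, one_smul, ← hb.mulVec_eq, walkLaplacian, Matrix.sub_mulVec, Matrix.one_mulVec,
      sub_sub_cancel]
  induction k with
  | zero => simp
  | succ k ih =>
    rw [_root_.pow_succ, ← Matrix.mulVec_mulVec, hP, Matrix.mulVec_smul, ih, smul_smul,
      _root_.pow_succ']

lemma pow_apply_eq (hb : IsEigensystem G d β N b lam) (k : ℕ) (x y : V) :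
    (transP G d ^ k) x y = ∑ i, (1 - lam i) ^ k * (b i x * b i y) := by
  have hterm (i : V) : (1 - lam i) ^ k * (b i x * b i y) =
      ∑ z, (transP G d ^ k) x z * (b i z * b i y) := by
    have hx := congrFun (hb.pow_mulVec_eq k i) x
    rw [Matrix.mulVec, dotProduct, Pi.smul_apply, smul_eq_mul] at hx
    rw [← mul_assoc, ← hx, Finset.sum_mul]
    simp only [mul_assoc]
  simp only [hterm]
  rw [Finset.sum_comm]
  simp [← Finset.mul_sum, hb.sum_mul_eq]

lemma heatK_eq (hb : IsEigensystem G d β N b lam) (t : ℝ) (x y : V) :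
    heatK G d t x y = ∑ i, Real.exp (-lam i * t) * (b i x * b i y) := by
  refine HasSum.tsum_eq ?_
  have hterm (i : V) : HasSum (fun k : ℕ => Real.exp (-t) * t ^ k / k.factorial *
      ((1 - lam i) ^ k * (b i x * b i y))) (Real.exp (-lam i * t) * (b i x * b i y)) := by
    have hexp := (NormedSpace.expSeries_div_hasSum_exp (t * (1 - lam i))).mul_left
      (Real.exp (-t) * (b i x * b i y))
    rw [← Real.exp_eq_exp_ℝ, mul_right_comm, ← Real.exp_add] at hexp
    rw [show -t + t * (1 - lam i) = -lam i * t by ring] at hexp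
    simpa only [div_eq_mul_inv, mul_pow, mul_assoc, mul_left_comm, mul_comm] using hexp
  convert hasSum_sum (s := Finset.univ) fun i _ => hterm i using 1
  ext k
  rw [hb.pow_apply_eq, Finset.mul_sum]

lemma heatK_sub_eq (hb : IsEigensystem G d β N b lam) (t : ℝ) (x y : V) :
    heatK G d t x y - 1 / N = ∑ i with lam i ≠ 0, Real.exp (-lam i * t) * (b i x * b i y) := by
  rw [hb.heatK_eq, ← hb.sum_ker_eq x y, sub_eq_iff_eq_add,
    ← Finset.sum_filter_not_add_sum_filter Finset.univ fun i => lam i = 0]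
  congr 1
  refine Finset.sum_congr rfl fun i hi => ?_
  simp [(Finset.mem_filter.1 hi).2]

lemma pos_of_mem (hb : IsEigensystem G d β N b lam) (hβ : 0 < β) {i : V}
    (hi : i ∈ Finset.univ.filter fun i => lam i ≠ 0) : 0 < lam i :=
  hβ.trans_le (hb.le_of_ne_zero i (Finset.mem_filter.1 hi).2)

lemma zGreen_eq (hb : IsEigensystem G d β N b lam) (hβ : 0 < β) (x y : V) :
    zGreen G d N x y = ∑ i with lam i ≠ 0, b i x * b i y / lam i := by
  simp only [zGreen, hb.heatK_sub_eq]
  rw [integral_finsetSum _ fun i hi =>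
    (integrableOn_exp_mul_Ioi (neg_lt_zero.2 (hb.pos_of_mem hβ hi)) 0).mul_const _]
  refine Finset.sum_congr rfl fun i hi => ?_
  rw [integral_mul_const, integral_exp_mul_Ioi (neg_lt_zero.2 (hb.pos_of_mem hβ hi))]
  simp
  ring

lemma zGreen_comm (hb : IsEigensystem G d β N b lam) (hβ : 0 < β) (x y : V) :
    zGreen G d N x y = zGreen G d N y x := by
  simp only [hb.zGreen_eq hβ, mul_comm (b _ x)]

lemma zGreen_self_nonneg (hb : IsEigensystem G d β N b lam) (hβ : 0 < β) (x : V) :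
    0 ≤ zGreen G d N x x := by
  rw [hb.zGreen_eq hβ]
  exact Finset.sum_nonneg fun i hi => div_nonneg (mul_self_nonneg _) (hb.pos_of_mem hβ hi).le

lemma zGreen_add_add_nonneg (hb : IsEigensystem G d β N b lam) (hβ : 0 < β) (x y : V) :
    0 ≤ zGreen G d N x x + zGreen G d N y y + 2 * zGreen G d N x y := by
  simp only [hb.zGreen_eq hβ]
  rw [Finset.mul_sum, ← Finset.sum_add_distrib, ← Finset.sum_add_distrib]
  refine Finset.sum_nonneg fun i hi => ?_
  have := div_nonneg (sq_nonneg (b i x + b i y)) (hb.pos_of_mem hβ hi).le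
  convert! this using 1
  ring

lemma sum_zGreen_mul (hb : IsEigensystem G d β N b lam) (hβ : 0 < β) (x : V) (f : V → ℝ) :
    ∑ y, zGreen G d N x y * f y = ∑ i with lam i ≠ 0, b i x * (b i ⬝ᵥ f) / lam i := by
  simp only [hb.zGreen_eq hβ, Finset.sum_mul, dotProduct, Finset.mul_sum, Finset.sum_div]
  rw [Finset.sum_comm]
  exact Finset.sum_congr rfl fun i _ => Finset.sum_congr rfl fun y _ => by ring

lemma sum_mul_dotProduct (hb : IsEigensystem G d β N b lam) (x : V) (f : V → ℝ) :
    ∑ i, b i x * (b i ⬝ᵥ f) = f x := by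
  simp only [dotProduct, Finset.mul_sum, ← mul_assoc]
  rw [Finset.sum_comm]
  simp [← Finset.sum_mul, hb.sum_mul_eq]

lemma sum_zGreen_mul_walkLaplacian (hb : IsEigensystem G d β N b lam) (hβ : 0 < β) (x : V)
    (f : V → ℝ) :
    ∑ y, zGreen G d N x y * (walkLaplacian G d *ᵥ f) y = f x - (∑ y, f y) / N := by
  have hterm (i : V) (hi : i ∈ Finset.univ.filter fun i => lam i ≠ 0) :
      b i x * (b i ⬝ᵥ walkLaplacian G d *ᵥ f) / lam i = b i x * (b i ⬝ᵥ f) := by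
    rw [dotProduct_walkLaplacian_mulVec, hb.mulVec_eq, smul_dotProduct, smul_eq_mul,
      mul_left_comm, mul_div_cancel_left₀ _ (Finset.mem_filter.1 hi).2]
  have hker : ∑ i with lam i = 0, b i x * (b i ⬝ᵥ f) = (∑ y, f y) / N := by
    simp only [dotProduct, Finset.mul_sum, ← mul_assoc]
    rw [Finset.sum_comm]
    simp only [← Finset.sum_mul, hb.sum_ker_eq, ← Finset.mul_sum]
    ring
  rw [hb.sum_zGreen_mul hβ, Finset.sum_congr rfl hterm, ← hker, ← hb.sum_mul_dotProduct x f,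
    ← Finset.sum_filter_not_add_sum_filter Finset.univ fun i => lam i = 0, add_sub_cancel_right]

lemma sum_dotProduct_sq (hb : IsEigensystem G d β N b lam) (f : V → ℝ) :
    ∑ i, (b i ⬝ᵥ f) ^ 2 = ∑ y, f y ^ 2 :=
  calc ∑ i, (b i ⬝ᵥ f) ^ 2 = ∑ y, f y * ∑ i, b i y * (b i ⬝ᵥ f) := by
        simp only [Finset.mul_sum]
        rw [Finset.sum_comm]
        refine Finset.sum_congr rfl fun i _ => ?_
        rw [sq, dotProduct, Finset.sum_mul]
        exact Finset.sum_congr rfl fun y _ => by ring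
    _ = ∑ y, f y ^ 2 := by simp only [hb.sum_mul_dotProduct, sq]

lemma abs_sum_zGreen_mul_le (hb : IsEigensystem G d β N b lam) (hβ : 0 < β) (x : V) (f : V → ℝ) :
    |∑ y, zGreen G d N x y * f y| ≤ √(∑ y, f y ^ 2) / β := by
  have hnorm : ∑ i, b i x ^ 2 = 1 := by simpa [sq] using hb.sum_mul_eq x x
  have hcauchy : ∑ i, |b i x| * |b i ⬝ᵥ f| ≤ √(∑ y, f y ^ 2) := by
    refine Real.le_sqrt_of_sq_le ((Finset.sum_mul_sq_le_sq_mul_sq _ _ _).trans_eq ?_)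
    simp only [sq_abs, hnorm, hb.sum_dotProduct_sq, one_mul]
  rw [hb.sum_zGreen_mul hβ]
  calc |∑ i with lam i ≠ 0, b i x * (b i ⬝ᵥ f) / lam i|
      ≤ ∑ i with lam i ≠ 0, |b i x| * |b i ⬝ᵥ f| / β := by
        refine (Finset.abs_sum_le_sum_abs _ _).trans (Finset.sum_le_sum fun i hi => ?_)
        rw [abs_div, abs_mul, abs_of_pos (hb.pos_of_mem hβ hi)]
        have := hb.le_of_ne_zero i (Finset.mem_filter.1 hi).2
        gcongr
    _ ≤ ∑ i, |b i x| * |b i ⬝ᵥ f| / β :=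
        Finset.sum_le_sum_of_subset_of_nonneg (Finset.filter_subset _ _) fun i _ _ => by positivity
    _ ≤ √(∑ y, f y ^ 2) / β := by
        rw [← Finset.sum_div]
        gcongr

end IsEigensystem

end ZeroAverageGreen

/-! ### Balls in a regular graph -/

section Balls

variable {V : Type*} {G : SimpleGraph V} {D : ℕ}

lemma exists_adj_dist_add_one_eq (hc : G.Connected) {x y : V} (h : y ≠ x) :
    ∃ a, G.Adj y a ∧ G.dist x a + 1 = G.dist x y := by
  obtain ⟨p, hp⟩ := hc.exists_walk_length_eq_dist y x
  cases p with
  | nil => exact absurd rfl h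
  | @cons _ a _ ha q =>
    refine ⟨a, ha, ?_⟩
    rw [SimpleGraph.Walk.length_cons] at hp
    have hq := SimpleGraph.dist_le q
    have htri := hc.dist_triangle (u := y) (v := a) (w := x)
    rw [SimpleGraph.dist_eq_one_iff_adj.2 ha] at htri
    rw [G.dist_comm (u := x), G.dist_comm (u := x)]
    omega

lemma dist_le_dist_add_one_of_adj (hc : G.Connected) {y a : V} (x : V) (h : G.Adj y a) :
    G.dist x y ≤ G.dist x a + 1 := by
  rw [← SimpleGraph.dist_eq_one_iff_adj.2 h.symm]
  exact hc.dist_triangle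

lemma mem_gball {x y : V} {k : ℕ} : y ∈ gball G x k ↔ G.dist x y ≤ k := Iff.rfl

lemma self_mem_gball (x : V) (k : ℕ) : x ∈ gball G x k := by simp [mem_gball]

lemma gball_zero (hc : G.Connected) (x : V) : gball G x 0 = {x} := by
  ext y
  simp [mem_gball, hc.dist_eq_zero_iff, eq_comm]

lemma gball_mono (x : V) {k l : ℕ} (h : k ≤ l) : gball G x k ⊆ gball G x l :=
  fun _ hy => hy.trans h

lemma gball_subset_gball (hc : G.Connected) {x y : V} {r ρ R : ℕ} (hxy : G.dist y x ≤ ρ)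
    (hR : ρ + r ≤ R) : gball G x r ⊆ gball G y R := by
  intro v hv
  have htri := hc.dist_triangle (u := y) (v := x) (w := v)
  rw [mem_gball] at hv ⊢
  omega

variable [Finite V]

lemma ncard_biUnion_le_mul {ι α : Type*} [Finite ι] [Finite α] {s : Set ι} {f : ι → Set α} {n : ℕ}
    (h : ∀ i ∈ s, (f i).ncard ≤ n) : (⋃ i ∈ s, f i).ncard ≤ s.ncard * n := by
  cases nonempty_fintype ι
  cases nonempty_fintype α
  have hcard := Finset.card_biUnion_le_card_mul s.toFinset (fun i => (f i).toFinset) n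
    fun i hi => by simpa [Set.ncard_eq_toFinset_card'] using h i (Set.mem_toFinset.1 hi)
  rw [← Set.ncard_coe_finset (s.toFinset.biUnion _), ← Set.ncard_coe_finset s.toFinset] at hcard
  simpa only [Finset.coe_biUnion, Set.coe_toFinset] using hcard

lemma ncard_gball_add_one_le (hD : 1 ≤ D) (hc : G.Connected) (hreg : IsReg G (D + 1)) (x : V)
    (k : ℕ) : (gball G x k).ncard + 1 ≤ 2 * (D + 1) ^ k := by
  induction k with
  | zero => simp [gball_zero hc]
  | succ k ih =>
    have hsub : gball G x (k + 1) ⊆ insert x (⋃ y ∈ gball G x k, G.neighborSet y) := by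
      intro y hy
      by_cases hyx : y = x
      · exact .inl hyx
      obtain ⟨a, ha, hdist⟩ := exists_adj_dist_add_one_eq hc hyx
      rw [mem_gball] at hy
      exact .inr (mem_biUnion (by rw [mem_gball]; omega) ha.symm)
    have hcard : (gball G x (k + 1)).ncard ≤ (gball G x k).ncard * (D + 1) + 1 := by
      refine (Set.ncard_le_ncard hsub).trans ((Set.ncard_insert_le _ _).trans ?_)
      gcongr
      exact ncard_biUnion_le_mul fun y _ => (hreg y).le
    calc (gball G x (k + 1)).ncard + 1 ≤ ((gball G x k).ncard + 1) * (D + 1) := by linarith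
      _ ≤ 2 * (D + 1) ^ k * (D + 1) := by gcongr
      _ = 2 * (D + 1) ^ (k + 1) := by rw [_root_.pow_succ, mul_assoc]

lemma ncard_gball_le (hD : 1 ≤ D) (hc : G.Connected) (hreg : IsReg G (D + 1)) (x : V) (k : ℕ) :
    ((gball G x k).ncard : ℝ) ≤ 2 * ((D : ℝ) + 1) ^ k := by
  have h := ncard_gball_add_one_le hD hc hreg x k
  exact_mod_cast Nat.le_of_succ_le h

end Balls

/-! ### Vertices near a cycle -/

section Bad

variable {V : Type*} {G : SimpleGraph V} {D : ℕ}

lemma connected_deleteEdges_map {W : Type*} {K : SimpleGraph W} (hc : G.Connected) (f : K →g G)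
    (hf : Function.Injective f) {a b : W} (hab : ¬ K.IsBridge s(a, b)) :
    (G.deleteEdges {s(f a, f b)}).Connected := by
  refine hc.connected_delete_edge_of_not_isBridge ?_
  rw [SimpleGraph.isBridge_iff, not_not] at hab ⊢
  let φ : K.deleteEdges {s(a, b)} →g G.deleteEdges {s(f a, f b)} := ⟨f, fun {u v} huv => by
    rw [SimpleGraph.deleteEdges_adj] at huv ⊢
    exact ⟨f.map_adj huv.1, fun h => huv.2 (Sym2.map.injective hf h)⟩⟩
  exact hab.map φ

lemma exists_adj_not_isBridge (h : ¬ G.IsAcyclic) : ∃ a b, G.Adj a b ∧ ¬ G.IsBridge s(a, b) := by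
  simpa [SimpleGraph.isAcyclic_iff_forall_adj_isBridge] using h

lemma connected_induce_gball (hc : G.Connected) (x : V) (k : ℕ) :
    (G.induce (gball G x k)).Connected := by
  refine (SimpleGraph.connected_iff_exists_forall_reachable _).2
    ⟨⟨x, self_mem_gball x k⟩, fun ⟨y, hy⟩ => ?_⟩
  induction hn : G.dist x y generalizing y with
  | zero =>
    obtain rfl := hc.dist_eq_zero_iff.1 hn
    rfl
  | succ n ih =>
    obtain ⟨a, ha, hdist⟩ := exists_adj_dist_add_one_eq hc (x := x) (y := y)
      (by rintro rfl; simp at hn)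
    rw [mem_gball] at hy
    exact (ih a (by rw [mem_gball]; omega) (by omega)).trans
      (SimpleGraph.Adj.reachable (SimpleGraph.induce_adj.2 ha.symm))

variable [Finite V]

lemma two_mul_ncard_edgeSet_induce (B : Set V) :
    2 * (G.induce B).edgeSet.ncard = adjPairs G B := by
  cases nonempty_fintype V
  have hpairs := (G.induce B).two_mul_card_edgeFinset
  rw [SimpleGraph.edgeFinset, ← Set.ncard_eq_toFinset_card'] at hpairs
  rw [hpairs, adjPairs, ← Set.ncard_coe_finset]
  refine Set.ncard_congr (fun p _ => ((p.1 : V), (p.2 : V))) ?_ ?_ ?_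
  · rintro ⟨u, v⟩ h
    exact ⟨u.2, v.2, by simpa using h⟩
  · rintro ⟨u, v⟩ ⟨u', v'⟩ _ _ h
    exact Prod.ext (Subtype.ext (Prod.mk.inj h).1) (Subtype.ext (Prod.mk.inj h).2)
  · rintro ⟨u, v⟩ ⟨hu, hv, huv⟩
    exact ⟨(⟨u, hu⟩, ⟨v, hv⟩), by simpa using huv, rfl⟩

/-- Removing an edge from each of two disjoint cycles leaves `B` connected. -/
lemma two_mul_ncard_add_two_le_adjPairs {S S' B : Set V} (hS : S ⊆ B) (hS' : S' ⊆ B)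
    (hdisj : Disjoint S S') (hconn : (G.induce B).Connected) (hcyc : ¬ (G.induce S).IsAcyclic)
    (hcyc' : ¬ (G.induce S').IsAcyclic) : 2 * B.ncard + 2 ≤ adjPairs G B := by
  obtain ⟨a, b, hab, hbridge⟩ := exists_adj_not_isBridge hcyc
  obtain ⟨a', b', hab', hbridge'⟩ := exists_adj_not_isBridge hcyc'
  set H := G.induce B
  let e := s(Set.inclusion hS a, Set.inclusion hS b)
  let e' := s(Set.inclusion hS' a', Set.inclusion hS' b')
  have hne (u v : S) : s(Set.inclusion hS u, Set.inclusion hS v) ≠ e' := by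
    intro h
    have hu : Set.inclusion hS u ∈ e' := h ▸ Sym2.mem_mk_left _ _
    rcases Sym2.mem_iff.1 hu with hu | hu <;> have hval := congrArg Subtype.val hu
    · exact disjoint_left.1 hdisj u.2 (hval ▸ a'.2)
    · exact disjoint_left.1 hdisj u.2 (hval ▸ b'.2)
  let φ : G.induce S →g H.deleteEdges {e'} := ⟨Set.inclusion hS, fun {u v} huv =>
    SimpleGraph.deleteEdges_adj.2 ⟨huv, hne u v⟩⟩
  have hconn' : ((H.deleteEdges {e'}).deleteEdges {e}).Connected :=
    connected_deleteEdges_map (connected_deleteEdges_map hconn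
      (G.induceHomOfLE hS').toHom (Set.inclusion_injective hS') hbridge') φ
      (Set.inclusion_injective hS) hbridge
  have hcard := hconn'.card_vert_le_card_edgeSet_add_one
  rw [SimpleGraph.edgeSet_deleteEdges, SimpleGraph.edgeSet_deleteEdges, Nat.card_coe_set_eq,
    Nat.card_coe_set_eq] at hcard
  have he : e ∈ H.edgeSet \ {e'} := ⟨hab, hne a b⟩
  have he' : e' ∈ H.edgeSet := hab'
  have hdel := Set.ncard_sdiff_singleton_add_one he (Set.toFinite _)
  have hdel' := Set.ncard_sdiff_singleton_add_one he' (Set.toFinite _)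
  have hpairs : 2 * H.edgeSet.ncard = adjPairs G B := two_mul_ncard_edgeSet_induce B
  omega

lemma dist_le_two_mul_of_not_isAcyclic (hc : G.Connected) {y x x' : V} {R ρ r : ℕ}
    (hR : ρ + r ≤ R) (hcyc : adjPairs G (gball G y R) ≤ 2 * (gball G y R).ncard)
    (hx : G.dist y x ≤ ρ) (hx' : G.dist y x' ≤ ρ) (hxr : ¬ (G.induce (gball G x r)).IsAcyclic)
    (hxr' : ¬ (G.induce (gball G x' r)).IsAcyclic) : G.dist x x' ≤ 2 * r := by
  by_contra! hlt
  have hdisj : Disjoint (gball G x r) (gball G x' r) := by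
    refine disjoint_left.2 fun v hv hv' => ?_
    have htri := hc.dist_triangle (u := x) (v := v) (w := x')
    rw [mem_gball] at hv hv'
    rw [G.dist_comm (u := v)] at htri
    omega
  have hpairs := two_mul_ncard_add_two_le_adjPairs (gball_subset_gball hc hx hR)
    (gball_subset_gball hc hx' hR) hdisj (connected_induce_gball hc y R) hxr hxr'
  omega

lemma adjPairs_add_le_adjPairs_union {U S : Set V} (hUS : Disjoint U S) {a : V → V}
    (ha : ∀ y ∈ S, a y ∈ U) (hadj : ∀ y ∈ S, G.Adj y (a y)) :
    adjPairs G U + 2 * S.ncard ≤ adjPairs G (U ∪ S) := by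
  let E := {p : V × V | p.1 ∈ U ∧ p.2 ∈ U ∧ G.Adj p.1 p.2}
  let A := (fun y => (y, a y)) '' S
  let A' := (fun y => (a y, y)) '' S
  have hA : A.ncard = S.ncard := Set.ncard_image_of_injective _ fun _ _ h => (Prod.mk.inj h).1
  have hA' : A'.ncard = S.ncard := Set.ncard_image_of_injective _ fun _ _ h => (Prod.mk.inj h).2
  have hAA' : Disjoint A A' := by
    rw [disjoint_left]
    rintro _ ⟨y, hy, rfl⟩ ⟨z, hz, h⟩
    exact disjoint_left.1 hUS (ha y hy) ((Prod.mk.inj h).2 ▸ hz)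
  have hEA : Disjoint E (A ∪ A') := by
    rw [disjoint_left]
    rintro _ ⟨h₁, h₂, -⟩ (⟨y, hy, rfl⟩ | ⟨y, hy, rfl⟩)
    exacts [disjoint_left.1 hUS h₁ hy, disjoint_left.1 hUS h₂ hy]
  have hsub : E ∪ (A ∪ A') ⊆ {p | p.1 ∈ U ∪ S ∧ p.2 ∈ U ∪ S ∧ G.Adj p.1 p.2} := by
    rintro _ (⟨h₁, h₂, h₃⟩ | ⟨y, hy, rfl⟩ | ⟨y, hy, rfl⟩)
    exacts [⟨.inl h₁, .inl h₂, h₃⟩, ⟨.inr hy, .inl (ha y hy), hadj y hy⟩,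
      ⟨.inl (ha y hy), .inr hy, (hadj y hy).symm⟩]
  calc adjPairs G U + 2 * S.ncard = (E ∪ (A ∪ A')).ncard := by
        rw [Set.ncard_union_eq hEA, Set.ncard_union_eq hAA', hA, hA', two_mul]
        rfl
    _ ≤ adjPairs G (U ∪ S) := Set.ncard_le_ncard hsub

/-- Each vertex of the sphere of radius `k + 1` sends an edge to the ball of radius `k`, so the
excess of edges over vertices does not decrease with the radius. -/
lemma adjPairs_gball_add_le (hc : G.Connected) (x : V) (k : ℕ) :
    adjPairs G (gball G x k) + 2 * (gball G x (k + 1)).ncard ≤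
      adjPairs G (gball G x (k + 1)) + 2 * (gball G x k).ncard := by
  have hparent (y : V) : ∃ a, G.dist x y = k + 1 → G.Adj y a ∧ G.dist x a = k := by
    by_cases hy : G.dist x y = k + 1
    · obtain ⟨a, ha, hdist⟩ := exists_adj_dist_add_one_eq hc (x := x) (y := y)
        (by rintro rfl; simp at hy)
      exact ⟨a, fun _ => ⟨ha, by omega⟩⟩
    · exact ⟨x, fun h => absurd h hy⟩
  choose a ha using hparent
  let S := {y | G.dist x y = k + 1}
  have hunion : gball G x (k + 1) = gball G x k ∪ S := by
    ext y
    simp only [mem_gball, mem_union, S, mem_ofPred_eq]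
    omega
  have hdisj : Disjoint (gball G x k) S := by
    refine disjoint_left.2 fun y hy (hy' : G.dist x y = k + 1) => ?_
    rw [mem_gball] at hy
    omega
  have hpairs := adjPairs_add_le_adjPairs_union hdisj (fun y hy => (ha y hy).2.le)
    fun y hy => (ha y hy).1
  rw [hunion, Set.ncard_union_eq hdisj]
  omega

lemma adjPairs_gball_le_of_le (hc : G.Connected) (x : V) {R k : ℕ} (hk : k ≤ R)
    (hcyc : adjPairs G (gball G x R) ≤ 2 * (gball G x R).ncard) :
    adjPairs G (gball G x k) ≤ 2 * (gball G x k).ncard := by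
  induction R, hk using Nat.le_induction with
  | base => exact hcyc
  | succ R _ ih =>
    have := adjPairs_gball_add_le hc x R
    exact ih (by omega)

lemma mul_ncard_gball_le_adjPairs (hc : G.Connected) (hreg : IsReg G D) (x : V)
    (k : ℕ) : (gball G x k).ncard * D ≤ adjPairs G (gball G x (k + 1)) := by
  cases nonempty_fintype V
  let f : (Σ y : gball G x k, G.neighborSet y) → V × V := fun p => (p.1, p.2)
  have hf : Function.Injective f := by
    rintro ⟨⟨u, hu⟩, v, hv⟩ ⟨⟨u', hu'⟩, v', hv'⟩ h
    obtain ⟨rfl, rfl⟩ := Prod.mk.inj h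
    rfl
  have hcard : Nat.card (Σ y : gball G x k, G.neighborSet y) = (gball G x k).ncard * D := by
    rw [Nat.card_sigma]
    simp only [hreg _]
    rw [Finset.sum_const, Finset.card_univ, smul_eq_mul, ← Nat.card_eq_fintype_card,
      Nat.card_coe_set_eq]
  rw [← hcard, ← Nat.card_range_of_injective hf, Nat.card_coe_set_eq]
  refine Set.ncard_le_ncard ?_
  rintro _ ⟨⟨⟨u, hu⟩, v, hv⟩, rfl⟩
  exact ⟨gball_mono x k.le_succ hu, (dist_le_dist_add_one_of_adj hc x hv.symm).trans
    (Nat.succ_le_succ hu), hv⟩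

lemma pow_le_ncard_gball (hD : 2 ≤ D) (hc : G.Connected) (hreg : IsReg G (D + 1)) (x : V) {R k : ℕ}
    (hk : k ≤ R) (hcyc : adjPairs G (gball G x R) ≤ 2 * (gball G x R).ncard) :
    (3 / 2 : ℝ) ^ k ≤ (gball G x k).ncard := by
  induction k with
  | zero => simp [gball_zero hc]
  | succ k ih =>
    have hpairs : (gball G x k).ncard * 3 ≤ 2 * (gball G x (k + 1)).ncard :=
      (Nat.mul_le_mul_left _ (by omega)).trans
        ((mul_ncard_gball_le_adjPairs hc hreg x k).trans (adjPairs_gball_le_of_le hc x hk hcyc))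
    have hpairs' : ((gball G x k).ncard : ℝ) * 3 ≤ 2 * (gball G x (k + 1)).ncard := by
      exact_mod_cast hpairs
    rw [_root_.pow_succ]
    linarith [ih (by omega)]

/-- Double counting of the pairs `(x, y)` with `x` near a cycle and `y` at distance at most `ρ`
from `x`: all `x` paired with the same `y` see the same cycle. -/
lemma ncard_not_isAcyclic_mul_pow_le (hD : 2 ≤ D) (hc : G.Connected) (hreg : IsReg G (D + 1))
    {R ρ r : ℕ} (hR : ρ + r ≤ R)
    (hcyc : ∀ y, adjPairs G (gball G y R) ≤ 2 * (gball G y R).ncard) :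
    ({x | ¬ (G.induce (gball G x r)).IsAcyclic}.ncard : ℝ) * (3 / 2) ^ ρ ≤
      Nat.card V * (2 * ((D : ℝ) + 1) ^ (2 * r)) := by
  cases nonempty_fintype V
  set bad := {x | ¬ (G.induce (gball G x r)).IsAcyclic}
  have hsum (s : Finset V) (y : V) :
      ∑ x ∈ s, (if G.dist y x ≤ ρ then (1 : ℝ) else 0) = (↑s ∩ gball G y ρ).ncard := by
    rw [Finset.sum_boole, ← Set.ncard_coe_finset, Finset.coe_filter]
    rfl
  have hrow (x : V) : (3 / 2 : ℝ) ^ ρ ≤ ∑ y, if G.dist x y ≤ ρ then (1 : ℝ) else 0 := by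
    have h := pow_le_ncard_gball hD hc hreg x (k := ρ) (by omega) (hcyc x)
    rwa [← univ_inter (gball G x ρ), ← Finset.coe_univ, ← hsum] at h
  have hcol (y : V) : ∑ x ∈ bad.toFinset, (if G.dist x y ≤ ρ then (1 : ℝ) else 0) ≤
      2 * ((D : ℝ) + 1) ^ (2 * r) := by
    simp only [G.dist_comm (v := y)]
    rw [hsum, Set.coe_toFinset]
    rcases (bad ∩ gball G y ρ).eq_empty_or_nonempty with hempty | ⟨x₀, hx₀, hyx₀⟩
    · rw [hempty, Set.ncard_empty, Nat.cast_zero]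
      positivity
    · refine le_trans ?_ (ncard_gball_le (by omega) hc hreg x₀ (2 * r))
      exact_mod_cast Set.ncard_le_ncard fun _ (hx : _ ∈ bad ∩ gball G y ρ) =>
        dist_le_two_mul_of_not_isAcyclic hc hR (hcyc y) hyx₀ hx.2 hx₀ hx.1
  calc (bad.ncard : ℝ) * (3 / 2) ^ ρ = ∑ _x ∈ bad.toFinset, (3 / 2 : ℝ) ^ ρ := by
        rw [Finset.sum_const, nsmul_eq_mul, Set.ncard_eq_toFinset_card']
    _ ≤ ∑ x ∈ bad.toFinset, ∑ y, if G.dist x y ≤ ρ then (1 : ℝ) else 0 :=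
        Finset.sum_le_sum fun x _ => hrow x
    _ = ∑ y, ∑ x ∈ bad.toFinset, if G.dist x y ≤ ρ then (1 : ℝ) else 0 := Finset.sum_comm
    _ ≤ ∑ _y : V, 2 * ((D : ℝ) + 1) ^ (2 * r) := Finset.sum_le_sum fun y _ => hcol y
    _ = Nat.card V * (2 * ((D : ℝ) + 1) ^ (2 * r)) := by
        rw [Finset.sum_const, Finset.card_univ, nsmul_eq_mul, Nat.card_eq_fintype_card]

end Bad

/-! ### Comparison with the Green function of the tree -/

section GreenComparison

open scoped Matrix

variable {V : Type*} {G : SimpleGraph V} {D N ρ : ℕ} {β : ℝ}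

/-- The Green function of the `(D + 1)`-regular tree transported to `G` through the graph distance
and cut off at distance `ρ`. Around a vertex whose neighbourhood is a tree it is an approximate
inverse of `I - P`. -/
noncomputable def truncatedGreen (G : SimpleGraph V) (D ρ : ℕ) (x y : V) : ℝ :=
  if G.dist x y ≤ ρ then treeGreen G (D + 1) x y else 0

lemma truncatedGreen_nonneg (hD : 1 ≤ D) (x y : V) : 0 ≤ truncatedGreen G D ρ x y := by
  rw [truncatedGreen]
  split_ifs
  exacts [treeGreen_nonneg hD x y, le_rfl]

lemma truncatedGreen_le (hD : 2 ≤ D) {k : ℕ} {x y : V} (hk : k ≤ G.dist x y) :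
    truncatedGreen G D ρ x y ≤ 2 * (D : ℝ)⁻¹ ^ k := by
  have hD' : (2 : ℝ) ≤ D := by exact_mod_cast hD
  have hconst : (D : ℝ) / (D - 1) ≤ 2 := by rw [div_le_iff₀ (by linarith)]; linarith
  rw [truncatedGreen]
  split_ifs
  · have hpow : (D : ℝ)⁻¹ ^ G.dist x y ≤ (D : ℝ)⁻¹ ^ k :=
      pow_le_pow_of_le_one (by positivity) (inv_le_one_of_one_le₀ (by linarith)) hk
    rw [treeGreen_succ]
    gcongr
  · positivity

variable [Fintype V]

lemma sum_adj_comp_dist (hc : G.Connected) (hreg : IsReg G (D + 1)) {B : Set V}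
    (hB : UniquePaths G B) {x y : V} {k : ℕ} (hy : G.dist x y = k + 1)
    (hx : ∀ w, G.dist x w ≤ 2 * k + 3 → w ∈ B) (f : ℕ → ℝ) :
    ∑ z, (if G.Adj y z then f (G.dist x z) else 0) = D * f (k + 2) + f k := by
  obtain ⟨a, ha, hdist⟩ := exists_adj_dist_add_one_eq hc (x := x) (y := y)
    (by rintro rfl; simp at hy)
  have hfar {z : V} (hz : G.Adj y z) (hza : z ≠ a) : G.dist x z = k + 2 := by
    have hle := dist_le_dist_add_one_of_adj hc x hz.symm
    suffices ¬ G.dist x z ≤ G.dist x y by omega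
    intro hle
    rw [G.dist_comm (u := x), G.dist_comm (u := x)] at hle hdist
    refine hza (hB.eq_of_dist_le hc hz ha hle (by omega) fun w hw => hx w ?_)
    have htri := hc.dist_triangle (u := x) (v := y) (w := w)
    rw [G.dist_comm (u := y) (v := x)] at hw
    omega
  have hterm (z : V) : (if G.Adj y z then f (G.dist x z) else 0) =
      (if G.Adj y z then 1 else 0) * f (k + 2) + if z = a then f k - f (k + 2) else 0 := by
    by_cases hza : z = a
    · rw [hza, if_pos ha, if_pos ha, if_pos rfl, (by omega : G.dist x a = k)]
      ring
    · by_cases hz : G.Adj y z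
      · simp [hz, hza, hfar hz hza]
      · simp [hz, hza]
  simp only [hterm]
  rw [Finset.sum_add_distrib, ← Finset.sum_mul, sum_adj_eq hreg]
  simp
  ring

lemma abs_walkLaplacian_mulVec_le (hreg : IsReg G (D + 1)) {f : V → ℝ} {x : V} {C : ℝ}
    (hx : f x ∈ Icc 0 C) (hf : ∀ y, G.Adj x y → f y ∈ Icc 0 C) :
    |(walkLaplacian G (D + 1) *ᵥ f) x| ≤ C := by
  have hterm (y : V) : (if G.Adj x y then f y else 0) ∈
      Icc 0 ((if G.Adj x y then (1 : ℝ) else 0) * C) := by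
    split_ifs with h
    · simpa using hf y h
    · simp
  have hsum := Finset.sum_le_sum fun y (_ : y ∈ Finset.univ) => (hterm y).2
  rw [← Finset.sum_mul, sum_adj_eq hreg, ← div_le_iff₀' (by positivity)] at hsum
  rw [walkLaplacian_mulVec_apply]
  exact abs_sub_le_of_nonneg_of_le hx.1 hx.2
    (div_nonneg (Finset.sum_nonneg fun y _ => (hterm y).1) (by positivity)) hsum

lemma walkLaplacian_truncatedGreen_self (hD : 2 ≤ D) (hreg : IsReg G (D + 1)) (hρ : 1 ≤ ρ) (x : V) :
    (walkLaplacian G (D + 1) *ᵥ truncatedGreen G D ρ x) x = 1 := by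
  have hD' : (2 : ℝ) ≤ D := by exact_mod_cast hD
  have hD₁ : (D : ℝ) - 1 ≠ 0 := by linarith
  have hterm (y : V) : (if G.Adj x y then truncatedGreen G D ρ x y else 0) =
      (if G.Adj x y then 1 else 0) * ((D : ℝ) / (D - 1) * (D : ℝ)⁻¹) := by
    split_ifs with h
    · rw [truncatedGreen, treeGreen_succ, SimpleGraph.dist_eq_one_iff_adj.2 h, if_pos hρ, one_mul,
        pow_one]
    · rw [zero_mul]
  rw [walkLaplacian_mulVec_apply, Finset.sum_congr rfl fun y _ => hterm y, ← Finset.sum_mul,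
    sum_adj_eq hreg, truncatedGreen, treeGreen_succ, SimpleGraph.dist_self, if_pos ρ.zero_le]
  push_cast
  field_simp

lemma walkLaplacian_truncatedGreen_of_lt (hD : 2 ≤ D) (hc : G.Connected) (hreg : IsReg G (D + 1))
    {B : Set V} (hB : UniquePaths G B) {x y : V} (hx : ∀ w, G.dist x w ≤ 2 * ρ + 1 → w ∈ B)
    (hne : y ≠ x) (hlt : G.dist x y < ρ) :
    (walkLaplacian G (D + 1) *ᵥ truncatedGreen G D ρ x) y = 0 := by
  have hD' : (2 : ℝ) ≤ D := by exact_mod_cast hD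
  have hD₁ : (D : ℝ) - 1 ≠ 0 := by linarith
  obtain ⟨k, hk⟩ : ∃ k, G.dist x y = k + 1 :=
    Nat.exists_eq_succ_of_ne_zero fun h => hne (hc.dist_eq_zero_iff.1 h).symm
  have hterm (z : V) : (if G.Adj y z then truncatedGreen G D ρ x z else 0) =
      if G.Adj y z then (D : ℝ) / (D - 1) * (D : ℝ)⁻¹ ^ G.dist x z else 0 := by
    split_ifs with h
    · have := dist_le_dist_add_one_of_adj hc x h.symm
      rw [truncatedGreen, treeGreen_succ, if_pos (by omega)]
    · rfl
  rw [walkLaplacian_mulVec_apply, Finset.sum_congr rfl fun z _ => hterm z,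
    sum_adj_comp_dist hc hreg hB hk (fun w hw => hx w (by omega)) fun j =>
      (D : ℝ) / (D - 1) * (D : ℝ)⁻¹ ^ j, truncatedGreen, treeGreen_succ, if_pos hlt.le, hk,
    _root_.pow_succ _ (k + 1), _root_.pow_succ _ k]
  push_cast
  field_simp
  ring

lemma abs_walkLaplacian_truncatedGreen_le (hD : 2 ≤ D) (hc : G.Connected) (hreg : IsReg G (D + 1))
    {x y : V} (hle : ρ ≤ G.dist x y) :
    |(walkLaplacian G (D + 1) *ᵥ truncatedGreen G D ρ x) y| ≤
      if G.dist x y ≤ ρ + 1 then 2 * (D : ℝ)⁻¹ ^ (ρ - 1) else 0 := by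
  refine abs_walkLaplacian_mulVec_le hreg ⟨truncatedGreen_nonneg (by omega) x y, ?_⟩
    fun z hz => ⟨truncatedGreen_nonneg (by omega) x z, ?_⟩
  · split_ifs
    · exact truncatedGreen_le hD (by omega)
    · rw [truncatedGreen, if_neg (by omega)]
  · have := dist_le_dist_add_one_of_adj hc x hz
    split_ifs
    · exact truncatedGreen_le hD (by omega)
    · rw [truncatedGreen, if_neg (by omega)]

lemma abs_walkLaplacian_truncatedGreen_sub_le (hD : 2 ≤ D) (hc : G.Connected)
    (hreg : IsReg G (D + 1)) {B : Set V} (hB : UniquePaths G B) (hρ : 1 ≤ ρ) {x : V}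
    (hx : ∀ w, G.dist x w ≤ 2 * ρ + 1 → w ∈ B) (y : V) :
    |(walkLaplacian G (D + 1) *ᵥ truncatedGreen G D ρ x) y - if y = x then 1 else 0| ≤
      if G.dist x y ≤ ρ + 1 then 2 * (D : ℝ)⁻¹ ^ (ρ - 1) else 0 := by
  have hnonneg : 0 ≤ if G.dist x y ≤ ρ + 1 then 2 * (D : ℝ)⁻¹ ^ (ρ - 1) else 0 := by positivity
  by_cases hyx : y = x
  · subst hyx
    rwa [walkLaplacian_truncatedGreen_self hD hreg hρ, if_pos rfl, sub_self, abs_zero]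
  rw [if_neg hyx, sub_zero]
  rcases lt_or_ge (G.dist x y) ρ with hlt | hle
  · rwa [walkLaplacian_truncatedGreen_of_lt hD hc hreg hB hx hyx hlt, abs_zero]
  · exact abs_walkLaplacian_truncatedGreen_le hD hc hreg hle

lemma sum_ite_dist_le (x : V) (k : ℕ) (C : ℝ) :
    ∑ y, (if G.dist x y ≤ k then C else 0) = (gball G x k).ncard * C := by
  rw [← Finset.sum_filter, Finset.sum_const, nsmul_eq_mul, ← Set.ncard_coe_finset,
    Finset.coe_filter_univ]
  rfl

/-- The growth `(D + 1) ^ ρ` of balls is beaten by the square `D⁻¹ ^ (2 * ρ)` of the error at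
distance `ρ`, because `D + 1 ≤ 3 / 4 * D ^ 2`. -/
lemma sum_sq_walkLaplacian_truncatedGreen_sub_le (hD : 2 ≤ D) (hc : G.Connected)
    (hreg : IsReg G (D + 1)) {B : Set V} (hB : UniquePaths G B) (hρ : 1 ≤ ρ) {x : V}
    (hx : ∀ w, G.dist x w ≤ 2 * ρ + 1 → w ∈ B) :
    ∑ y, ((walkLaplacian G (D + 1) *ᵥ truncatedGreen G D ρ x) y - if y = x then 1 else 0) ^ 2 ≤
      (4 * (D : ℝ) ^ 2) ^ 2 * (3 / 4) ^ ρ := by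
  have hD' : (2 : ℝ) ≤ D := by exact_mod_cast hD
  obtain ⟨m, rfl⟩ := Nat.exists_eq_succ_of_ne_zero (Nat.one_le_iff_ne_zero.1 hρ)
  have hterm (y : V) :
      ((walkLaplacian G (D + 1) *ᵥ truncatedGreen G D (m + 1) x) y - if y = x then 1 else 0) ^ 2 ≤
        if G.dist x y ≤ m + 2 then (2 * (D : ℝ)⁻¹ ^ m) ^ 2 else 0 := by
    have h := pow_le_pow_left₀ (abs_nonneg _)
      (abs_walkLaplacian_truncatedGreen_sub_le hD hc hreg hB hρ hx y) 2
    rwa [sq_abs, ite_pow, zero_pow two_ne_zero] at h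
  refine (Finset.sum_le_sum fun y _ => hterm y).trans ?_
  rw [sum_ite_dist_le]
  calc ((gball G x (m + 2)).ncard : ℝ) * (2 * (D : ℝ)⁻¹ ^ m) ^ 2
      ≤ 2 * ((D : ℝ) + 1) ^ (m + 2) * (2 * (D : ℝ)⁻¹ ^ m) ^ 2 := by
        gcongr
        exact ncard_gball_le (by omega) hc hreg x (m + 2)
    _ ≤ 2 * (3 / 4 * (D : ℝ) ^ 2) ^ (m + 2) * (2 * (D : ℝ)⁻¹ ^ m) ^ 2 := by
        gcongr
        nlinarith
    _ = 8 * (D : ℝ) ^ 4 * (3 / 4) ^ (m + 2) * (D * (D : ℝ)⁻¹) ^ (2 * m) := by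
        rw [mul_pow, mul_pow, mul_pow]
        ring
    _ = 6 * (D : ℝ) ^ 4 * (3 / 4) ^ (m + 1) := by
        rw [mul_inv_cancel₀ (by linarith), one_pow, _root_.pow_succ]
        ring
    _ ≤ 16 * (D : ℝ) ^ 4 * (3 / 4) ^ (m + 1) := by
        gcongr
        norm_num
    _ = (4 * (D : ℝ) ^ 2) ^ 2 * (3 / 4) ^ (m + 1) := by ring

lemma sum_truncatedGreen_le (hD : 2 ≤ D) (hc : G.Connected) (hreg : IsReg G (D + 1)) (x : V) :
    ∑ y, truncatedGreen G D ρ x y ≤ 4 * ((D : ℝ) + 1) ^ ρ := by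
  have hterm (y : V) : truncatedGreen G D ρ x y ≤ if G.dist x y ≤ ρ then 2 else 0 := by
    split_ifs with h
    · simpa using truncatedGreen_le (ρ := ρ) hD (Nat.zero_le (G.dist x y))
    · rw [truncatedGreen, if_neg h]
  refine (Finset.sum_le_sum fun y _ => hterm y).trans ?_
  rw [sum_ite_dist_le]
  linarith [ncard_gball_le (by omega) hc hreg x ρ]

/-- The distance between the zero-average Green function of a graph with `N` vertices and spectral
gap `β` and `truncatedGreen`: the first term is the cut-off error, measured in `ℓ²`, the second
one comes from the average of `truncatedGreen`. -/
noncomputable def greenError (D : ℕ) (β : ℝ) (N ρ : ℕ) : ℝ :=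
  4 * (D : ℝ) ^ 2 / β * √((3 / 4) ^ ρ) + 4 * ((D : ℝ) + 1) ^ ρ / N

lemma greenError_nonneg (hβ : 0 < β) (D N ρ : ℕ) : 0 ≤ greenError D β N ρ := by
  rw [greenError]
  positivity

lemma IsEigensystem.abs_zGreen_sub_truncatedGreen_le {b : V → V → ℝ} {lam : V → ℝ}
    (hb : IsEigensystem G (D + 1) β N b lam) (hβ : 0 < β) (hD : 2 ≤ D) (hc : G.Connected)
    (hreg : IsReg G (D + 1)) {B : Set V} (hB : UniquePaths G B) (hρ : 1 ≤ ρ) {y : V}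
    (hy : ∀ w, G.dist y w ≤ 2 * ρ + 1 → w ∈ B) (x : V) :
    |zGreen G (D + 1) N x y - truncatedGreen G D ρ y x| ≤ greenError D β N ρ := by
  set e : V → ℝ := fun z =>
    (walkLaplacian G (D + 1) *ᵥ truncatedGreen G D ρ y) z - if z = y then 1 else 0
  have hsolve : ∑ z, zGreen G (D + 1) N x z * e z = truncatedGreen G D ρ y x -
      (∑ z, truncatedGreen G D ρ y z) / N - zGreen G (D + 1) N x y := by
    simp only [e, mul_sub]
    rw [Finset.sum_sub_distrib, hb.sum_zGreen_mul_walkLaplacian hβ]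
    simp
  have hnorm : √(∑ z, e z ^ 2) ≤ 4 * (D : ℝ) ^ 2 * √((3 / 4) ^ ρ) := by
    rw [← Real.sqrt_sq (by positivity : 0 ≤ 4 * (D : ℝ) ^ 2), ← Real.sqrt_mul (by positivity)]
    exact Real.sqrt_le_sqrt (sum_sq_walkLaplacian_truncatedGreen_sub_le hD hc hreg hB hρ hy)
  have herror : |∑ z, zGreen G (D + 1) N x z * e z| ≤ 4 * (D : ℝ) ^ 2 / β * √((3 / 4) ^ ρ) := by
    refine (hb.abs_sum_zGreen_mul_le hβ x e).trans ?_
    rw [div_mul_eq_mul_div]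
    gcongr
  have hmean : (∑ z, truncatedGreen G D ρ y z) / N ≤ 4 * ((D : ℝ) + 1) ^ ρ / N := by
    gcongr
    exact sum_truncatedGreen_le hD hc hreg y
  have hmean' : 0 ≤ (∑ z, truncatedGreen G D ρ y z) / N :=
    div_nonneg (Finset.sum_nonneg fun z _ => truncatedGreen_nonneg (by omega) y z) (by positivity)
  rw [hsolve, abs_le] at herror
  rw [abs_le, greenError]
  constructor <;> linarith [herror.1, herror.2]

end GreenComparison

/-! ### Lipschitz tests for survival -/

section LipschitzTest

variable {ι Ω : Type*} [Fintype ι] [MeasurableSpace Ω] {P : Measure Ω} {L δ : ℝ}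
  {Φ : (ι → ℝ) → ℝ}

lemma isLipschitzTest_thickenedIndicator (hδ : 0 < δ) (S : Set (ι → ℝ)) :
    IsLipschitzTest δ⁻¹ fun a => (thickenedIndicator hδ S a : ℝ) where
  nonneg := by positivity
  measurable := (NNReal.continuous_coe.comp (thickenedIndicator hδ S).continuous).measurable
  abs_le_one a := by
    rw [abs_of_nonneg (NNReal.coe_nonneg _)]
    exact_mod_cast thickenedIndicator_le_one hδ S a
  abs_sub_le a b := by
    have hdist : dist a b ≤ ∑ i, |a i - b i| :=
      (dist_pi_le_iff (Finset.sum_nonneg fun i _ => abs_nonneg _)).2 fun i =>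
        Finset.single_le_sum (f := fun i => |a i - b i|) (fun i _ => abs_nonneg _)
          (Finset.mem_univ i)
    have hlip := (lipschitzWith_thickenedIndicator hδ S).dist_le_mul a b
    rw [NNReal.dist_eq, NNReal.coe_inv, Real.coe_toNNReal δ hδ.le] at hlip
    exact hlip.trans (mul_le_mul_of_nonneg_left hdist (by positivity))

lemma IsLipschitzTest.mul_sum {κ : Type*} [Fintype κ] {Ψ : (κ → ℝ) → ℝ}
    (hΦ : IsLipschitzTest L Φ) (hΨ : IsLipschitzTest L Ψ) :
    IsLipschitzTest L fun a : ι ⊕ κ → ℝ => Φ (a ∘ Sum.inl) * Ψ (a ∘ Sum.inr) where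
  nonneg := hΦ.nonneg
  measurable := (hΦ.measurable.comp (measurable_pi_lambda _ fun i => measurable_pi_apply _)).mul
    (hΨ.measurable.comp (measurable_pi_lambda _ fun i => measurable_pi_apply _))
  abs_le_one a := by
    rw [abs_mul]
    exact mul_le_one₀ (hΦ.abs_le_one _) (abs_nonneg _) (hΨ.abs_le_one _)
  abs_sub_le a b := by
    rw [Fintype.sum_sum_type, mul_add, show ∀ p q p' q' : ℝ,
      p * q - p' * q' = (p - p') * q + p' * (q - q') from fun _ _ _ _ => by ring]
    refine (abs_add_le _ _).trans (add_le_add ?_ ?_) <;> rw [abs_mul]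
    · exact (mul_le_of_le_one_right (abs_nonneg _) (hΨ.abs_le_one _)).trans (hΦ.abs_sub_le _ _)
    · exact (mul_le_of_le_one_left (abs_nonneg _) (hΦ.abs_le_one _)).trans (hΨ.abs_sub_le _ _)

lemma IsLipschitzTest.abs_integral_le_one [IsProbabilityMeasure P] (hΦ : IsLipschitzTest L Φ)
    (X : ι → Ω → ℝ) : |∫ ω, Φ (fun i => X i ω) ∂P| ≤ 1 := by
  simpa using norm_integral_le_of_norm_le_const (μ := P) (C := 1)
    (f := fun ω => Φ fun i => X i ω) (.of_forall fun ω => hΦ.abs_le_one fun i => X i ω)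

variable {D r : ℕ} {M h h₁ : ℝ}

lemma aliveCount_extendZero (η : List (Fin D) → ℝ) :
    aliveCount r h (extendZero fun l : wordsLE D r => η l) = aliveCount r h η :=
  congrArg Finset.card (Finset.filter_congr fun _ hl => alive_extendZero (mem_words.1 hl).le)

/-- A Lipschitz approximation, at scale `h₁ - h`, of the indicator that `M` vertices of generation
`r` are connected to the root: it equals one if this happens above the level `h₁` and vanishes if it
fails above the level `h`. -/
noncomputable def aliveTest (hh : h < h₁) (M : ℝ) (a : wordsLE D r → ℝ) : ℝ :=
  thickenedIndicator (sub_pos.2 hh) {a | M ≤ aliveCount r h₁ (extendZero a)} a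

lemma isLipschitzTest_aliveTest (hh : h < h₁) (M : ℝ) :
    IsLipschitzTest (h₁ - h)⁻¹ (aliveTest (D := D) (r := r) hh M) :=
  isLipschitzTest_thickenedIndicator _ _

lemma aliveTest_nonneg (hh : h < h₁) (M : ℝ) (a : wordsLE D r → ℝ) : 0 ≤ aliveTest hh M a :=
  NNReal.coe_nonneg _

lemma aliveTest_eq_one (hh : h < h₁) {η : List (Fin D) → ℝ} (hM : M ≤ aliveCount r h₁ η) :
    aliveTest hh M (fun l : wordsLE D r => η l) = 1 := by
  rw [aliveTest, thickenedIndicator_one _ _ ?_, NNReal.coe_one]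
  rwa [mem_ofPred_eq, aliveCount_extendZero]

lemma aliveTest_eq_zero (hh : h < h₁) {η : List (Fin D) → ℝ} (hM : aliveCount r h η < M) :
    aliveTest hh M (fun l : wordsLE D r => η l) = 0 := by
  rw [aliveTest, thickenedIndicator_zero _ _ ?_, NNReal.coe_zero]
  rw [Metric.mem_thickening_iff]
  rintro ⟨b, hb, hdist⟩
  have hcount : aliveCount r h₁ (extendZero b) ≤ aliveCount r h η := by
    refine aliveCount_mono fun l hl hbl => ?_
    have hb_apply : extendZero b l = b ⟨l, mem_wordsLE.2 hl⟩ :=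
      Subtype.val_injective.extend_apply b 0 ⟨l, mem_wordsLE.2 hl⟩
    have hclose := (dist_le_pi_dist _ b ⟨l, mem_wordsLE.2 hl⟩).trans_lt hdist
    rw [Real.dist_eq, abs_lt] at hclose
    linarith [hclose.1]
  exact hM.not_ge (le_trans hb (Nat.cast_le.2 hcount))

end LipschitzTest

/-! ### Second moments -/

section SecondMoment

variable {Ω V : Type*} [MeasurableSpace Ω] {P : Measure Ω} [IsProbabilityMeasure P]
  {m E K t : ℝ}

section Pair

variable {X Y : Ω → ℝ}

lemma integrable_sub_mul_sub (hX : AEStronglyMeasurable X P) (hY : AEStronglyMeasurable Y P)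
    (hX₁ : ∀ ω, |X ω| ≤ 1) (hY₁ : ∀ ω, |Y ω| ≤ 1) (m : ℝ) :
    Integrable (fun ω => (X ω - m) * (Y ω - m)) P :=
  ((Integrable.of_bound hX 1 (.of_forall hX₁)).sub (integrable_const m)).mul_bdd (c := 1 + |m|)
    (hY.sub aestronglyMeasurable_const)
    (.of_forall fun ω => (abs_sub _ _).trans (by gcongr; exact hY₁ ω))

lemma integral_sub_mul_sub_le_four (hX : AEStronglyMeasurable X P)
    (hY : AEStronglyMeasurable Y P) (hX₁ : ∀ ω, |X ω| ≤ 1) (hY₁ : ∀ ω, |Y ω| ≤ 1) (hm : |m| ≤ 1) :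
    ∫ ω, (X ω - m) * (Y ω - m) ∂P ≤ 4 := by
  have hle : ∫ ω, (X ω - m) * (Y ω - m) ∂P ≤ ∫ _, (4 : ℝ) ∂P := by
    refine integral_mono (integrable_sub_mul_sub hX hY hX₁ hY₁ m) (integrable_const 4) fun ω => ?_
    have hXm : |X ω - m| ≤ 2 := (abs_sub _ _).trans (by linarith [hX₁ ω])
    have hYm : |Y ω - m| ≤ 2 := (abs_sub _ _).trans (by linarith [hY₁ ω])
    calc (X ω - m) * (Y ω - m) ≤ |X ω - m| * |Y ω - m| := by
          rw [← abs_mul]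
          exact le_abs_self _
      _ ≤ 2 * 2 := by gcongr
      _ = 4 := by norm_num
  simpa using hle

lemma integral_sub_mul_sub_le (hX : AEStronglyMeasurable X P)
    (hY : AEStronglyMeasurable Y P) (hX₁ : ∀ ω, |X ω| ≤ 1) (hY₁ : ∀ ω, |Y ω| ≤ 1) (hm : |m| ≤ 1)
    (hXm : |∫ ω, X ω ∂P - m| ≤ E) (hYm : |∫ ω, Y ω ∂P - m| ≤ E)
    (hXY : |∫ ω, X ω * Y ω ∂P - m * m| ≤ E) :
    ∫ ω, (X ω - m) * (Y ω - m) ∂P ≤ 3 * E := by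
  have hX_int : Integrable X P := .of_bound hX 1 (.of_forall hX₁)
  have hY_int : Integrable Y P := .of_bound hY 1 (.of_forall hY₁)
  have hXY_int : Integrable (fun ω => X ω * Y ω) P := hX_int.mul_bdd hY (.of_forall hY₁)
  have hsub_int : Integrable (fun ω => X ω * Y ω - m * X ω) P := hXY_int.sub (hX_int.const_mul m)
  have hsub_sub_int : Integrable (fun ω => X ω * Y ω - m * X ω - m * Y ω) P :=
    hsub_int.sub (hY_int.const_mul m)
  have hexpand : ∫ ω, (X ω - m) * (Y ω - m) ∂P = (∫ ω, X ω * Y ω ∂P - m * m) -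
      m * (∫ ω, X ω ∂P - m) - m * (∫ ω, Y ω ∂P - m) := by
    calc ∫ ω, (X ω - m) * (Y ω - m) ∂P
        = ∫ ω, (X ω * Y ω - m * X ω - m * Y ω + m * m) ∂P := by
          congr 1 with ω
          ring
      _ = ∫ ω, X ω * Y ω ∂P - m * ∫ ω, X ω ∂P - m * ∫ ω, Y ω ∂P + m * m := by
          rw [integral_add hsub_sub_int (integrable_const _), integral_sub hsub_int
            (hY_int.const_mul m), integral_sub hXY_int (hX_int.const_mul m), integral_const_mul,
            integral_const_mul, integral_const, probReal_univ, one_smul]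
      _ = _ := by ring
  have hmul {u : ℝ} (hu : |u| ≤ E) : |m * u| ≤ E := by
    rw [abs_mul]
    exact (mul_le_of_le_one_left (abs_nonneg u) hm).trans hu
  rw [hexpand]
  linarith [(abs_le.1 hXY).2, (abs_le.1 (hmul hXm)).1, (abs_le.1 (hmul hYm)).1]

end Pair

variable {s : Finset V} {X : V → Ω → ℝ} {far : V → V → Prop}

lemma integral_sum_sub_sq_le (hX : ∀ x ∈ s, AEStronglyMeasurable (X x) P)
    (hX₁ : ∀ x ∈ s, ∀ ω, |X x ω| ≤ 1) (hm : |m| ≤ 1) (hE : 0 ≤ E)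
    (hmean : ∀ x ∈ s, |∫ ω, X x ω ∂P - m| ≤ E)
    (hpair : ∀ x ∈ s, ∀ y ∈ s, far x y → |∫ ω, X x ω * X y ω ∂P - m * m| ≤ E)
    (hK : ∀ x ∈ s, ((s.filter fun y => ¬ far x y).card : ℝ) ≤ K) :
    ∫ ω, (∑ x ∈ s, (X x ω - m)) ^ 2 ∂P ≤ s.card * (s.card * (3 * E) + 4 * K) := by
  have hint {x y : V} (hx : x ∈ s) (hy : y ∈ s) :
      Integrable (fun ω => (X x ω - m) * (X y ω - m)) P :=
    integrable_sub_mul_sub (hX x hx) (hX y hy)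
      (hX₁ x hx) (hX₁ y hy) m
  have hterm {x y : V} (hx : x ∈ s) (hy : y ∈ s) : ∫ ω, (X x ω - m) * (X y ω - m) ∂P ≤
      3 * E + 4 * if ¬ far x y then 1 else 0 := by
    by_cases hxy : far x y
    · simpa [hxy] using integral_sub_mul_sub_le (hX x hx)
        (hX y hy) (hX₁ x hx) (hX₁ y hy) hm (hmean x hx) (hmean y hy)
        (hpair x hx y hy hxy)
    · have := integral_sub_mul_sub_le_four (P := P) (hX x hx)
        (hX y hy) (hX₁ x hx) (hX₁ y hy) hm
      rw [if_pos hxy]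
      linarith
  simp only [sq, Finset.sum_mul_sum]
  rw [integral_finsetSum _ fun x hx => integrable_finsetSum _ fun y hy => hint hx hy,
    ← nsmul_eq_mul]
  refine Finset.sum_le_card_nsmul _ _ _ fun x hx => ?_
  rw [integral_finsetSum _ fun y hy => hint hx hy]
  refine (Finset.sum_le_sum fun y hy => hterm hx hy).trans ?_
  rw [Finset.sum_add_distrib, Finset.sum_const, nsmul_eq_mul, ← Finset.mul_sum, Finset.sum_boole]
  gcongr
  exact hK x hx

theorem measureReal_sum_lt_card_mul_sub_le (hX : ∀ x ∈ s, AEStronglyMeasurable (X x) P)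
    (hX₁ : ∀ x ∈ s, ∀ ω, |X x ω| ≤ 1) (hm : |m| ≤ 1) (hE : 0 ≤ E)
    (hmean : ∀ x ∈ s, |∫ ω, X x ω ∂P - m| ≤ E)
    (hpair : ∀ x ∈ s, ∀ y ∈ s, far x y → |∫ ω, X x ω * X y ω ∂P - m * m| ≤ E)
    (hK : ∀ x ∈ s, ((s.filter fun y => ¬ far x y).card : ℝ) ≤ K) (ht : 0 < t) :
    P.real {ω | ∑ x ∈ s, X x ω < s.card * m - t} ≤
      s.card * (s.card * (3 * E) + 4 * K) / t ^ 2 := by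
  have hsq_int : Integrable (fun ω => (∑ x ∈ s, (X x ω - m)) ^ 2) P := by
    simp only [sq, Finset.sum_mul_sum]
    exact integrable_finsetSum _ fun x hx => integrable_finsetSum _ fun y hy =>
      integrable_sub_mul_sub (hX x hx) (hX y hy)
        (hX₁ x hx) (hX₁ y hy) m
  have hsubset : {ω | ∑ x ∈ s, X x ω < s.card * m - t} ⊆
      {ω | t ^ 2 ≤ (∑ x ∈ s, (X x ω - m)) ^ 2} := by
    intro ω (hω : ∑ x ∈ s, X x ω < s.card * m - t)
    rw [mem_ofPred_eq, Finset.sum_sub_distrib, Finset.sum_const, nsmul_eq_mul, ← sq_abs (_ - _)]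
    exact pow_le_pow_left₀ ht.le (le_abs.2 (.inr (by linarith))) 2
  rw [le_div_iff₀' (by positivity)]
  calc t ^ 2 * P.real {ω | ∑ x ∈ s, X x ω < s.card * m - t}
      ≤ t ^ 2 * P.real {ω | t ^ 2 ≤ (∑ x ∈ s, (X x ω - m)) ^ 2} :=
        mul_le_mul_of_nonneg_left (measureReal_mono hsubset) (by positivity)
    _ ≤ ∫ ω, (∑ x ∈ s, (X x ω - m)) ^ 2 ∂P :=
        mul_meas_ge_le_integral_of_nonneg (.of_forall fun ω => sq_nonneg _) hsq_int _
    _ ≤ s.card * (s.card * (3 * E) + 4 * K) :=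
        integral_sum_sub_sq_le hX hX₁ hm hE hmean hpair hK

end SecondMoment

section GaussianSecondMoment

variable {Ω Ω' V ι κ : Type*} [MeasurableSpace Ω] [MeasurableSpace Ω'] {μ : Measure Ω}
  {P : Measure Ω'} {K : ι → ι → ℝ} {X : ι → Ω' → ℝ}

lemma IsGaussianVector.comp_index [Finite ι] [Finite κ] (hX : IsGaussianVector P X K)
    (e : κ → ι) : IsGaussianVector P (fun k => X (e k)) fun k l => K (e k) (e l) where
  hasGaussianLaw := by
    cases nonempty_fintype ι
    cases nonempty_fintype κ
    exact hX.hasGaussianLaw.map_fun (ContinuousLinearMap.pi fun k => .proj (e k))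
  integral_eq_zero k := hX.integral_eq_zero (e k)
  covariance_eq k l := hX.covariance_eq (e k) (e l)

variable [Finite V] [Fintype ι] [IsProbabilityMeasure μ] [IsProbabilityMeasure P]
  {Y : V × ι → Ω → ℝ} {C : V × ι → V × ι → ℝ} {L ε k t : ℝ} {Φ : (ι → ℝ) → ℝ}
  {far : V → V → Prop}

lemma IsGaussianVector.abs_integral_mul_sub_le (hY : IsGaussianVector μ Y C)
    (hX : IsGaussianVector P X K) (hΦ : IsLipschitzTest L Φ) (hε : 0 ≤ ε) {x y : V}
    (hx : ∀ i j, |C (x, i) (x, j) - K i j| ≤ ε) (hy : ∀ i j, |C (y, i) (y, j) - K i j| ≤ ε)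
    (hxy : ∀ i j, |C (x, i) (y, j)| ≤ ε) :
    |∫ ω, Φ (fun i => Y (x, i) ω) * Φ (fun i => Y (y, i) ω) ∂μ -
      (∫ ω, Φ (fun i => X i ω) ∂P) * ∫ ω, Φ (fun i => X i ω) ∂P| ≤
        comparisonError L ε (2 * Fintype.card ι) := by
  have hcompare := (hY.comp_index (Sum.elim (x, ·) (y, ·))).abs_integral_sub_le (hX.prod hX) hε
    (by
      rintro (i | i) (j | j)
      · exact hx i j
      · simpa using hxy i j
      · simpa [hY.covariance_comm (y, i)] using hxy j i
      · exact hy i j)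
    (hΦ.mul_sum hΦ)
  rw [Fintype.card_sum, ← two_mul] at hcompare
  rw [← integral_prod_mul]
  exact hcompare

theorem IsGaussianVector.measureReal_sum_lt_card_mul_sub_le (hY : IsGaussianVector μ Y C)
    (hX : IsGaussianVector P X K) (hΦ : IsLipschitzTest L Φ) (hε : 0 ≤ ε) {s : Finset V}
    (hself : ∀ x ∈ s, ∀ i j, |C (x, i) (x, j) - K i j| ≤ ε)
    (hpair : ∀ x ∈ s, ∀ y ∈ s, far x y → ∀ i j, |C (x, i) (y, j)| ≤ ε)
    (hk : ∀ x ∈ s, ((s.filter fun y => ¬ far x y).card : ℝ) ≤ k) (ht : 0 < t) :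
    μ.real {ω | ∑ x ∈ s, Φ (fun i => Y (x, i) ω) < s.card * ∫ ω, Φ (fun i => X i ω) ∂P - t} ≤
      s.card * (s.card * (3 * comparisonError L ε (2 * Fintype.card ι)) + 4 * k) / t ^ 2 := by
  have hYx (x : V) := hY.comp_index (x, ·)
  refine GFF.measureReal_sum_lt_card_mul_sub_le
    (fun x _ => (hΦ.integrable_comp (hYx x).aemeasurable).aestronglyMeasurable)
    (fun x _ ω => hΦ.abs_le_one _) (hΦ.abs_integral_le_one X)
    (comparisonError_nonneg hΦ.nonneg _ _) (fun x hx => ?_)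
    (fun x hx y hy hxy => hY.abs_integral_mul_sub_le hX hΦ hε (hself x hx) (hself y hy)
      (hpair x hx y hy hxy)) hk ht
  exact ((hYx x).abs_integral_sub_le hX hε (hself x hx) hΦ).trans
    (comparisonError_mono hΦ.nonneg hε (by omega))

end GaussianSecondMoment

/-! ### The number of vertices in large components -/

section LargeComponents

variable {V Ω : Type*} {G : SimpleGraph V} {D N r ρ : ℕ} {β : ℝ} [MeasurableSpace Ω]
  {P : Measure Ω} {X : List (Fin D) → Ω → ℝ} {h h₁ M q : ℝ}

lemma IsTreeField.isGaussianVector (hX : IsTreeField D P X) (r : ℕ) :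
    IsGaussianVector P (fun l : wordsLE D r => X l) fun l m => treeCov D l m where
  hasGaussianLaw := hX.isGaussianProcess.hasGaussianLaw (wordsLE D r)
  integral_eq_zero l := hX.integral_eq_zero l
  covariance_eq l m := hX.covariance_eq l m

lemma le_integral_aliveTest [IsFiniteMeasure P] (hX : ∀ l, Measurable (X l)) (hh : h < h₁) :
    P.real {ω | M ≤ aliveCount r h₁ (X · ω)} ≤
      ∫ ω, aliveTest hh M (fun l : wordsLE D r => X l ω) ∂P := by
  have hmarkov := mul_meas_ge_le_integral_of_nonneg (μ := P)
    (.of_forall fun ω => aliveTest_nonneg hh M fun l : wordsLE D r => X l ω)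
    ((isLipschitzTest_aliveTest hh M).integrable_comp fun l => (hX l).aemeasurable) 1
  rw [one_mul] at hmarkov
  exact (measureReal_mono fun ω hω => (aliveTest_eq_one hh hω).ge).trans hmarkov

lemma sum_aliveTest_le_ncard [Finite V] (hc : G.Connected) (hh : h < h₁) (hq : q ≤ M)
    {s : Finset V} {x' : V → V} {c : V → List (Fin D) → V}
    (hcode : ∀ x ∈ s, IsTreeCode G x (x' x) (c x))
    {R : ℕ} (hR : 3 * r + 1 ≤ R)
    (hs : ∀ x ∈ s, UniquePaths G (gball G x R)) (ω : V → ℝ) :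
    ∑ x ∈ s, aliveTest hh M (fun l : wordsLE D r => ω (c x l)) ≤
      {x | q ≤ (levelComp G h ω x).ncard}.ncard := by
  cases nonempty_fintype V
  have hterm : ∀ x ∈ s, aliveTest hh M (fun l : wordsLE D r => ω (c x l)) ≤
      if q ≤ (levelComp G h ω x).ncard then 1 else 0 := by
    intro x hx
    split_ifs with hqx
    · exact (le_abs_self _).trans ((isLipschitzTest_aliveTest hh M).abs_le_one _)
    · refine (aliveTest_eq_zero hh (η := fun l => ω (c x l)) ?_).le
      have hle := (hcode x hx).aliveCount_le_ncard_levelComp hc (hs x hx)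
        (fun w hw => gball_mono x hR hw) h ω
      exact (Nat.cast_le.2 hle).trans_lt ((not_le.1 hqx).trans_le hq)
  refine (Finset.sum_le_sum hterm).trans ?_
  rw [Finset.sum_boole, ← Set.ncard_coe_finset]
  exact_mod_cast Set.ncard_le_ncard fun x hx => (Finset.mem_filter.1 hx).2

lemma card_filter_not_le_of_dist_le [Finite V] (hD : 1 ≤ D) (hc : G.Connected)
    (hreg : IsReg G (D + 1)) {x : V} {far : V → Prop} (hfar : ∀ y, ¬ far y → G.dist x y ≤ ρ)
    (s : Finset V) : ((s.filter fun y => ¬ far y).card : ℝ) ≤ 2 * ((D : ℝ) + 1) ^ ρ := by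
  refine le_trans ?_ (ncard_gball_le hD hc hreg x ρ)
  rw [← Set.ncard_coe_finset]
  exact_mod_cast Set.ncard_le_ncard fun y hy => hfar y (Finset.mem_filter.1 hy).2

lemma IsReg.exists_adj (hreg : IsReg G (D + 1)) (x : V) : ∃ x', G.Adj x x' := by
  have hpos : 0 < Nat.card (G.neighborSet x) := hreg x ▸ D.succ_pos
  have := (Nat.card_pos_iff.1 hpos).1
  exact ⟨_, (Classical.arbitrary (G.neighborSet x)).2⟩

variable [Fintype V]

namespace IsEigensystem

variable {b : V → V → ℝ} {lam : V → ℝ} {x x' : V} {c : List (Fin D) → V}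

lemma abs_zGreen_sub_treeCov_le (hb : IsEigensystem G (D + 1) β N b lam) (hβ : 0 < β)
    (hD : 2 ≤ D) (hc : G.Connected) (hreg : IsReg G (D + 1)) (hcode : IsTreeCode G x x' c)
    (hB : UniquePaths G (gball G x (2 * ρ + r + 1))) (hρ : 1 ≤ ρ) (hr : 2 * r ≤ ρ)
    {l m : List (Fin D)} (hl : l.length ≤ r) (hm : m.length ≤ r) :
    |zGreen G (D + 1) N (c l) (c m) - treeCov D l m| ≤ greenError D β N ρ := by
  have hxl := hcode.dist_le_length hc l
  have hxm := hcode.dist_le_length hc m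
  have hdist : G.dist (c m) (c l) = wordDist l m := by
    rw [SimpleGraph.dist_comm]
    exact hcode.dist_eq_wordDist hc hB (fun w hw => mem_gball.2 (by omega)) hl hm
  have hle : G.dist (c m) (c l) ≤ ρ := by
    have := hc.dist_triangle (u := c m) (v := x) (w := c l)
    rw [G.dist_comm (u := c m) (v := x)] at this
    omega
  have herror := hb.abs_zGreen_sub_truncatedGreen_le hβ hD hc hreg hB hρ (y := c m)
    (fun w hw => mem_gball.2 (by have := hc.dist_triangle (u := x) (v := c m) (w := w); omega))
    (c l)
  rwa [truncatedGreen, if_pos hle, treeGreen_succ, hdist, ← treeCov] at herror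

lemma abs_zGreen_le_of_lt_dist (hb : IsEigensystem G (D + 1) β N b lam) (hβ : 0 < β)
    (hD : 2 ≤ D) (hc : G.Connected) (hreg : IsReg G (D + 1)) {y z : V}
    (hB : UniquePaths G (gball G x (2 * ρ + r + 1))) (hρ : 1 ≤ ρ) (hxy : G.dist x y ≤ r)
    (hyz : ρ < G.dist y z) : |zGreen G (D + 1) N z y| ≤ greenError D β N ρ := by
  have herror := hb.abs_zGreen_sub_truncatedGreen_le hβ hD hc hreg hB hρ (y := y)
    (fun w hw => mem_gball.2 (by have := hc.dist_triangle (u := x) (v := y) (w := w); omega)) z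
  rwa [truncatedGreen, if_neg hyz.not_ge, sub_zero] at herror

lemma abs_zGreen_code_le (hb : IsEigensystem G (D + 1) β N b lam) (hβ : 0 < β)
    (hD : 2 ≤ D) (hc : G.Connected) (hreg : IsReg G (D + 1)) {y y' : V} {c₁ : List (Fin D) → V}
    (hcode : IsTreeCode G x x' c) (hcode₁ : IsTreeCode G y y' c₁)
    (hB : UniquePaths G (gball G y (2 * ρ + r + 1))) (hρ : 1 ≤ ρ)
    (hxy : ρ + 2 * r < G.dist x y) {l m : List (Fin D)} (hl : l.length ≤ r) (hm : m.length ≤ r) :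
    |zGreen G (D + 1) N (c l) (c₁ m)| ≤ greenError D β N ρ := by
  have hym := hcode₁.dist_le_length hc m
  have hxl := hcode.dist_le_length hc l
  have hxy_le := hc.dist_triangle (u := x) (v := c l) (w := y)
  have hly_le := hc.dist_triangle (u := c l) (v := c₁ m) (w := y)
  rw [G.dist_comm (u := c l) (v := c₁ m), G.dist_comm (u := c₁ m) (v := y)] at hly_le
  exact hb.abs_zGreen_le_of_lt_dist hβ hD hc hreg hB hρ (hym.trans hm) (by omega)

end IsEigensystem

variable {μ : Measure (V → ℝ)} {s : Finset V} {x' : V → V} {c : V → List (Fin D) → V}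

lemma mul_add_div_sq_le {n N E k t : ℝ} (hn : 0 ≤ n) (hnN : n ≤ N) (hN : 0 < N) (hE : 0 ≤ E)
    (hk : 0 ≤ k) : n * (n * E + k) / (t * N) ^ 2 ≤ (E + k / N) / t ^ 2 := by
  calc n * (n * E + k) / (t * N) ^ 2 ≤ N * (N * E + k) / (t * N) ^ 2 := by gcongr
    _ = (E + k / N) / t ^ 2 := by
      rw [mul_pow, mul_comm (t ^ 2), ← div_div]
      congr 1
      field_simp

theorem measureReal_sum_lt_card_mul_sub_mul_le (hβ : 0 < β) (hD : 2 ≤ D) (hc : G.Connected)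
    (hreg : IsReg G (D + 1)) (hcard : Nat.card V = N) (hgap : SpectralGapLB G (D + 1) β)
    (hμ : IsGaussianField μ (zGreen G (D + 1) N)) (hρ : 1 ≤ ρ) (hr : 2 * r ≤ ρ)
    (hcode : ∀ x ∈ s, IsTreeCode G x (x' x) (c x))
    (hs : ∀ x ∈ s, UniquePaths G (gball G x (2 * ρ + r + 1))) (hX : IsTreeField D P X)
    {L t : ℝ} {Φ : (wordsLE D r → ℝ) → ℝ} (hΦ : IsLipschitzTest L Φ) (ht : 0 < t) :
    μ.real {ω | ∑ x ∈ s, Φ (fun l => ω (c x l)) <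
        s.card * ∫ ω, Φ (fun l => X l ω) ∂P - t * N} ≤
      (3 * comparisonError L (greenError D β N ρ) (2 * (wordsLE D r).card) +
        4 * (2 * ((D : ℝ) + 1) ^ (ρ + 2 * r)) / N) / t ^ 2 := by
  have := hμ.1
  have := hX.isGaussianProcess.isProbabilityMeasure
  have := hc.nonempty
  have hN : (0 : ℝ) < N := by exact_mod_cast hcard ▸ Nat.card_pos
  have hsN : (s.card : ℝ) ≤ N := by
    rw [← hcard, Nat.card_eq_fintype_card]
    exact_mod_cast s.card_le_univ
  obtain ⟨b, lam, hb⟩ := exists_isEigensystem D.succ_ne_zero hc hreg hgap hcard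
  have hY := hμ.isGaussianVector (hb.zGreen_comm hβ) (hb.zGreen_self_nonneg hβ)
    (hb.zGreen_add_add_nonneg hβ) fun p : V × wordsLE D r => c p.1 p.2
  have hlen (l : wordsLE D r) : l.1.length ≤ r := mem_wordsLE.1 l.2
  have hE := comparisonError_nonneg hΦ.nonneg (greenError D β N ρ) (2 * (wordsLE D r).card)
  refine (hY.measureReal_sum_lt_card_mul_sub_le (far := fun x y => ρ + 2 * r < G.dist x y)
    (k := 2 * ((D : ℝ) + 1) ^ (ρ + 2 * r)) (hX.isGaussianVector r) hΦ (greenError_nonneg hβ D N ρ)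
    (fun x hx l m => ?_) (fun x hx y hy hxy l m => ?_) (fun x _ => ?_) (mul_pos ht hN)).trans ?_
  · exact hb.abs_zGreen_sub_treeCov_le hβ hD hc hreg (hcode x hx) (hs x hx) hρ hr
      (hlen l) (hlen m)
  · exact hb.abs_zGreen_code_le hβ hD hc hreg (hcode x hx) (hcode y hy) (hs y hy) hρ hxy
      (hlen l) (hlen m)
  · exact card_filter_not_le_of_dist_le (by omega) hc hreg (fun y => not_lt.1) s
  · rw [Fintype.card_coe]
    exact mul_add_div_sq_le (Nat.cast_nonneg _) hsN hN (by positivity) (by positivity)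

lemma one_sub_measureReal_le_of_compl_subset {Ω : Type*} [MeasurableSpace Ω] {μ : Measure Ω}
    [IsProbabilityMeasure μ] {A B : Set Ω} (hAB : Aᶜ ⊆ B) : 1 - μ.real A ≤ μ.real B := by
  have hunion := measureReal_union_le (μ := μ) A B
  rw [compl_subset_iff_union.1 hAB, probReal_univ] at hunion
  linarith

theorem one_sub_le_measureReal_mul_le_ncard (hβ : 0 < β) (hD : 2 ≤ D) (hc : G.Connected)
    (hreg : IsReg G (D + 1)) (hcard : Nat.card V = N) (hgap : SpectralGapLB G (D + 1) β)
    (hμ : IsGaussianField μ (zGreen G (D + 1) N)) (hρ : 1 ≤ ρ) (hr : 2 * r ≤ ρ)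
    (hX : IsTreeField D P X) (hh : h < h₁) (hq : q ≤ M) {η ε : ℝ}
    (hη : η ≤ P.real {ω | M ≤ aliveCount r h₁ (X · ω)}) (hε : 0 < ε)
    (hbad : ({x | ¬ (G.induce (gball G x (2 * ρ + r + 1))).IsAcyclic}.ncard : ℝ) ≤ ε * N) :
    1 - (3 * comparisonError (h₁ - h)⁻¹ (greenError D β N ρ) (2 * (wordsLE D r).card) +
        4 * (2 * ((D : ℝ) + 1) ^ (ρ + 2 * r)) / N) / ε ^ 2 ≤
      μ.real {ω | (η - 2 * ε) * N ≤ {x | q ≤ (levelComp G h ω x).ncard}.ncard} := by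
  have := hμ.1
  have := hX.isGaussianProcess.isProbabilityMeasure
  set s := Finset.univ.filter fun x => (G.induce (gball G x (2 * ρ + r + 1))).IsAcyclic with hs_def
  have hs (x) (hx : x ∈ s) : UniquePaths G (gball G x (2 * ρ + r + 1)) :=
    uniquePaths_of_isAcyclic_induce (Finset.mem_filter.1 hx).2
  choose x' hx' using hreg.exists_adj
  choose c hcode using fun x => exists_isTreeCode hreg (hx' x)
  have hscard : (1 - ε) * N ≤ s.card := by
    have hsplit := Finset.card_filter_add_card_filter_not (s := Finset.univ)
      fun x => (G.induce (gball G x (2 * ρ + r + 1))).IsAcyclic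
    rw [Finset.card_univ, ← Nat.card_eq_fintype_card, hcard, ← hs_def] at hsplit
    rw [Set.ncard_eq_toFinset_card', Set.toFinset_ofPred] at hbad
    have hsplit_real := congrArg (Nat.cast (R := ℝ)) hsplit
    push_cast at hsplit_real
    linarith
  have hΦ := isLipschitzTest_aliveTest (D := D) (r := r) hh M
  set m := ∫ ω, aliveTest hh M (fun l : wordsLE D r => X l ω) ∂P
  have hm := le_integral_aliveTest (P := P) (r := r) (M := M) hX.measurable hh
  have hm₁ : m ≤ 1 := (le_abs_self m).trans (hΦ.abs_integral_le_one _)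
  refine (sub_le_sub_left (measureReal_sum_lt_card_mul_sub_mul_le hβ hD hc hreg hcard hgap hμ hρ hr
    (fun x _ => hcode x) hs hX hΦ hε) 1).trans (one_sub_measureReal_le_of_compl_subset ?_)
  intro ω hω
  refine le_trans ?_ ((not_lt.1 (mt mem_ofPred_eq.mpr hω)).trans
    (sum_aliveTest_le_ncard hc hh hq (fun x _ => hcode x) (by omega) hs ω))
  have hmul := mul_le_mul_of_nonneg_right hscard (measureReal_nonneg.trans hm)
  nlinarith [mul_le_mul_of_nonneg_left (hη.trans hm) N.cast_nonneg (α := ℝ)]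

end LargeComponents

/-! ### Choice of scales -/

section Scales

variable {D k s r N : ℕ} {α β L δ Q : ℝ}

/-- What the bound of `one_sub_le_measureReal_mul_le_ncard` becomes when the depth `r = s - 1`
and the cut-off radius `ρ = k * s` are both small multiples of `log N`. -/
noncomputable def scaleError (D : ℕ) (β L : ℝ) (s : ℕ) : ℝ :=
  12 * L * √(3 * ((4 * (D : ℝ) ^ 2 / β + 4) * (1 / 2) ^ s)) + 8 * (1 / 2) ^ s

lemma tendsto_scaleError (D : ℕ) (β L : ℝ) : Tendsto (scaleError D β L) atTop (nhds 0) := by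
  have hpow : Tendsto (fun s : ℕ => (1 / 2 : ℝ) ^ s) atTop (nhds 0) :=
    tendsto_pow_atTop_nhds_zero_of_lt_one (by norm_num) (by norm_num)
  have hlim := (((hpow.const_mul (4 * (D : ℝ) ^ 2 / β + 4)).const_mul 3).sqrt.const_mul
    (12 * L)).add (hpow.const_mul 8)
  simp only [mul_zero, Real.sqrt_zero, add_zero] at hlim
  exact hlim

lemma pow_div_le_half_pow (hN : 0 < N) (hQ : (2 * Q ^ k) ^ s ≤ N) :
    Q ^ (k * s) / N ≤ (1 / 2) ^ s := by
  rw [div_le_iff₀ (Nat.cast_pos.2 hN), div_pow, one_pow, div_mul_eq_mul_div, one_mul,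
    le_div_iff₀ (by positivity), pow_mul, ← mul_pow, mul_comm]
  exact hQ

lemma pow_three_mul_greenError_le (hβ : 0 < β) (hk : (D : ℝ) ^ 3 * √(3 / 4) ^ k ≤ 1 / 2)
    (hN : 0 < N) (hQ : (2 * ((D : ℝ) + 1) ^ (k + 3)) ^ s ≤ N) :
    ((D : ℝ) ^ s) ^ 3 * greenError D β N (k * s) ≤
      (4 * (D : ℝ) ^ 2 / β + 4) * (1 / 2) ^ s := by
  have hsqrt : √((3 / 4 : ℝ) ^ (k * s)) = (√(3 / 4) ^ k) ^ s := by
    rw [← pow_mul, Real.sqrt_eq_iff_mul_self_eq (by positivity) (by positivity), ← mul_pow,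
      Real.mul_self_sqrt (by norm_num)]
  have hcut : ((D : ℝ) ^ s) ^ 3 * (4 * (D : ℝ) ^ 2 / β * √((3 / 4) ^ (k * s))) ≤
      4 * (D : ℝ) ^ 2 / β * (1 / 2) ^ s :=
    calc _ = 4 * (D : ℝ) ^ 2 / β * ((D : ℝ) ^ 3 * √(3 / 4) ^ k) ^ s := by
          rw [hsqrt, mul_pow, pow_right_comm]
          ring
      _ ≤ _ := by gcongr
  have haverage : ((D : ℝ) ^ s) ^ 3 * (4 * ((D : ℝ) + 1) ^ (k * s) / N) ≤ 4 * (1 / 2) ^ s :=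
    calc _ ≤ (((D : ℝ) + 1) ^ s) ^ 3 * (4 * ((D : ℝ) + 1) ^ (k * s) / N) := by gcongr; simp
      _ = 4 * (((D : ℝ) + 1) ^ ((k + 3) * s) / N) := by ring
      _ ≤ _ := by gcongr; exact pow_div_le_half_pow hN hQ
  rw [greenError, mul_add, add_mul]
  exact add_le_add hcut haverage

lemma three_mul_comparisonError_le {n : ℕ} {ε δ : ℝ} (hL : 0 ≤ L) (hε : 0 ≤ ε) (hD : 1 ≤ D)
    (hn : n ≤ D ^ s) (hδ : ((D : ℝ) ^ s) ^ 3 * ε ≤ δ) :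
    3 * comparisonError L ε (2 * n) ≤ 12 * L * √(3 * δ) := by
  have hn' : (n : ℝ) ≤ (D : ℝ) ^ s := by exact_mod_cast hn
  have hD' : (1 : ℝ) ≤ (D : ℝ) ^ s := one_le_pow₀ (by exact_mod_cast hD)
  have hroot : n * √((2 * n + 1) * ε) ≤ √(3 * δ) := by
    refine Real.le_sqrt_of_sq_le ?_
    rw [mul_pow, Real.sq_sqrt (by positivity)]
    calc (n : ℝ) ^ 2 * ((2 * n + 1) * ε)
        ≤ ((D : ℝ) ^ s) ^ 2 * ((2 * (D : ℝ) ^ s + (D : ℝ) ^ s) * ε) := by gcongr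
      _ = 3 * (((D : ℝ) ^ s) ^ 3 * ε) := by ring
      _ ≤ 3 * δ := by gcongr
  calc 3 * comparisonError L ε (2 * n) = 12 * L * (n * √((2 * n + 1) * ε)) := by
        rw [comparisonError]
        push_cast
        ring
    _ ≤ 12 * L * √(3 * δ) := by gcongr

lemma three_mul_comparisonError_add_le_scaleError (hβ : 0 < β) (hL : 0 ≤ L) (hD : 2 ≤ D)
    (hk : (D : ℝ) ^ 3 * √(3 / 4) ^ k ≤ 1 / 2) (hN : 0 < N)
    (hQ : (2 * ((D : ℝ) + 1) ^ (k + 3)) ^ (r + 1) ≤ N) :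
    3 * comparisonError L (greenError D β N (k * (r + 1))) (2 * (wordsLE D r).card) +
        4 * (2 * ((D : ℝ) + 1) ^ (k * (r + 1) + 2 * r)) / N ≤ scaleError D β L (r + 1) := by
  refine add_le_add (three_mul_comparisonError_le hL (greenError_nonneg hβ D N _) (by omega)
    (card_wordsLE_le hD r) (pow_three_mul_greenError_le hβ hk hN hQ)) ?_
  calc 4 * (2 * ((D : ℝ) + 1) ^ (k * (r + 1) + 2 * r)) / N
      = 8 * (((D : ℝ) + 1) ^ (k * (r + 1) + 2 * r) / N) := by ring
    _ ≤ 8 * (((D : ℝ) + 1) ^ ((k + 3) * (r + 1)) / N) := by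
        gcongr
        · simp
        · rw [add_mul]
          omega
    _ ≤ 8 * (1 / 2) ^ (r + 1) := by
        gcongr
        exact pow_div_le_half_pow hN hQ

lemma ncard_not_isAcyclic_le_half_pow_mul {V : Type*} [Finite V] {G : SimpleGraph V} {a b R : ℕ}
    (hD : 2 ≤ D) (hc : G.Connected) (hreg : IsReg G (D + 1))
    (hab : 2 * ((D : ℝ) + 1) ^ (2 * a) ≤ (3 / 2) ^ b) (hR : (a + b) * s ≤ R)
    (hcyc : ∀ y, adjPairs G (gball G y R) ≤ 2 * (gball G y R).ncard) :
    ({x | ¬ (G.induce (gball G x (a * s))).IsAcyclic}.ncard : ℝ) ≤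
      2 * (1 / 2) ^ s * Nat.card V := by
  have hcount := ncard_not_isAcyclic_mul_pow_le hD hc hreg (ρ := b * s) (r := a * s)
    (by rw [← add_mul, add_comm b]; exact hR) hcyc
  rw [← mul_assoc 2 a, pow_mul _ (2 * a)] at hcount
  set bad := ({x | ¬ (G.induce (gball G x (a * s))).IsAcyclic}.ncard : ℝ)
  set y := ((D : ℝ) + 1) ^ (2 * a)
  refine le_of_mul_le_mul_right ?_ (show 0 < (2 * y) ^ s by positivity)
  calc bad * (2 * y) ^ s ≤ bad * (3 / 2) ^ (b * s) := by
        rw [pow_mul]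
        gcongr
    _ ≤ Nat.card V * (2 * y ^ s) := hcount
    _ = 2 * (1 / 2) ^ s * Nat.card V * (2 * y) ^ s := by
        rw [mul_pow, div_pow, one_pow]
        field_simp

lemma tendsto_log_natCast : Tendsto (fun N : ℕ => Real.log N) atTop atTop :=
  Real.tendsto_log_atTop.comp tendsto_natCast_atTop_atTop

lemma eventually_mul_le_log {Λ : ℝ} (hΛ : 0 < Λ) (j n₀ : ℕ) :
    ∀ᶠ N : ℕ in atTop,
      ((n₀ + j * ⌊Real.log N / (2 * (j + 1) * Λ)⌋₊ + 1 : ℕ) : ℝ) * Λ ≤ Real.log N := by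
  filter_upwards [tendsto_log_natCast.eventually_ge_atTop (2 * Λ * (n₀ + 1)),
    tendsto_log_natCast.eventually_ge_atTop 0] with N hlarge hlog
  have hfloor := Nat.floor_le (div_nonneg hlog (by positivity : 0 ≤ 2 * (j + 1) * Λ))
  rw [le_div_iff₀ (by positivity)] at hfloor
  push_cast
  nlinarith [mul_nonneg hΛ.le (Nat.cast_nonneg (α := ℝ) ⌊Real.log N / (2 * (j + 1) * Λ)⌋₊)]

lemma eventually_rpow_le_mul_pow_floor {B b : ℝ} (hB : 0 < B) (hb : 1 < b) (hδ : 0 < δ) :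
    ∀ᶠ N : ℕ in atTop, (N : ℝ) ^ (Real.log b / (2 * B)) ≤ δ * b ^ ⌊Real.log N / B⌋₊ := by
  have : 0 < b := one_pos.trans hb
  have hlogb := Real.log_pos hb
  filter_upwards [tendsto_log_natCast.eventually_ge_atTop
    ((Real.log b - Real.log δ) * (2 * B) / Real.log b), eventually_gt_atTop 0] with N hlarge hN
  have hN' : (0 : ℝ) < N := Nat.cast_pos.2 hN
  have hfloor := Nat.lt_floor_add_one (Real.log N / B)
  rw [div_lt_iff₀ hB] at hfloor
  rw [div_le_iff₀ hlogb] at hlarge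
  rw [← Real.log_le_log_iff (by positivity) (by positivity), Real.log_rpow hN',
    Real.log_mul hδ.ne' (by positivity), Real.log_pow, div_mul_eq_mul_div,
    div_le_iff₀ (by positivity)]
  nlinarith

lemma le_floor_mul_logb {A m : ℕ} {x : ℝ} (hα : 0 < α) (hD : 2 ≤ D)
    (h : m * (A * Real.log D / α) ≤ Real.log x) : A * m ≤ ⌊α * Real.logb D x⌋₊ := by
  have hlogD : 0 < Real.log D := Real.log_pos (by exact_mod_cast hD)
  refine Nat.le_floor ?_
  rw [mul_div_assoc', div_le_iff₀ hα] at h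
  rw [Real.logb, mul_div_assoc', le_div_iff₀ hlogD]
  push_cast
  linarith

/-- The tree is explored up to generation `n₀ + j * i N` with `i N` a small multiple of `log N`, so
that `(3 / 2) ^ i N` is a power of `N` while the explored balls stay within the radius allowed by
the cycle condition. -/
theorem exists_scale (hD : 2 ≤ D) (hα : 0 < α) (hδ : 0 < δ) (hQ : 1 ≤ Q) (j n₀ A : ℕ) :
    ∃ c : ℝ, 0 < c ∧ ∃ i : ℕ → ℕ, Tendsto i atTop atTop ∧ ∀ᶠ N : ℕ in atTop,
      A * (n₀ + j * i N + 1) ≤ ⌊α * Real.logb D N⌋₊ ∧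
      Q ^ (n₀ + j * i N + 1) ≤ N ∧ (N : ℝ) ^ c ≤ δ * (3 / 2) ^ i N := by
  have hlogQ := Real.log_nonneg hQ
  have hA : 0 ≤ A * Real.log D / α := by positivity
  set Λ := A * Real.log D / α + Real.log Q + 1 with hΛ
  have hB : 0 < 2 * (j + 1) * Λ := by positivity
  refine ⟨Real.log (3 / 2) / (2 * (2 * (j + 1) * Λ)),
    div_pos (Real.log_pos (by norm_num)) (by positivity),
    fun N => ⌊Real.log N / (2 * (j + 1) * Λ)⌋₊,
    tendsto_nat_floor_atTop.comp (tendsto_log_natCast.atTop_div_const hB), ?_⟩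
  filter_upwards [eventually_mul_le_log (by positivity : 0 < Λ) j n₀,
    eventually_rpow_le_mul_pow_floor hB (by norm_num : (1 : ℝ) < 3 / 2) hδ,
    eventually_gt_atTop 0] with N hlog hpow hN
  refine ⟨le_floor_mul_logb hα hD (le_trans ?_ hlog), ?_, hpow⟩
  · gcongr
    linarith [hΛ]
  · rw [← Real.log_le_log_iff (by positivity) (Nat.cast_pos.2 hN), Real.log_pow]
    refine le_trans ?_ hlog
    gcongr
    linarith [hΛ]

end Scales

/-! ### Sequences of graphs -/

section Sequences

lemma exists_cutoff (D : ℕ) : ∃ k ≥ 2, (D : ℝ) ^ 3 * √(3 / 4) ^ k ≤ 1 / 2 := by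
  have hsqrt : √(3 / 4 : ℝ) < 1 := by
    rw [Real.sqrt_lt' one_pos]
    norm_num
  have hlim := (tendsto_pow_atTop_nhds_zero_of_lt_one (Real.sqrt_nonneg _) hsqrt).const_mul
    ((D : ℝ) ^ 3)
  rw [mul_zero] at hlim
  exact ((eventually_ge_atTop 2).and (hlim.eventually_le_const one_half_pos)).exists

theorem one_sub_scaleError_le_measureReal_mul_le_ncard {V Ω : Type*} [Fintype V]
    {G : SimpleGraph V} {D N R a b k r : ℕ} {β : ℝ} {μ : Measure (V → ℝ)} [MeasurableSpace Ω]
    {P : Measure Ω} {X : List (Fin D) → Ω → ℝ} {h h₁ M q η ε : ℝ}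
    (hβ : 0 < β) (hD : 2 ≤ D) (hc : G.Connected) (hreg : IsReg G (D + 1))
    (hcard : Nat.card V = N) (hgap : SpectralGapLB G (D + 1) β)
    (hμ : IsGaussianField μ (zGreen G (D + 1) N))
    (hcyc : ∀ y, adjPairs G (gball G y R) ≤ 2 * (gball G y R).ncard)
    (hk₂ : 2 ≤ k) (hk : (D : ℝ) ^ 3 * √(3 / 4) ^ k ≤ 1 / 2) (ha : a = 2 * k + 1)
    (hab : 2 * ((D : ℝ) + 1) ^ (2 * a) ≤ (3 / 2) ^ b) (hR : (a + b) * (r + 1) ≤ R)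
    (hN : (2 * ((D : ℝ) + 1) ^ (k + 3)) ^ (r + 1) ≤ N)
    (hX : IsTreeField D P X) (hh : h < h₁) (hq : q ≤ M)
    (hη : η ≤ P.real {ω | M ≤ aliveCount r h₁ (X · ω)}) (hε : 0 < ε)
    (hr : 2 * (1 / 2) ^ (r + 1) ≤ ε) :
    1 - scaleError D β (h₁ - h)⁻¹ (r + 1) / ε ^ 2 ≤
      μ.real {ω | (η - 2 * ε) * N ≤ {x | q ≤ (levelComp G h ω x).ncard}.ncard} := by
  have := hc.nonempty
  have hN₀ : 0 < N := hcard ▸ Nat.card_pos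
  have hL : 0 ≤ (h₁ - h)⁻¹ := inv_nonneg.2 (sub_nonneg.2 hh.le)
  have hradius : a * (r + 1) = 2 * (k * (r + 1)) + r + 1 := by
    rw [ha]
    ring
  have hbad := ncard_not_isAcyclic_le_half_pow_mul hD hc hreg hab hR hcyc
  rw [hradius, hcard] at hbad
  have hkr : 2 * (r + 1) ≤ k * (r + 1) := Nat.mul_le_mul_right _ hk₂
  refine le_trans ?_ (one_sub_le_measureReal_mul_le_ncard (ρ := k * (r + 1)) hβ hD hc hreg hcard
    hgap hμ (by omega) (by omega) hX hh hq hη hε (hbad.trans (by gcongr)))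
  gcongr
  exact three_mul_comparisonError_add_le_scaleError hβ hL hD hk hN₀ hN

variable {V : ℕ → Type*} [∀ n, Fintype (V n)] {G : ∀ n, SimpleGraph (V n)} {N : ℕ → ℕ}
  {α β : ℝ} {μ : ∀ n, Measure (V n → ℝ)}

theorem IsTreeField.exists_tendsto_measureReal_mul_le_ncard {D : ℕ} {Ω : Type*}
    [MeasurableSpace Ω] {P : Measure Ω} {X : List (Fin D) → Ω → ℝ} {h η κ : ℝ}
    (hX : IsTreeField D P X) (hη : 0 < η) (hκ : κ < η)
    (hsurv : ∀ n, η ≤ P.real {ω | 1 ≤ aliveCount n h (X · ω)}) (hD : 2 ≤ D) (hα : 0 < α)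
    (hβ : 0 < β) (hN : Tendsto N atTop atTop) (hcard : ∀ n, Nat.card (V n) = N n)
    (hconn : ∀ n, (G n).Connected) (hreg : ∀ n, IsReg (G n) (D + 1))
    (hcyc : ∀ n x, adjPairs (G n) (gball (G n) x ⌊α * Real.logb D (N n)⌋₊) ≤
      2 * (gball (G n) x ⌊α * Real.logb D (N n)⌋₊).ncard)
    (hgap : ∀ n, SpectralGapLB (G n) (D + 1) β)
    (hμ : ∀ n, IsGaussianField (μ n) (zGreen (G n) (D + 1) (N n))) :
    ∃ c : ℝ, 0 < c ∧ Tendsto (fun n => (μ n).real {ω | κ * N n ≤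
      {x | (N n : ℝ) ^ c ≤ (levelComp (G n) h ω x).ncard}.ncard}) atTop (nhds 1) := by
  obtain ⟨h₁, hh, j, hj, n₀, δ, hδ, hgrow⟩ := hX.exists_level_forall_le_aliveCount hD hη
    (show (κ + η) / 2 < η by linarith) hsurv
  obtain ⟨k, hk₂, hk⟩ := exists_cutoff D
  obtain ⟨b, hb⟩ := pow_unbounded_of_one_lt (2 * ((D : ℝ) + 1) ^ (2 * (2 * k + 1)))
    (show (1 : ℝ) < 3 / 2 by norm_num)
  have hQ : (1 : ℝ) ≤ 2 * ((D : ℝ) + 1) ^ (k + 3) :=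
    one_le_mul_of_one_le_of_one_le one_le_two (one_le_pow₀ (by simp))
  obtain ⟨c, hc, i, hi, hscale⟩ := exists_scale hD hα hδ hQ j n₀ (2 * k + 1 + b)
  have hε : 0 < (η - κ) / 4 := by linarith
  have hs : Tendsto (fun n => n₀ + j * i (N n) + 1) atTop atTop :=
    tendsto_atTop_mono (fun n => (Nat.le_mul_of_pos_left (i (N n)) hj).trans (by omega))
      (hi.comp hN)
  have herror := (((tendsto_scaleError D β (h₁ - h)⁻¹).comp hs).div_const
    (((η - κ) / 4) ^ 2)).const_sub 1
  rw [zero_div, sub_zero] at herror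
  have hhalf := ((tendsto_pow_atTop_nhds_zero_of_lt_one (r := (1 / 2 : ℝ)) (by norm_num)
    (by norm_num)).comp hs).const_mul 2
  rw [mul_zero] at hhalf
  refine ⟨c, hc, tendsto_of_tendsto_of_tendsto_of_le_of_le' herror tendsto_const_nhds ?_
    (.of_forall fun n => have := (hμ n).1; measureReal_le_one)⟩
  filter_upwards [hN.eventually hscale, hhalf.eventually_le_const hε] with n ⟨hR, hQN, hcN⟩ hsmall
  refine (one_sub_scaleError_le_measureReal_mul_le_ncard hβ hD (hconn n) (hreg n) (hcard n)
    (hgap n) (hμ n) (hcyc n) hk₂ hk rfl hb.le hR hQN hX hh hcN (hgrow _) hε hsmall).trans_eq ?_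
  congr! 5
  ring

end Sequences

end GFF

theorem supercritical_mesoscopic_components_general
    {d : ℕ} (hd : 3 ≤ d)
    {V : ℕ → Type*} [∀ n, Fintype (V n)]
    {G : ∀ n, SimpleGraph (V n)} {N : ℕ → ℕ} {α β : ℝ}
    (hα : 0 < α) (hβ : 0 < β)
    (hN : Tendsto N atTop atTop)
    (hcard : ∀ n, Nat.card (V n) = N n)
    (hconn : ∀ n, (G n).Connected)
    (hreg : ∀ n, GFF.IsReg (G n) d)
    (hcyc : ∀ n (x : V n),
      GFF.adjPairs (G n) (GFF.gball (G n) x ⌊α * Real.logb ((d : ℝ) - 1) (N n : ℝ)⌋₊) ≤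
        2 * (GFF.gball (G n) x ⌊α * Real.logb ((d : ℝ) - 1) (N n : ℝ)⌋₊).ncard)
    (hgap : ∀ n, GFF.SpectralGapLB (G n) d β)
    {μ : ∀ n, Measure (V n → ℝ)}
    (hμ : ∀ n, GFF.IsGaussianField (μ n) (GFF.zGreen (G n) d (N n)))
    {T : Type*} {Gt : SimpleGraph T} {o obar : T} (hobar : Gt.Adj o obar)
    (htree : GFF.IsRegTree Gt d)
    {μT : Measure (T → ℝ)} (hμT : GFF.IsGaussianField μT (GFF.treeGreen Gt d))
    (h : ℝ) {θ : ℝ} (hθ : θ < 1) :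
    ∃ c : ℝ, 0 < c ∧
      Tendsto
        (fun n => μ n {ω |
          GFF.etaPlus Gt o obar μT h * θ * (N n : ℝ) ≤
            (({x : V n | (N n : ℝ) ^ c ≤
              ((GFF.levelComp (G n) h ω x).ncard : ℝ)}).ncard : ℝ)})
        atTop (nhds 1) := by
  obtain ⟨D, rfl⟩ : ∃ D, d = D + 1 := ⟨d - 1, by omega⟩
  have := hμT.1
  have := fun n => (hμ n).1
  obtain ⟨code, hcode⟩ := GFF.exists_isTreeCode htree.2.2 hobar
  obtain hη | hη : GFF.etaPlus Gt o obar μT h = 0 ∨ 0 < GFF.etaPlus Gt o obar μT h :=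
    ENNReal.toReal_nonneg.eq_or_lt'
  · exact ⟨1, one_pos, by simp [hη]⟩
  obtain ⟨c, hc, hlim⟩ :=
    (hμT.isTreeField (by omega) hcode htree.1 htree.2.1).exists_tendsto_measureReal_mul_le_ncard
      hη (mul_lt_of_lt_one_right hη hθ) (hcode.etaPlus_le htree.1 htree.2.1 h) (by omega) hα hβ hN
      hcard hconn hreg (by simpa using hcyc) hgap hμ
  refine ⟨c, hc, (ENNReal.tendsto_toReal_iff (fun _ => ?_) ENNReal.one_ne_top).1 hlim⟩
  exact measure_ne_top _ _

/-- in the supercritical phase `h < h_star`, with high probability a linear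
fraction of the vertices lies in mesoscopic components of the level set. -/
theorem supercritical_mesoscopic_components
    (d : ℕ) (hd : 3 ≤ d)
    (V : ℕ → Type) [∀ n, Fintype (V n)]
    (G : ∀ n, SimpleGraph (V n)) (N : ℕ → ℕ) (α β : ℝ)
    (hα : 0 < α ∧ α ≤ 1) (hβ : 0 < β ∧ β ≤ 2)
    (hNmono : StrictMono N) (hNpos : ∀ n, 1 ≤ N n)
    (hcard : ∀ n, Nat.card (V n) = N n)
    (hconn : ∀ n, (G n).Connected)
    (hreg : ∀ n, GFF.IsReg (G n) d)
    (hcyc : ∀ n (x : V n),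
      GFF.adjPairs (G n) (GFF.gball (G n) x ⌊α * Real.logb ((d : ℝ) - 1) (N n : ℝ)⌋₊) ≤
        2 * (GFF.gball (G n) x ⌊α * Real.logb ((d : ℝ) - 1) (N n : ℝ)⌋₊).ncard)
    (hgap : ∀ n, GFF.SpectralGapLB (G n) d β)
    (μ : ∀ n, Measure (V n → ℝ))
    (hμ : ∀ n, GFF.IsGaussianField (μ n) (GFF.zGreen (G n) d (N n)))
    (T : Type) (Gt : SimpleGraph T) (o obar : T) (hobar : Gt.Adj o obar)
    (htree : GFF.IsRegTree Gt d)
    (μT : Measure (T → ℝ)) (hμT : GFF.IsGaussianField μT (GFF.treeGreen Gt d))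
    (h : ℝ) (hh : h < GFF.hstar Gt o μT) :
    ∃ c : ℝ, 0 < c ∧
      Filter.Tendsto
        (fun n => μ n {ω |
          GFF.etaPlus Gt o obar μT h / 2 * (N n : ℝ) ≤
            (({x : V n | (N n : ℝ) ^ c ≤
              ((GFF.levelComp (G n) h ω x).ncard : ℝ)}).ncard : ℝ)})
        Filter.atTop (nhds 1) := by
  simpa only [div_eq_mul_inv] using supercritical_mesoscopic_components_general hd hα.1 hβ.1
    hNmono.tendsto_atTop hcard hconn hreg hcyc hgap hμ hobar htree hμT h two_inv_lt_one
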